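/- arXiv:1910.02537 — 5 statements merged into one kernel-verified Lean document; each statement's English description precedes it below -/
import Mathlib

section
/- Let N ≥ 2 and let Ω ⊂ ℝ^N be an open set with finite N-dimensional Lebesgue measure. Let v : Ω → ℝ^N be a Borel measurable vector field. Then for every ε > 0 there exist an open set A ⊆ Ω and a continuously differentiable function φ : Ω → ℝ of class C¹ vanishing at the boundary (φ ∈ C¹₀(Ω), i.e. φ and ∇φ extend continuously by 0 to the boundary), such that ℋ^N(A) ≤ ε·ℋ^N(Ω) and v(x) = ∇φ(x) for every x ∈ Ω ∖ A. -/
open MeasureTheory Filter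

noncomputable section

/-- Euclidean space `ℝ^N`. -/
abbrev Euc (N : ℕ) := EuclideanSpace ℝ (Fin N)

/-- `φ ∈ C¹₀(Ω)`: the class of `C¹` functions on `Ω` which, together with their gradient,
tend to `0` at the boundary of `Ω` (and at infinity); equivalently, the extension of `φ`
by zero outside `Ω` is `C¹` on all of `ℝ^N`, vanishes together with its derivative
outside `Ω`, and `φ` and `∇φ` vanish at infinity. -/
def MemC1Zero {N : ℕ} (Ω : Set (Euc N)) (φ : Euc N → ℝ) : Prop :=
  ContDiff ℝ 1 φ ∧ (∀ x ∉ Ω, φ x = 0 ∧ fderiv ℝ φ x = 0) ∧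
  Tendsto (fun x => |φ x| + ‖fderiv ℝ φ x‖) (cocompact (Euc N)) (nhds 0)

/-!
Almost every point of `Ω` is a point of approximate continuity of `v`, so by Besicovitch's theorem
finitely many small disjoint balls cover most of `Ω`, with `v` nearly equal to a constant `a` on
most of each. On a ball of radius `r` a cut-off linear function has gradient exactly `a` on a
slightly smaller concentric ball, gradient at most `C ‖a‖` everywhere, and values of order `r`. The
sum over all balls gives `φ₀` with `∇φ₀` close to `v` off a set of measure `δ₀`, where `C` depends
on `δ₀` but neither on the accuracy of the approximation nor on the size of the balls.

The same step applied to the residual `v - ∇φ₀ - ⋯ - ∇φₖ` yields `φₖ₊₁`. As `Cₖ₊₁` is known in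
advance, the residual can be made so small off a small set that `∑ Cₖ Mₖ` converges, where `Mₖ`
bounds the `k`-th residual. Then `φ = ∑ φₖ` converges in `C¹₀(Ω)` and `∇φ = v` off a set of measure
at most `∑ δₖ`, up to the set where `v` is large.
-/

open Metric Set Topology
open scoped ENNReal

section Measure

lemma exists_nat_measure_lt_norm_le {α F : Type*} [MeasurableSpace α] {μ : Measure α}
    [NormedAddCommGroup F] [MeasurableSpace F] [OpensMeasurableSpace F] {s : Set α}
    (hs : MeasurableSet s) (hfin : μ s ≠ ∞) {v : α → F} (hv : Measurable v) {δ : ℝ≥0∞}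
    (hδ : δ ≠ 0) : ∃ n : ℕ, μ {x ∈ s | n < ‖v x‖} ≤ δ := by
  have hlim := tendsto_measure_iInter_atTop (μ := μ) (s := fun n : ℕ => {x ∈ s | n < ‖v x‖})
    (fun n => (hs.inter (measurableSet_lt measurable_const hv.norm)).nullMeasurableSet)
    (fun m n hmn x hx => ⟨hx.1, (Nat.cast_le.2 hmn).trans_lt hx.2⟩)
    ⟨0, measure_ne_top_of_subset (sep_subset _ _) hfin⟩
  have hempty : ⋂ n : ℕ, {x ∈ s | n < ‖v x‖} = ∅ := by
    refine eq_empty_of_forall_notMem fun x hx => ?_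
    obtain ⟨n, hn⟩ := exists_nat_ge ‖v x‖
    exact hn.not_gt (mem_iInter.1 hx n).2
  rw [hempty, measure_empty] at hlim
  exact (hlim.eventually_le_const hδ.bot_lt).exists

lemma measure_diff_biUnion_le_add_mul {α ι : Type*} [MeasurableSpace α] {μ : Measure α}
    {s : Set α} {t : Finset ι} {B G : ι → Set α} {ε : ℝ≥0∞}
    (hdisj : (t : Set ι).PairwiseDisjoint B) (hB : ∀ i ∈ t, MeasurableSet (B i))
    (hBs : ∀ i ∈ t, B i ⊆ s) (hG : ∀ i ∈ t, μ (B i \ G i) ≤ ε * μ (B i)) :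
    μ (s \ ⋃ i ∈ t, G i) ≤ μ (s \ ⋃ i ∈ t, B i) + ε * μ s := by
  have hsub : s \ ⋃ i ∈ t, G i ⊆ (s \ ⋃ i ∈ t, B i) ∪ ⋃ i ∈ t, B i \ G i := by
    rintro x ⟨hxs, hxG⟩
    by_cases hxB : x ∈ ⋃ i ∈ t, B i
    · obtain ⟨i, hi, hxi⟩ := mem_iUnion₂.1 hxB
      exact .inr (mem_iUnion₂.2 ⟨i, hi, hxi, fun h => hxG (mem_iUnion₂.2 ⟨i, hi, h⟩)⟩)
    · exact .inl ⟨hxs, hxB⟩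
  refine (measure_mono hsub).trans ((measure_union_le _ _).trans (add_le_add_right ?_ _))
  calc μ (⋃ i ∈ t, B i \ G i) ≤ ∑ i ∈ t, ε * μ (B i) :=
        (measure_biUnion_finset_le _ _).trans (Finset.sum_le_sum hG)
    _ = ε * μ (⋃ i ∈ t, B i) := by rw [measure_biUnion_finset hdisj hB, Finset.mul_sum]
    _ ≤ ε * μ s := by gcongr; exact iUnion₂_subset hBs

lemma measure_exists_lt_le_add_tsum {α β : Type*} [MeasurableSpace α] [LinearOrder β]
    (μ : Measure α) (s : Set α) (M : ℕ → β) (f : ℕ → α → β) :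
    μ {x ∈ s | ∃ k, M k < f k x} ≤
      μ {x ∈ s | M 0 < f 0 x} + ∑' k, μ {x ∈ s | f k x ≤ M k ∧ M (k + 1) < f (k + 1) x} := by
  have hsub : {x ∈ s | ∃ k, M k < f k x} ⊆
      {x ∈ s | M 0 < f 0 x} ∪ ⋃ k, {x ∈ s | f k x ≤ M k ∧ M (k + 1) < f (k + 1) x} := by
    rintro x ⟨hx, k, hk⟩
    by_contra hnot
    have hzero : f 0 x ≤ M 0 := not_lt.1 fun h => hnot (.inl ⟨hx, h⟩)
    have hsucc (j : ℕ) (hj : f j x ≤ M j) : f (j + 1) x ≤ M (j + 1) :=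
      not_lt.1 fun h => hnot (.inr (mem_iUnion.2 ⟨j, hx, hj, h⟩))
    exact hk.not_ge (Nat.rec hzero hsucc k)
  exact (measure_mono hsub).trans
    ((measure_union_le _ _).trans (add_le_add_right (measure_iUnion_le _) _))

end Measure

section Besicovitch

variable {α : Type*} [MetricSpace α] [SecondCountableTopology α] [MeasurableSpace α]
  [HasBesicovitchCovering α]

lemma ae_tendsto_measure_lt_dist_inter_closedBall_div [BorelSpace α] (μ : Measure α)
    [IsLocallyFiniteMeasure μ] {F : Type*} [PseudoMetricSpace F] [SecondCountableTopology F]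
    [MeasurableSpace F] [OpensMeasurableSpace F] {w : α → F} (hw : Measurable w) {η : ℝ}
    (hη : 0 < η) :
    ∀ᵐ x ∂μ, Tendsto
      (fun r => μ ({y | η < dist (w y) (w x)} ∩ closedBall x r) / μ (closedBall x r))
      (𝓝[>] 0) (𝓝 0) := by
  obtain ⟨D, hDc, hD⟩ := TopologicalSpace.exists_countable_dense F
  let far (d : F) : Set α := (w ⁻¹' ball d (η / 2))ᶜ
  have hdensity : ∀ᵐ x ∂μ, ∀ d ∈ D, Tendsto
      (fun r => μ (far d ∩ closedBall x r) / μ (closedBall x r)) (𝓝[>] 0)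
      (𝓝 ((far d).indicator 1 x)) :=
    (ae_ball_iff hDc).2 fun d _ =>
      Besicovitch.ae_tendsto_measure_inter_div_of_measurableSet μ (hw measurableSet_ball).compl
  filter_upwards [hdensity] with x hx
  obtain ⟨d, hdD, hd⟩ := hD.exists_dist_lt (w x) (half_pos hη)
  have hlim := hx d hdD
  rw [indicator_of_notMem (by simpa [far] using hd)] at hlim
  refine tendsto_of_tendsto_of_tendsto_of_le_of_le tendsto_const_nhds hlim
    (fun _ => zero_le) fun r => ?_
  dsimp only
  gcongr
  intro y (hy : η < dist (w y) (w x)) (hyd : dist (w y) d < η / 2)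
  linarith [dist_triangle_right (w y) (w x) d]

lemma exists_finset_disjoint_closedBall_measure_diff_lt [OpensMeasurableSpace α] (μ : Measure α)
    [SFinite μ] {s : Set α} (hs : MeasurableSet s) (hfin : μ s ≠ ∞) {P : α → ℝ → Prop}
    (hP : ∀ᵐ x ∂μ.restrict s, ∃ᶠ r in 𝓝[>] 0, P x r) {δ : ℝ≥0∞} (hδ : δ ≠ 0) :
    ∃ (t : Finset α) (r : α → ℝ), (∀ x ∈ t, 0 < r x ∧ P x (r x)) ∧
      (t : Set α).PairwiseDisjoint (fun x => closedBall x (r x)) ∧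
      μ (s \ ⋃ x ∈ t, closedBall x (r x)) < δ := by
  let good : Set α := {x ∈ s | ∃ᶠ r in 𝓝[>] 0, P x r}
  obtain ⟨c, r, hc, -, hcr, hcover, hdisj⟩ :=
    Besicovitch.exists_disjoint_closedBall_covering_ae μ (fun x => {r | P x r}) good
      (fun x hx ρ hρ => (hx.2.and_eventually (Ioo_mem_nhdsGT hρ)).exists) 1 fun _ _ => one_pos
  have hnull : μ (s \ ⋃ x ∈ c, closedBall x (r x)) = 0 := by
    refine measure_mono_null (fun x hx => ?_)
      (measure_union_null hcover ((ae_restrict_iff' hs).1 hP))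
    by_cases hxP : ∃ᶠ r in 𝓝[>] 0, P x r
    · exact .inl ⟨⟨hx.1, hxP⟩, hx.2⟩
    · exact .inr fun h => hxP (h hx.1)
  have := hc.to_subtype
  let rest (u : Finset c) : Set α := s \ ⋃ x ∈ u, closedBall (x : α) (r x)
  have hrest : μ (⋂ u, rest u) = 0 := by
    refine measure_mono_null (fun x hx => ?_) hnull
    refine ⟨(mem_iInter.1 hx ∅).1, fun hxc => ?_⟩
    obtain ⟨y, hy, hxy⟩ := mem_iUnion₂.1 hxc
    exact (mem_iInter.1 hx {⟨y, hy⟩}).2 (by simpa using hxy)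
  have hlim := tendsto_measure_iInter_atTop (μ := μ) (s := rest)
    (fun u => (hs.diff (u.measurableSet_biUnion fun _ _ =>
      measurableSet_closedBall)).nullMeasurableSet)
    (fun u u' huu' => sdiff_subset_sdiff_right (biUnion_subset_biUnion_left huu'))
    ⟨∅, measure_ne_top_of_subset sdiff_subset hfin⟩
  rw [hrest] at hlim
  obtain ⟨u, hu⟩ := (hlim.eventually_lt_const hδ.bot_lt).exists
  refine ⟨u.map (.subtype _), r, fun x hx => ?_, hdisj.subset ?_, ?_⟩
  · obtain ⟨y, -, rfl⟩ := Finset.mem_map.1 hx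
    exact ⟨(hcr y y.2).2.1, (hcr y y.2).1⟩
  · rw [Finset.coe_map]
    rintro _ ⟨y, -, rfl⟩
    exact y.2
  · simp only [← Finset.mem_coe, Finset.coe_map, biUnion_image]
    exact hu

end Besicovitch

section Haar

variable {E : Type*} [NormedAddCommGroup E] [NormedSpace ℝ E] [FiniteDimensional ℝ E]
  [MeasurableSpace E] [BorelSpace E] (μ : Measure E) [μ.IsAddHaarMeasure]

lemma exists_measure_closedBall_diff_ball_le {ε : ℝ≥0∞} (hε : ε ≠ 0) :
    ∃ s ∈ Ioo (0 : ℝ) 1, ∀ (x : E) (r : ℝ), 0 < r →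
      μ (closedBall x r \ ball x (s * r)) ≤ ε * μ (closedBall x r) := by
  let d := Module.finrank ℝ E
  have hlim : Tendsto (fun s : ℝ => ENNReal.ofReal (1 - s ^ d)) (𝓝[<] 1) (𝓝 0) := by
    have hcont : Continuous fun s : ℝ => ENNReal.ofReal (1 - s ^ d) :=
      ENNReal.continuous_ofReal.comp (by fun_prop)
    simpa using (hcont.tendsto 1).mono_left nhdsWithin_le_nhds
  obtain ⟨s, hsε, hs⟩ :=
    ((hlim.eventually_le_const hε.bot_lt).and (Ioo_mem_nhdsLT zero_lt_one)).exists
  refine ⟨s, hs, fun x r hr => ?_⟩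
  have hball : μ (ball x (s * r)) = ENNReal.ofReal (s ^ d) * μ (closedBall x r) := by
    rw [Measure.addHaar_ball_mul_of_pos μ x hs.1, Measure.addHaar_ball_of_pos μ 0 hr,
      Measure.addHaar_closedBall μ x hr.le]
  have hsub : ball x (s * r) ⊆ closedBall x r :=
    ball_subset_closedBall.trans (closedBall_subset_closedBall (by nlinarith [hs.2]))
  calc μ (closedBall x r \ ball x (s * r))
      = μ (closedBall x r) - ENNReal.ofReal (s ^ d) * μ (closedBall x r) := by
        rw [measure_sdiff hsub measurableSet_ball.nullMeasurableSet measure_ball_lt_top.ne, hball]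
    _ = (1 - ENNReal.ofReal (s ^ d)) * μ (closedBall x r) := by
        rw [ENNReal.sub_mul fun _ _ => measure_closedBall_lt_top.ne, one_mul]
    _ = ENNReal.ofReal (1 - s ^ d) * μ (closedBall x r) := by
        rw [ENNReal.ofReal_sub _ (pow_nonneg hs.1.le d), ENNReal.ofReal_one]
    _ ≤ ε * μ (closedBall x r) := by gcongr

lemma exists_ae_eventually_measure_closedBall_diff_inter_le {G : Type*} [PseudoMetricSpace G]
    [SecondCountableTopology G] [MeasurableSpace G] [OpensMeasurableSpace G] {ε : ℝ≥0∞}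
    (hε : ε ≠ 0) :
    ∃ s ∈ Ioo (0 : ℝ) 1, ∀ {w : E → G} {η : ℝ}, Measurable w → 0 < η →
      ∀ᵐ x ∂μ, ∀ᶠ r in 𝓝[>] 0,
        μ (closedBall x r \ (ball x (s * r) ∩ {y | dist (w y) (w x) ≤ η})) ≤
          ε * μ (closedBall x r) := by
  have hε2 : ε / 2 ≠ 0 := (ENNReal.half_pos hε).ne'
  obtain ⟨s, hs, hring⟩ := exists_measure_closedBall_diff_ball_le μ hε2
  refine ⟨s, hs, fun {w η} hw hη => ?_⟩
  filter_upwards [ae_tendsto_measure_lt_dist_inter_closedBall_div μ hw hη] with x hx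
  filter_upwards [hx.eventually_le_const hε2.bot_lt, self_mem_nhdsWithin] with r hfar hr
  have hsub : closedBall x r \ (ball x (s * r) ∩ {y | dist (w y) (w x) ≤ η}) ⊆
      (closedBall x r \ ball x (s * r)) ∪ ({y | η < dist (w y) (w x)} ∩ closedBall x r) := by
    rintro y ⟨hy, hyc⟩
    by_cases hyb : y ∈ ball x (s * r)
    · have hyw : η < dist (w y) (w x) := not_le.1 fun h => hyc ⟨hyb, h⟩
      exact .inr ⟨hyw, hy⟩
    · exact .inl ⟨hy, hyb⟩
  rw [ENNReal.div_le_iff (measure_closedBall_pos μ x hr).ne' measure_closedBall_lt_top.ne] at hfar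
  calc _ ≤ ε / 2 * μ (closedBall x r) + ε / 2 * μ (closedBall x r) :=
        (measure_mono hsub).trans ((measure_union_le _ _).trans (add_le_add (hring x r hr) hfar))
    _ = ε * μ (closedBall x r) := by rw [← add_mul, ENNReal.add_halves]

/-- The ratio `s` has to be independent of `w`, `η` and `R`: it determines the constant in the
gradient bound of `exists_isC1Zero_fderiv_eq_on_balls`. -/
lemma exists_disjoint_closedBall_shrunken_cover {Ω : Set E} (hΩ : IsOpen Ω) (hfin : μ Ω ≠ ∞)
    {δ : ℝ≥0∞} (hδ : δ ≠ 0) {G : Type*} [PseudoMetricSpace G] [SecondCountableTopology G]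
    [MeasurableSpace G] [OpensMeasurableSpace G] :
    ∃ s ∈ Ioo (0 : ℝ) 1, ∀ {w : E → G} {η R : ℝ}, Measurable w → 0 < η → 0 < R →
      ∃ (t : Finset E) (r : E → ℝ),
        (∀ x ∈ t, 0 < r x ∧ r x ≤ R ∧ closedBall x (r x) ⊆ Ω) ∧
        (t : Set E).PairwiseDisjoint (fun x => closedBall x (r x)) ∧
        μ (Ω \ ⋃ x ∈ t, ball x (s * r x) ∩ {y | dist (w y) (w x) ≤ η}) ≤ δ := by
  have hδ2 : δ / 2 ≠ 0 := (ENNReal.half_pos hδ).ne'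
  obtain ⟨ε, hε, hεδ⟩ := ENNReal.exists_nnreal_pos_mul_lt hfin hδ2
  obtain ⟨s, hs, hdensity⟩ := exists_ae_eventually_measure_closedBall_diff_inter_le μ (G := G)
    (ENNReal.coe_ne_zero.2 hε.ne')
  refine ⟨s, hs, fun {w η R} hw hη hR => ?_⟩
  let core (x : E) (r : ℝ) : Set E := ball x (s * r) ∩ {y | dist (w y) (w x) ≤ η}
  have hgood : ∀ᵐ x ∂μ.restrict Ω, ∃ᶠ r in 𝓝[>] 0,
      (r ≤ R ∧ closedBall x r ⊆ Ω) ∧ μ (closedBall x r \ core x r) ≤ ε * μ (closedBall x r) := by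
    refine (ae_restrict_iff' hΩ.measurableSet).2 ((hdensity hw hη).mono fun x hx hxΩ => ?_)
    have hsmall : ∀ᶠ r in 𝓝[>] 0, closedBall x r ⊆ Ω :=
      nhdsWithin_le_nhds (eventually_closedBall_subset (hΩ.mem_nhds hxΩ))
    have hle : ∀ᶠ r in 𝓝[>] 0, r ≤ R := nhdsWithin_le_nhds (Iic_mem_nhds hR)
    exact ((hle.and hsmall).and hx).frequently
  obtain ⟨t, r, htr, hdisj, hcover⟩ :=
    exists_finset_disjoint_closedBall_measure_diff_lt μ hΩ.measurableSet hfin hgood hδ2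
  refine ⟨t, r, fun x hx => ⟨(htr x hx).1, (htr x hx).2.1⟩, hdisj, ?_⟩
  calc μ (Ω \ ⋃ x ∈ t, core x (r x))
      ≤ μ (Ω \ ⋃ x ∈ t, closedBall x (r x)) + ε * μ Ω :=
        measure_diff_biUnion_le_add_mul hdisj (fun _ _ => measurableSet_closedBall)
          (fun x hx => (htr x hx).2.1.2) fun x hx => (htr x hx).2.2
    _ ≤ δ / 2 + δ / 2 := add_le_add hcover.le hεδ.le
    _ = δ := ENNReal.add_halves δ

end Haar

section Calculus

variable {E F : Type*} [NormedAddCommGroup E] [NormedSpace ℝ E]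
  [NormedAddCommGroup F] [NormedSpace ℝ F]

/-- The counterpart of `MemC1Zero` for functions between normed spaces: `φ` is the extension by
zero to `E` of a function in `C¹₀(Ω; F)`. -/
structure IsC1Zero (Ω : Set E) (φ : E → F) : Prop where
  contDiff : ContDiff ℝ 1 φ
  eq_zero : ∀ x ∉ Ω, φ x = 0
  fderiv_eq_zero : ∀ x ∉ Ω, fderiv ℝ φ x = 0
  tendsto_cocompact : Tendsto φ (cocompact E) (𝓝 0)
  tendsto_fderiv_cocompact : Tendsto (fderiv ℝ φ) (cocompact E) (𝓝 0)

namespace IsC1Zero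

lemma memC1Zero {N : ℕ} {Ω : Set (Euc N)} {φ : Euc N → ℝ} (hφ : IsC1Zero Ω φ) :
    MemC1Zero Ω φ :=
  ⟨hφ.contDiff, fun x hx => ⟨hφ.eq_zero x hx, hφ.fderiv_eq_zero x hx⟩,
    by simpa using hφ.tendsto_cocompact.abs.add hφ.tendsto_fderiv_cocompact.norm⟩

lemma of_support_subset {Ω K : Set E} {φ : E → F} (hφ : ContDiff ℝ 1 φ) (hK : IsCompact K)
    (hφK : Function.support φ ⊆ K) (hKΩ : K ⊆ Ω) : IsC1Zero Ω φ := by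
  have htsupp : tsupport φ ⊆ K := closure_minimal hφK hK.isClosed
  have hzero : ∀ x ∉ K, φ x = 0 := fun x hx => Function.notMem_support.1 fun h => hx (hφK h)
  have hderiv : ∀ x ∉ K, fderiv ℝ φ x = 0 := fun x hx =>
    fderiv_of_notMem_tsupport ℝ fun h => hx (htsupp h)
  exact ⟨hφ, fun x hx => hzero x fun h => hx (hKΩ h), fun x hx => hderiv x fun h => hx (hKΩ h),
    tendsto_nhds_of_eventually_eq (eventually_of_mem hK.compl_mem_cocompact hzero),
    tendsto_nhds_of_eventually_eq (eventually_of_mem hK.compl_mem_cocompact hderiv)⟩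

lemma zero (Ω : Set E) : IsC1Zero Ω (0 : E → F) :=
  of_support_subset contDiff_const isCompact_empty Function.support_zero.subset (empty_subset Ω)

variable {ι : Type*} [CompleteSpace F] {Ω : Set E} {f : ι → E → F} {u : ι → ℝ}

lemma fderiv_tsum (hf : ∀ i, IsC1Zero Ω (f i)) (hu : Summable u) (hfu : ∀ i x, ‖f i x‖ ≤ u i)
    (hfu' : ∀ i x, ‖fderiv ℝ (f i) x‖ ≤ u i) :
    fderiv ℝ (fun x => ∑' i, f i x) = fun x => ∑' i, fderiv ℝ (f i) x :=
  _root_.fderiv_tsum hu (fun i => (hf i).contDiff.differentiable one_ne_zero) hfu' (x₀ := 0)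
    (hu.of_norm_bounded fun i => hfu i 0)

lemma tsum (hf : ∀ i, IsC1Zero Ω (f i)) (hu : Summable u) (hfu : ∀ i x, ‖f i x‖ ≤ u i)
    (hfu' : ∀ i x, ‖fderiv ℝ (f i) x‖ ≤ u i) : IsC1Zero Ω fun x => ∑' i, f i x where
  contDiff := by
    refine contDiff_one_iff_fderiv.2 ⟨differentiable_tsum hu
      (fun i x => ((hf i).contDiff.differentiable one_ne_zero x).hasFDerivAt) hfu', ?_⟩
    rw [fderiv_tsum hf hu hfu hfu']
    exact continuous_tsum (fun i => (hf i).contDiff.continuous_fderiv one_ne_zero) hu hfu'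
  eq_zero x hx := by simp only [(hf _).eq_zero x hx, tsum_zero]
  fderiv_eq_zero x hx := by
    simp only [fderiv_tsum hf hu hfu hfu', (hf _).fderiv_eq_zero x hx, tsum_zero]
  tendsto_cocompact := by
    simpa using tendsto_tsum_of_dominated_convergence hu (fun i => (hf i).tendsto_cocompact)
      (.of_forall fun x i => hfu i x)
  tendsto_fderiv_cocompact := by
    rw [fderiv_tsum hf hu hfu hfu']
    simpa using tendsto_tsum_of_dominated_convergence hu
      (fun i => (hf i).tendsto_fderiv_cocompact) (.of_forall fun x i => hfu' i x)

end IsC1Zero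

/-- The dilation of `g` that transports the unit ball to the ball of radius `r` about `x`; the
outer factor `r` keeps the size of the derivative unchanged. -/
def rescale (g : E → F) (x : E) (r : ℝ) (y : E) : F := r • g (r⁻¹ • (y - x))

lemma contDiff_rescale {n : WithTop ℕ∞} {g : E → F} (hg : ContDiff ℝ n g) (x : E) (r : ℝ) :
    ContDiff ℝ n (rescale g x r) :=
  (hg.comp ((contDiff_id.sub contDiff_const).const_smul r⁻¹)).const_smul r

lemma fderiv_rescale (g : E → F) (x : E) {r : ℝ} (hr : r ≠ 0) (y : E) :
    fderiv ℝ (rescale g x r) y = fderiv ℝ g (r⁻¹ • (y - x)) := by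
  have h : rescale g x r = r • fun y => g (r⁻¹ • (y - x)) := rfl
  rw [h, fderiv_const_smul_field, Pi.smul_apply,
    fderiv_comp_sub (f := fun z => g (r⁻¹ • z)), fderiv_comp_smul, smul_inv_smul₀ hr]

lemma tsupport_rescale_subset {g : E → F} (hg : tsupport g ⊆ closedBall 0 1) (x : E) {r : ℝ}
    (hr : 0 < r) : tsupport (rescale g x r) ⊆ closedBall x r := by
  refine closure_minimal (fun y hy => ?_) isClosed_closedBall
  have hgy : g (r⁻¹ • (y - x)) ≠ 0 := fun h => hy (by rw [rescale, h, smul_zero])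
  have hmem := hg (subset_tsupport g hgy)
  rwa [mem_closedBall_zero_iff, norm_smul, norm_inv, Real.norm_of_nonneg hr.le,
    inv_mul_le_one₀ hr, ← mem_closedBall_iff_norm] at hmem

lemma exists_contDiff_tsupport_subset_fderiv_eq_id [FiniteDimensional ℝ E] {s : ℝ} (hs : 0 < s)
    (hs1 : s < 1) :
    ∃ C : ℝ, 0 ≤ C ∧ ∀ (x : E) {r : ℝ}, 0 < r →
      ∃ h : E → E, ContDiff ℝ 1 h ∧ tsupport h ⊆ closedBall x r ∧ (∀ y, ‖h y‖ ≤ C * r) ∧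
        (∀ y, ‖fderiv ℝ h y‖ ≤ C) ∧ ∀ y ∈ ball x (s * r), fderiv ℝ h y = .id ℝ E := by
  let ψ : ContDiffBump (0 : E) := ⟨s, 1, hs, hs1⟩
  let g : E → E := fun z => ψ z • z
  have hg : ContDiff ℝ 1 g := ψ.contDiff.smul contDiff_id
  have hgsupp : HasCompactSupport g := ψ.hasCompactSupport.smul_right
  have hgball : tsupport g ⊆ closedBall 0 1 :=
    (tsupport_smul_subset_left ψ id).trans ψ.tsupport_eq.subset
  have hgid : ∀ z ∈ ball (0 : E) s, fderiv ℝ g z = .id ℝ E := fun z hz => by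
    have hloc : g =ᶠ[𝓝 z] id := by
      filter_upwards [ψ.eventuallyEq_one_of_mem_ball hz] with y hy
      simp only [g, hy, Pi.one_apply, one_smul, id_eq]
    rw [hloc.fderiv_eq, fderiv_id]
  obtain ⟨C₀, hC₀⟩ := hgsupp.exists_bound_of_continuous hg.continuous
  obtain ⟨C₁, hC₁⟩ := (hgsupp.fderiv (𝕜 := ℝ)).exists_bound_of_continuous
    (hg.continuous_fderiv one_ne_zero)
  refine ⟨max C₀ C₁, le_max_of_le_left ((norm_nonneg _).trans (hC₀ 0)), fun x r hr =>
    ⟨rescale g x r, contDiff_rescale hg x r, tsupport_rescale_subset hgball x hr, fun y => ?_,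
      fun y => ?_, fun y hy => ?_⟩⟩
  · rw [rescale, norm_smul, Real.norm_of_nonneg hr.le, mul_comm]
    gcongr
    exact le_max_of_le_left (hC₀ _)
  · rw [fderiv_rescale g x hr.ne']
    exact le_max_of_le_right (hC₁ _)
  · rw [fderiv_rescale g x hr.ne']
    apply hgid
    rwa [mem_ball_zero_iff, norm_smul, norm_inv, Real.norm_of_nonneg hr.le,
      inv_mul_lt_iff₀ hr, mul_comm, ← mem_ball_iff_norm]

lemma exists_contDiff_tsupport_subset_fderiv_eq [FiniteDimensional ℝ E] {s : ℝ} (hs : 0 < s)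
    (hs1 : s < 1) :
    ∃ C : ℝ, 0 ≤ C ∧ ∀ (a : E →L[ℝ] F) (x : E) {r : ℝ}, 0 < r →
      ∃ f : E → F, ContDiff ℝ 1 f ∧ tsupport f ⊆ closedBall x r ∧ (∀ y, ‖f y‖ ≤ C * ‖a‖ * r) ∧
        (∀ y, ‖fderiv ℝ f y‖ ≤ C * ‖a‖) ∧ ∀ y ∈ ball x (s * r), fderiv ℝ f y = a := by
  obtain ⟨C, hC, hcut⟩ := exists_contDiff_tsupport_subset_fderiv_eq_id (E := E) hs hs1
  refine ⟨C, hC, fun a x r hr => ?_⟩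
  obtain ⟨h, hh, hsupp, hle, hle', hid⟩ := hcut x hr
  have hderiv (y : E) : fderiv ℝ (a ∘ h) y = a.comp (fderiv ℝ h y) :=
    (a.hasFDerivAt.comp y (hh.differentiable one_ne_zero y).hasFDerivAt).fderiv
  refine ⟨a ∘ h, a.contDiff.comp hh, (tsupport_comp_subset (map_zero a) h).trans hsupp,
    fun y => ?_, fun y => ?_, fun y hy => ?_⟩
  · calc ‖a (h y)‖ ≤ ‖a‖ * (C * r) := a.le_opNorm_of_le (hle y)
      _ = C * ‖a‖ * r := by ring
  · calc ‖fderiv ℝ (a ∘ h) y‖ ≤ ‖a‖ * ‖fderiv ℝ h y‖ :=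
          hderiv y ▸ ContinuousLinearMap.opNorm_comp_le _ _
      _ ≤ ‖a‖ * C := by gcongr; exact hle' y
      _ = C * ‖a‖ := mul_comm _ _
  · rw [hderiv, hid y hy, ContinuousLinearMap.comp_id]

section DisjointSupports

variable {α ι G : Type*} {t : Finset ι} {K : ι → Set α}

lemma sum_apply_eq_of_pairwiseDisjoint [AddCommMonoid G] {f : ι → α → G}
    (hK : (t : Set ι).PairwiseDisjoint K) (hf : ∀ i ∈ t, Function.support (f i) ⊆ K i) {i : ι}
    (hi : i ∈ t) {y : α} (hy : y ∈ K i) : ∑ j ∈ t, f j y = f i y :=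
  Finset.sum_eq_single_of_mem i hi fun j hj hji => Function.notMem_support.1 fun hyj =>
    disjoint_left.1 (hK hj hi hji) (hf j hj hyj) hy

lemma norm_sum_apply_le_of_pairwiseDisjoint [SeminormedAddCommGroup G] {f : ι → α → G}
    (hK : (t : Set ι).PairwiseDisjoint K) (hf : ∀ i ∈ t, Function.support (f i) ⊆ K i) {b : ℝ}
    (hb : 0 ≤ b) {y : α} (hfb : ∀ i ∈ t, ‖f i y‖ ≤ b) : ‖∑ i ∈ t, f i y‖ ≤ b := by
  by_cases hy : ∃ i ∈ t, y ∈ K i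
  · obtain ⟨i, hi, hyi⟩ := hy
    rw [sum_apply_eq_of_pairwiseDisjoint hK hf hi hyi]
    exact hfb i hi
  · rw [Finset.sum_eq_zero fun i hi => Function.notMem_support.1 fun h => hy ⟨i, hi, hf i hi h⟩,
      norm_zero]
    exact hb

end DisjointSupports

lemma exists_isC1Zero_fderiv_eq_on_balls [FiniteDimensional ℝ E] {s : ℝ} (hs : s ∈ Ioo (0 : ℝ) 1) :
    ∃ C : ℝ, 0 ≤ C ∧ ∀ {Ω : Set E} {t : Finset E} {r : E → ℝ} {a : E → E →L[ℝ] F} {M R : ℝ},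
      (∀ x, ‖a x‖ ≤ M) → 0 ≤ R → (∀ x ∈ t, 0 < r x ∧ r x ≤ R ∧ closedBall x (r x) ⊆ Ω) →
      (t : Set E).PairwiseDisjoint (fun x => closedBall x (r x)) →
      ∃ φ : E → F, IsC1Zero Ω φ ∧ (∀ y, ‖φ y‖ ≤ C * M * R) ∧ (∀ y, ‖fderiv ℝ φ y‖ ≤ C * M) ∧
        ∀ x ∈ t, ∀ y ∈ ball x (s * r x), fderiv ℝ φ y = a x := by
  obtain ⟨C, hC, hcut⟩ :=
    exists_contDiff_tsupport_subset_fderiv_eq (E := E) (F := F) hs.1 hs.2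
  refine ⟨C, hC, fun {Ω t r a M R} ha hR hr hdisj => ?_⟩
  have hM : 0 ≤ M := (norm_nonneg _).trans (ha 0)
  choose! f hf hsupp hle hle' heq using fun x hx => hcut (a x) x (hr x hx).1
  have hfK : ∀ x ∈ t, Function.support (f x) ⊆ closedBall x (r x) := fun x hx =>
    (subset_tsupport _).trans (hsupp x hx)
  have hfK' : ∀ x ∈ t, Function.support (fderiv ℝ (f x)) ⊆ closedBall x (r x) := fun x hx =>
    (support_fderiv_subset ℝ).trans (hsupp x hx)
  let φ (y : E) : F := ∑ x ∈ t, f x y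
  have hφ' (y : E) : fderiv ℝ φ y = ∑ x ∈ t, fderiv ℝ (f x) y :=
    fderiv_fun_sum fun x hx => (hf x hx).differentiable one_ne_zero y
  have hφK : Function.support φ ⊆ ⋃ x ∈ t, closedBall x (r x) := fun y hy =>
    have ⟨x, hx, hxy⟩ := Finset.exists_ne_zero_of_sum_ne_zero hy
    mem_iUnion₂.2 ⟨x, hx, hfK x hx hxy⟩
  refine ⟨φ, .of_support_subset (ContDiff.sum hf)
      (t.isCompact_biUnion fun x _ => isCompact_closedBall x (r x)) hφK
      (iUnion₂_subset fun x hx => (hr x hx).2.2), fun y => ?_, fun y => ?_, fun x hx y hy => ?_⟩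
  · refine norm_sum_apply_le_of_pairwiseDisjoint hdisj hfK (by positivity) fun x hx =>
      (hle x hx y).trans ?_
    gcongr
    exacts [(hr x hx).1.le, ha x, (hr x hx).2.1]
  · rw [hφ']
    refine norm_sum_apply_le_of_pairwiseDisjoint hdisj hfK' (by positivity) fun x hx =>
      (hle' x hx y).trans ?_
    gcongr
    exact ha x
  · have hyK : y ∈ closedBall x (r x) := ball_subset_closedBall
      (ball_subset_ball (mul_le_of_le_one_left (hr x hx).1.le hs.2.le) hy)
    rw [hφ', sum_apply_eq_of_pairwiseDisjoint hdisj hfK' hx hyK, heq x hx y hy]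

end Calculus

section Sequences

lemma exists_seq_forall_sub_sum {β G : Type*} [AddCommGroup G] {D : β → G} {p : G → Prop}
    (hp : ∀ g b, p g → p (g - D b)) {P : ℕ → G → β → Prop} (hP : ∀ k g, p g → ∃ b, P k g b)
    {v : G} (hv : p v) :
    ∃ b : ℕ → β, ∀ k, P k (v - ∑ j ∈ Finset.range k, D (b j)) (b k) := by
  choose next hnext using hP
  let w : ℕ → {g // p g} := fun k =>
    Nat.rec ⟨v, hv⟩ (fun k g => ⟨g - D (next k g g.2), hp _ _ g.2⟩) k
  have hw (k : ℕ) : (w k).1 = v - ∑ j ∈ Finset.range k, D (next j (w j).1 (w j).2) := by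
    induction k with
    | zero => simp [w]
    | succ k ih => rw [Finset.sum_range_succ, ← sub_sub, ← ih]
  exact ⟨fun k => next k (w k).1 (w k).2, fun k => hw k ▸ hnext k (w k).1 (w k).2⟩

lemma exists_pos_seq_summable_mul {C : ℕ → ℝ} (hC : ∀ k, 0 ≤ C k) {c : ℝ} (hc : 0 < c) :
    ∃ M : ℕ → ℝ, M 0 = c ∧ (∀ k, 0 < M k) ∧ Summable M ∧ Summable fun k => C k * M k := by
  have hC1 (k : ℕ) : 0 < 1 + C k := add_pos_of_pos_of_nonneg one_pos (hC k)
  let u (k : ℕ) : ℝ := c * (1 + C 0) * (1 / 2) ^ k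
  have hupos (k : ℕ) : 0 < u k := mul_pos (mul_pos hc (hC1 0)) (by positivity)
  have hu : Summable u := summable_geometric_two.mul_left _
  have hM (k : ℕ) : 0 < u k / (1 + C k) := div_pos (hupos k) (hC1 k)
  refine ⟨fun k => u k / (1 + C k), ?_, hM, hu.of_nonneg_of_le (fun k => (hM k).le) fun k =>
    div_le_self (hupos k).le (by linarith [hC k]),
    hu.of_nonneg_of_le (fun k => mul_nonneg (hC k) (hM k).le) fun k => ?_⟩
  · simp only [u, pow_zero, mul_one, mul_div_cancel_right₀ c (hC1 0).ne']
  · calc C k * (u k / (1 + C k)) ≤ (1 + C k) * (u k / (1 + C k)) := by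
          gcongr
          exacts [(hM k).le, by linarith]
      _ = u k := mul_div_cancel₀ _ (hC1 k).ne'

end Sequences

section Approximation

variable {E F : Type*} [NormedAddCommGroup E] [NormedSpace ℝ E] [FiniteDimensional ℝ E]
  [MeasurableSpace E] [BorelSpace E] [NormedAddCommGroup F] [NormedSpace ℝ F]
  [SecondCountableTopology F] (μ : Measure E) [μ.IsAddHaarMeasure] {Ω : Set E}

lemma exists_isC1Zero_measure_lt_norm_sub_fderiv_le (hΩ : IsOpen Ω) (hfin : μ Ω ≠ ∞) {δ : ℝ≥0∞}
    (hδ : δ ≠ 0) :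
    ∃ C : ℝ, 0 ≤ C ∧ ∀ {w : E → E →L[ℝ] F} {M η : ℝ}, Measurable w → 0 ≤ M → 0 < η →
      ∃ φ : E → F, IsC1Zero Ω φ ∧ (∀ y, ‖φ y‖ ≤ η) ∧ (∀ y, ‖fderiv ℝ φ y‖ ≤ C * M) ∧
        μ {x ∈ Ω | ‖w x‖ ≤ M ∧ η < ‖w x - fderiv ℝ φ x‖} ≤ δ := by
  obtain ⟨s, hs, hcover⟩ :=
    exists_disjoint_closedBall_shrunken_cover μ hΩ hfin hδ (G := E →L[ℝ] F)
  obtain ⟨C, hC, hballs⟩ := exists_isC1Zero_fderiv_eq_on_balls (E := E) (F := F) hs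
  refine ⟨C, hC, fun {w M η} hw hM hη => ?_⟩
  let a : E → E →L[ℝ] F := {x | ‖w x‖ ≤ M}.indicator w
  have ha : Measurable a := hw.indicator (measurableSet_le hw.norm measurable_const)
  have haM (x : E) : ‖a x‖ ≤ M := by
    by_cases hx : ‖w x‖ ≤ M
    · exact (norm_indicator_le_norm_self _ _).trans hx
    · simpa [a, hx] using hM
  have hCM : 0 < C * M + 1 := by positivity
  obtain ⟨t, r, hr, hdisj, hμ⟩ := hcover ha hη (div_pos hη hCM)
  obtain ⟨φ, hφ, hφη, hφM, heq⟩ := hballs haM (div_pos hη hCM).le hr hdisj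
  refine ⟨φ, hφ, fun y => (hφη y).trans ?_, hφM, (measure_mono ?_).trans hμ⟩
  · calc C * M * (η / (C * M + 1)) ≤ (C * M + 1) * (η / (C * M + 1)) := by gcongr; simp
      _ = η := mul_div_cancel₀ η hCM.ne'
  · rintro y ⟨hyΩ, hyM, hyη⟩
    refine ⟨hyΩ, fun hy => hyη.not_ge ?_⟩
    obtain ⟨x, hx, hyx, hyw : dist (a y) (a x) ≤ η⟩ := mem_iUnion₂.1 hy
    rwa [heq x hx y hyx, ← dist_eq_norm, ← indicator_of_mem (s := {x | ‖w x‖ ≤ M}) hyM w]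

lemma exists_isC1Zero_seq_measure_lt_norm_sub_sum_fderiv_le [CompleteSpace F] (hΩ : IsOpen Ω)
    (hfin : μ Ω ≠ ∞) {v : E → E →L[ℝ] F} (hv : Measurable v) {δ : ℝ≥0∞} (hδ : δ ≠ 0) :
    ∃ (M u : ℕ → ℝ) (φ : ℕ → E → F), Tendsto M atTop (𝓝 0) ∧ Summable u ∧
      (∀ k, IsC1Zero Ω (φ k)) ∧ (∀ k y, ‖φ k y‖ ≤ u k) ∧ (∀ k y, ‖fderiv ℝ (φ k) y‖ ≤ u k) ∧
      μ {x ∈ Ω | ∃ k, M k < ‖(v - ∑ j ∈ Finset.range k, fderiv ℝ (φ j)) x‖} ≤ δ := by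
  have hδ2 : δ / 2 ≠ 0 := (ENNReal.half_pos hδ).ne'
  obtain ⟨e, he, hesum⟩ := ENNReal.exists_pos_sum_of_countable' hδ2 ℕ
  choose C hC happrox using fun k =>
    exists_isC1Zero_measure_lt_norm_sub_fderiv_le (F := F) μ hΩ hfin (he k).ne'
  obtain ⟨n, hn⟩ := exists_nat_measure_lt_norm_le hΩ.measurableSet hfin hv hδ2
  obtain ⟨M, hM0, hM, hMsum, hCM⟩ := exists_pos_seq_summable_mul hC n.cast_add_one_pos
  have hMsucc : Summable fun k => M (k + 1) := (summable_nat_add_iff 1).2 hMsum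
  obtain ⟨φ, hφ⟩ := exists_seq_forall_sub_sum (p := Measurable)
    (fun g f hg => hg.sub (measurable_fderiv ℝ f))
    (fun k w hw => happrox k hw (hM k).le (hM (k + 1))) hv
  refine ⟨M, fun k => M (k + 1) + C k * M k, φ, hMsum.tendsto_atTop_zero, hMsucc.add hCM,
    fun k => (hφ k).1, fun k y => ((hφ k).2.1 y).trans ?_, fun k y => ((hφ k).2.2.1 y).trans ?_, ?_⟩
  · exact le_add_of_nonneg_right (mul_nonneg (hC k) (hM k).le)
  · exact le_add_of_nonneg_left (hM (k + 1)).le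
  refine (measure_exists_lt_le_add_tsum μ Ω M _).trans ?_
  calc _ ≤ δ / 2 + ∑' k, e k := ?_
    _ ≤ δ / 2 + δ / 2 := by gcongr
    _ = δ := ENNReal.add_halves δ
  gcongr with k
  · refine (measure_mono ?_).trans hn
    rintro x ⟨hxΩ, hx⟩
    rw [hM0, Finset.range_zero, Finset.sum_empty, sub_zero] at hx
    exact ⟨hxΩ, (lt_add_one _).trans hx⟩
  · refine (hφ k).2.2.2.trans' (measure_mono fun x hx => ?_)
    rw [Finset.sum_range_succ, ← sub_sub] at hx
    exact hx

lemma exists_isC1Zero_measure_fderiv_ne_le [CompleteSpace F] (hΩ : IsOpen Ω) (hfin : μ Ω ≠ ∞)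
    {v : E → E →L[ℝ] F} (hv : Measurable v) {δ : ℝ≥0∞} (hδ : δ ≠ 0) :
    ∃ φ : E → F, IsC1Zero Ω φ ∧ μ {x ∈ Ω | fderiv ℝ φ x ≠ v x} ≤ δ := by
  obtain ⟨M, u, φ, hM, hu, hφ, hφu, hφu', hμ⟩ :=
    exists_isC1Zero_seq_measure_lt_norm_sub_sum_fderiv_le μ hΩ hfin hv hδ
  refine ⟨fun x => ∑' k, φ k x, .tsum hφ hu hφu hφu', (measure_mono ?_).trans hμ⟩
  rintro x ⟨hxΩ, hx⟩
  refine ⟨hxΩ, ?_⟩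
  contrapose! hx
  have hres : Tendsto (fun k => v x - ∑ j ∈ Finset.range k, fderiv ℝ (φ j) x) atTop (𝓝 0) :=
    squeeze_zero_norm (fun k => by simpa using hx k) hM
  have hsum : Summable fun k => fderiv ℝ (φ k) x := hu.of_norm_bounded fun k => hφu' k x
  rw [IsC1Zero.fderiv_tsum hφ hu hφu hφu']
  exact (sub_eq_zero.1 (tendsto_nhds_unique
    (tendsto_const_nhds.sub hsum.hasSum.tendsto_sum_nat) hres)).symm

theorem alberti_lusin_gradient_general [CompleteSpace F] (hΩ : IsOpen Ω) (hfin : μ Ω ≠ ∞)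
    {v : E → E →L[ℝ] F} (hv : AEMeasurable v (μ.restrict Ω)) {δ : ℝ≥0∞} (hδ : δ ≠ 0) :
    ∃ (A : Set E) (φ : E → F), IsOpen A ∧ A ⊆ Ω ∧ IsC1Zero Ω φ ∧ μ A ≤ δ ∧
      ∀ x ∈ Ω \ A, HasFDerivAt φ (v x) x := by
  have hδ2 : δ / 2 ≠ 0 := (ENNReal.half_pos hδ).ne'
  obtain ⟨φ, hφ, hμ⟩ := exists_isC1Zero_measure_fderiv_ne_le μ hΩ hfin hv.measurable_mk hδ2
  have hae : {x ∈ Ω | fderiv ℝ φ x ≠ v x} ≤ᵐ[μ] {x ∈ Ω | fderiv ℝ φ x ≠ hv.mk v x} := by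
    filter_upwards [(ae_restrict_iff' hΩ.measurableSet).1 hv.ae_eq_mk] with x hx h
    exact ⟨h.1, hx h.1 ▸ h.2⟩
  obtain ⟨U, hU, hUo, hUμ⟩ := exists_isOpen_le_add {x ∈ Ω | fderiv ℝ φ x ≠ v x} μ hδ2
  refine ⟨Ω ∩ U, φ, hΩ.inter hUo, inter_subset_left, hφ, ?_, fun x hx => ?_⟩
  · calc μ (Ω ∩ U) ≤ δ / 2 + δ / 2 := (measure_mono inter_subset_right).trans
          (hUμ.trans (add_le_add_left ((measure_mono_ae hae).trans hμ) _))
      _ = δ := ENNReal.add_halves δ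
  · have heq : fderiv ℝ φ x = v x := not_not.1 fun h => hx.2 ⟨hx.1, hU ⟨hx.1, h⟩⟩
    exact heq ▸ (hφ.contDiff.differentiable one_ne_zero x).hasFDerivAt

end Approximation

/-- **Alberti's Lusin-type theorem for gradients.** For any open `Ω ⊆ ℝ^N` (`N ≥ 2`) of
finite measure, any Borel vector field `v` and any `ε > 0`, there are an open `A ⊆ Ω`
and `φ ∈ C¹₀(Ω)` with `ℋ^N(A) ≤ ε ℋ^N(Ω)` and `v = ∇φ` on `Ω ∖ A`. -/
theorem alberti_lusin_gradient (N : ℕ) (hN : 2 ≤ N) (Ω : Set (Euc N)) (hΩ : IsOpen Ω)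
    (hfin : μH[N] Ω ≠ ⊤) (v : Euc N → Euc N) (hv : Measurable v)
    (ε : ℝ) (hε : 0 < ε) :
    ∃ (A : Set (Euc N)) (φ : Euc N → ℝ), IsOpen A ∧ A ⊆ Ω ∧ MemC1Zero Ω φ ∧
      μH[N] A ≤ ENNReal.ofReal ε * μH[N] Ω ∧
      ∀ x ∈ Ω \ A, v x = gradient φ x := by
  obtain rfl | hne := Ω.eq_empty_or_nonempty
  · exact ⟨∅, 0, isOpen_empty, subset_rfl, (IsC1Zero.zero ∅).memC1Zero, by simp, by simp⟩
  have hpos : ENNReal.ofReal ε * μH[N] Ω ≠ 0 :=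
    mul_ne_zero (ENNReal.ofReal_pos.2 hε).ne' (hΩ.measure_pos _ hne).ne'
  obtain ⟨A, φ, hA, hAΩ, hφ, hμ, hderiv⟩ := alberti_lusin_gradient_general μH[N] hΩ hfin
    ((InnerProductSpace.toDual ℝ (Euc N)).continuous.measurable.comp hv).aemeasurable hpos
  exact ⟨A, φ, hA, hAΩ, hφ.memC1Zero, hμ,
    fun x hx => (HasGradientAt.gradient (hderiv x hx)).symm⟩
end
end

section
/- Let N ≥ 2 and let Ω ⊂ ℝ^N be an open set with finite N-dimensional Lebesgue measure. Let v : Ω → ℝ^N be a Borel measurable vector field, and let η, ε, ϑ be arbitrary positive real numbers. Then there exist a compact set K contained in Ω and a function φ ∈ C¹₀(Ω) such that ℋ^N(Ω ∖ K) ≤ ε·ℋ^N(Ω), sup_{x ∈ Ω} |φ(x)| ≤ ϑ, and |v(x) − ∇φ(x)| ≤ η for every x ∈ K. -/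
open MeasureTheory Filter

noncomputable section

/-!
Choose `(aₙ, Lₙ)` dense in the space of pairs of a point and a linear map. Every `x ∈ Ω` admits an
`n` for which `Lₙ` is close to `v x` while the affine function `y ↦ Lₙ (y - aₙ)` is small near `x`,
so `Ω` is the union of countably many measurable sets, each served by a single affine function.
Since `Ω` has finite measure, finitely many pairwise disjoint compact subsets of these sets carry
almost all of it. Near disjoint compact sets the affine functions glue without any compatibility
condition, and a cut-off makes the result smooth with compact support in `Ω`.
-/

open Set Function TopologicalSpace
open scoped ContDiff ENNReal Topology Manifold

section Measure

variable {X : Type*} [MeasurableSpace X]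

theorem exists_measure_sdiff_iUnion_fin_lt {μ : Measure X} {S : Set X} (hS : MeasurableSet S)
    {K : ℕ → Set X} (hK : ∀ i, MeasurableSet (K i)) {δ : ℝ≥0∞} (hδ : μ (S \ ⋃ i, K i) < δ)
    (hfin : μ S ≠ ⊤) : ∃ n, μ (S \ ⋃ i : Fin n, K i) < δ := by
  have hlim := tendsto_measure_iInter_le (μ := μ) (f := fun i => S \ K i)
    (fun i => (hS.diff (hK i)).nullMeasurableSet)
    ⟨0, ne_top_of_le_ne_top hfin (measure_mono sdiff_subset)⟩
  rw [← sdiff_iUnion] at hlim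
  obtain ⟨n, hn⟩ := ((tendsto_order.1 hlim).2 δ hδ).exists
  refine ⟨n + 1, (measure_mono ?_).trans_lt hn⟩
  exact subset_iInter₂ fun i hi => sdiff_subset_sdiff_right
    (subset_iUnion (fun j : Fin (n + 1) => K j) ⟨i, Nat.lt_succ_of_le hi⟩)

theorem exists_isCompact_pairwise_disjoint_measure_sdiff_lt [TopologicalSpace X] [T2Space X]
    [OpensMeasurableSpace X] (μ : Measure X) [μ.InnerRegularCompactLTTop] {A : ℕ → Set X}
    (hA : ∀ i, MeasurableSet (A i)) (hfin : μ (⋃ i, A i) ≠ ⊤) {δ : ℝ≥0∞} (hδ : δ ≠ 0) :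
    ∃ (n : ℕ) (K : Fin n → Set X), (∀ i, IsCompact (K i)) ∧ (∀ i, K i ⊆ A i) ∧
      Pairwise (Disjoint on K) ∧ μ ((⋃ i, A i) \ ⋃ i, K i) < δ := by
  have hdisjointed (i : ℕ) : MeasurableSet (disjointed A i) := .disjointed hA i
  obtain ⟨δ', hδ'pos, hδ'sum⟩ := ENNReal.exists_pos_sum_of_countable' hδ ℕ
  choose K hKsub hK hKμ using fun i => (hdisjointed i).exists_isCompact_sdiff_lt
    (ne_top_of_le_ne_top hfin
      (measure_mono ((disjointed_subset A i).trans (subset_iUnion A i)))) (hδ'pos i).ne'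
  have hdisj : Pairwise (Disjoint on K) := fun i j hij =>
    (disjoint_disjointed A hij).mono (hKsub i) (hKsub j)
  have hsum : μ ((⋃ i, A i) \ ⋃ i, K i) < δ :=
    calc μ ((⋃ i, A i) \ ⋃ i, K i)
        ≤ μ (⋃ i, disjointed A i \ K i) := by
          rw [← iUnion_disjointed, iUnion_sdiff]
          exact measure_mono (iUnion_mono fun i => sdiff_subset_sdiff_right (subset_iUnion K i))
      _ ≤ ∑' i, μ (disjointed A i \ K i) := measure_iUnion_le _
      _ ≤ ∑' i, δ' i := ENNReal.tsum_le_tsum fun i => (hKμ i).le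
      _ < δ := hδ'sum
  obtain ⟨n, hn⟩ := exists_measure_sdiff_iUnion_fin_lt (.iUnion hA)
    (fun i => (hK i).measurableSet) hsum hfin
  exact ⟨n, fun i => K i, fun i => hK i, fun i => (hKsub i).trans (disjointed_subset A i),
    hdisj.comp_of_injective Fin.val_injective, hn⟩

end Measure

section Topology

variable {ι X : Type*}

theorem exists_isOpen_superset_pairwise_disjoint [TopologicalSpace X] [T2Space X] [Finite ι]
    {K O : ι → Set X} (hdisj : Pairwise (Disjoint on K)) (hK : ∀ i, IsCompact (K i))
    (hO : ∀ i, IsOpen (O i)) (hKO : ∀ i, K i ⊆ O i) :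
    ∃ U : ι → Set X, (∀ i, IsOpen (U i)) ∧ (∀ i, K i ⊆ U i) ∧ (∀ i, U i ⊆ O i) ∧
      Pairwise (Disjoint on U) := by
  have hnhds : Pairwise (Disjoint on fun i => 𝓝ˢ (K i)) := fun i j hij =>
    separatedNhds_iff_disjoint.1 (.of_isCompact_isCompact (hK i) (hK j) (hdisj hij))
  obtain ⟨U, hU, hUdisj⟩ :=
    hnhds.exists_mem_filter_basis_of_disjoint fun i => hasBasis_nhdsSet (K i)
  exact ⟨fun i => U i ∩ O i, fun i => (hU i).1.inter (hO i),
    fun i => subset_inter (hU i).2 (hKO i), fun i => inter_subset_right,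
    fun i j hij => (hUdisj hij).mono inter_subset_left inter_subset_left⟩

theorem exists_forall_eqOn_of_pairwise_disjoint {Y : Type*} [Nonempty Y] {U : ι → Set X}
    (hdisj : Pairwise (Disjoint on U)) (f : ι → X → Y) : ∃ g : X → Y, ∀ i, EqOn g (f i) (U i) := by
  have hex (x : X) : ∃ y, ∀ i, x ∈ U i → y = f i x := by
    by_cases hx : ∃ i, x ∈ U i
    · obtain ⟨i, hi⟩ := hx
      exact ⟨f i x, fun j hj => by rw [hdisj.eq (not_disjoint_iff.2 ⟨x, hi, hj⟩)]⟩
    · exact ⟨Classical.arbitrary Y, fun i hi => absurd ⟨i, hi⟩ hx⟩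
  choose g hg using hex
  exact ⟨g, fun i x => hg x i⟩

end Topology

section Smooth

variable {E F : Type*} [NormedAddCommGroup E] [NormedSpace ℝ E] [NormedAddCommGroup F]
  [NormedSpace ℝ F]

theorem exists_contDiff_eventuallyEq_nhdsSet [FiniteDimensional ℝ E] {K W : Set E}
    (hK : IsCompact K) (hW : IsOpen W) (hKW : K ⊆ W) {n : ℕ∞} {g : E → F}
    (hg : ContDiffOn ℝ n g W) :
    ∃ φ : E → F, ContDiff ℝ n φ ∧ HasCompactSupport φ ∧ tsupport φ ⊆ W ∧
      (∀ x, ‖φ x‖ ≤ ‖g x‖) ∧ φ =ᶠ[𝓝ˢ K] g := by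
  obtain ⟨C, hC, hCclosed, hKC, hCW⟩ := exists_compact_closed_between hK hW hKW
  obtain ⟨χ, hχone, hχzero, hχ⟩ := exists_contMDiffMap_one_nhds_of_subset_interior (n := n)
    𝓘(ℝ, E) hK.isClosed hKC
  have htsupport : tsupport (fun x => χ x • g x) ⊆ C := by
    refine closure_minimal (fun x hx => ?_) hCclosed
    by_contra hxC
    exact hx (by simp [hχzero x hxC])
  refine ⟨fun x => χ x • g x, contDiff_iff_contDiffAt.2 fun x => ?_,
    hC.of_isClosed_subset (isClosed_tsupport _) htsupport, htsupport.trans hCW, fun x => ?_,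
    hχone.mono fun x hx => by simp [hx]⟩
  · by_cases hx : x ∈ W
    · exact χ.contMDiff.contDiff.contDiffAt.smul (hg.contDiffAt (hW.mem_nhds hx))
    · exact contDiffAt_const.congr_of_eventuallyEq
        (notMem_tsupport_iff_eventuallyEq.1 fun h => hx (hCW (htsupport h)))
  · rw [norm_smul, Real.norm_of_nonneg (hχ x).1]
    exact mul_le_of_le_one_left (norm_nonneg _) (hχ x).2

theorem exists_contDiff_forall_eventuallyEq_nhdsSet [FiniteDimensional ℝ E] {ι : Type*} [Finite ι]
    {K O : ι → Set E} (hK : ∀ i, IsCompact (K i)) (hdisj : Pairwise (Disjoint on K))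
    (hO : ∀ i, IsOpen (O i)) (hKO : ∀ i, K i ⊆ O i) {n : ℕ∞} {f : ι → E → F}
    (hf : ∀ i, ContDiffOn ℝ n (f i) (O i)) {ϑ : ℝ} (hϑ : 0 ≤ ϑ)
    (hbound : ∀ i, ∀ x ∈ O i, ‖f i x‖ ≤ ϑ) :
    ∃ φ : E → F, ContDiff ℝ n φ ∧ HasCompactSupport φ ∧ tsupport φ ⊆ ⋃ i, O i ∧
      (∀ x, ‖φ x‖ ≤ ϑ) ∧ ∀ i, φ =ᶠ[𝓝ˢ (K i)] f i := by
  obtain ⟨U, hU, hKU, hUO, hUdisj⟩ := exists_isOpen_superset_pairwise_disjoint hdisj hK hO hKO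
  obtain ⟨g, hgf⟩ := exists_forall_eqOn_of_pairwise_disjoint hUdisj f
  have hg : ContDiffOn ℝ n g (⋃ i, U i) := fun x hx => by
    obtain ⟨i, hi⟩ := mem_iUnion.1 hx
    exact (((hf i).contDiffAt ((hO i).mem_nhds (hUO i hi))).congr_of_eventuallyEq
      ((hgf i).eventuallyEq_of_mem ((hU i).mem_nhds hi))).contDiffWithinAt
  obtain ⟨φ, hφ, hcompact, htsupport, hφg, hφeq⟩ := exists_contDiff_eventuallyEq_nhdsSet
    (isCompact_iUnion hK) (isOpen_iUnion hU) (iUnion_mono hKU) hg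
  refine ⟨φ, hφ, hcompact, htsupport.trans (iUnion_mono hUO), fun x => ?_, fun i => ?_⟩
  · by_cases hx : x ∈ ⋃ i, U i
    · obtain ⟨i, hi⟩ := mem_iUnion.1 hx
      exact (hφg x).trans (hgf i hi ▸ hbound i x (hUO i hi))
    · simpa [image_eq_zero_of_notMem_tsupport fun h => hx (htsupport h)] using hϑ
  · exact (hφeq.filter_mono (nhdsSet_mono (subset_iUnion K i))).trans
      ((hgf i).eventuallyEq_of_mem ((hU i).mem_nhdsSet.2 (hKU i)))

variable (E F) in
theorem exists_seq_forall_norm_apply_sub_lt_and_norm_sub_lt [SeparableSpace E]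
    [SeparableSpace (E →L[ℝ] F)] {η ϑ : ℝ} (hη : 0 < η) (hϑ : 0 < ϑ) :
    ∃ (a : ℕ → E) (L : ℕ → E →L[ℝ] F), ∀ (x : E) (T : E →L[ℝ] F),
      ∃ n, ‖L n (x - a n)‖ < ϑ ∧ ‖T - L n‖ < η := by
  obtain ⟨p, hp⟩ := exists_dense_seq (E × (E →L[ℝ] F))
  refine ⟨fun n => (p n).1, fun n => (p n).2, fun x T => ?_⟩
  have hopen : IsOpen {p : E × (E →L[ℝ] F) | ‖p.2 (x - p.1)‖ < ϑ ∧ ‖T - p.2‖ < η} :=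
    .and (isOpen_lt (by fun_prop) continuous_const) (isOpen_lt (by fun_prop) continuous_const)
  exact hp.exists_mem_open hopen ⟨(x, T), by simpa using ⟨hϑ, hη⟩⟩

variable [FiniteDimensional ℝ E] [MeasurableSpace E] [BorelSpace E] [SecondCountableTopology F]

theorem exists_contDiff_norm_sub_fderiv_le {μ : Measure E} {Ω : Set E} (hΩ : IsOpen Ω)
    (hfin : μ Ω ≠ ⊤) {v : E → E →L[ℝ] F} (hv : Measurable v) {η ϑ : ℝ} (hη : 0 < η) (hϑ : 0 < ϑ)
    {δ : ℝ≥0∞} (hδ : δ ≠ 0) :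
    ∃ (K : Set E) (φ : E → F), IsCompact K ∧ K ⊆ Ω ∧ ContDiff ℝ ∞ φ ∧ HasCompactSupport φ ∧
      tsupport φ ⊆ Ω ∧ μ (Ω \ K) < δ ∧ (∀ x, ‖φ x‖ ≤ ϑ) ∧ ∀ x ∈ K, ‖v x - fderiv ℝ φ x‖ ≤ η := by
  have : IsFiniteMeasure (μ.restrict Ω) := isFiniteMeasure_restrict.2 hfin
  obtain ⟨a, L, haL⟩ := exists_seq_forall_norm_apply_sub_lt_and_norm_sub_lt E F hη hϑ
  let O (n : ℕ) : Set E := Ω ∩ {x | ‖L n (x - a n)‖ < ϑ}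
  let A (n : ℕ) : Set E := O n ∩ {x | ‖v x - L n‖ < η}
  have hO (n : ℕ) : IsOpen (O n) := hΩ.inter (isOpen_lt (by fun_prop) continuous_const)
  have hA (n : ℕ) : MeasurableSet (A n) :=
    (hO n).measurableSet.inter (measurableSet_lt (hv.sub_const _).norm measurable_const)
  have hAΩ : ⋃ n, A n = Ω := by
    refine (iUnion_subset fun n x hx => hx.1.1).antisymm fun x hx => ?_
    obtain ⟨n, hval, hder⟩ := haL x (v x)
    exact mem_iUnion.2 ⟨n, ⟨hx, hval⟩, hder⟩
  obtain ⟨n, K, hK, hKA, hdisj, hμ⟩ := exists_isCompact_pairwise_disjoint_measure_sdiff_lt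
    (μ.restrict Ω) hA (measure_ne_top _ _) hδ
  have hKO (i : Fin n) : K i ⊆ O i := (hKA i).trans inter_subset_left
  have hOΩ : ⋃ i : Fin n, O i ⊆ Ω := iUnion_subset fun i => inter_subset_left
  obtain ⟨φ, hφ, hcompact, htsupport, hbound, hφeq⟩ :=
    exists_contDiff_forall_eventuallyEq_nhdsSet (n := ⊤) hK hdisj (fun i => hO i) hKO
      (f := fun i x => L i (x - a i)) (fun i => by fun_prop) hϑ.le fun i x hx => hx.2.le
  refine ⟨⋃ i, K i, φ, isCompact_iUnion hK, (iUnion_mono hKO).trans hOΩ, hφ, hcompact,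
    htsupport.trans hOΩ, ?_, hbound, fun x hx => ?_⟩
  · rwa [hAΩ, Measure.restrict_eq_self _ sdiff_subset] at hμ
  · obtain ⟨i, hi⟩ := mem_iUnion.1 hx
    have hderiv : HasFDerivAt (fun y => L i (y - a i)) (L i) x :=
      (L i).hasFDerivAt.comp x ((hasFDerivAt_id x).sub_const (a i))
    rw [((hφeq i).filter_mono (nhds_le_nhdsSet hi)).fderiv_eq, hderiv.fderiv]
    exact (hKA i hi).2.le

theorem rough_approximation_general (μ : Measure E) {Ω : Set E} (hΩ : IsOpen Ω) (hfin : μ Ω ≠ ⊤)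
    {v : E → E →L[ℝ] F} (hv : Measurable v) {η ϑ : ℝ} {ε : ℝ≥0∞} (hη : 0 < η) (hε : ε ≠ 0)
    (hϑ : 0 < ϑ) :
    ∃ (K : Set E) (φ : E → F), IsCompact K ∧ K ⊆ Ω ∧ ContDiff ℝ ∞ φ ∧ HasCompactSupport φ ∧
      tsupport φ ⊆ Ω ∧ μ (Ω \ K) ≤ ε * μ Ω ∧ (∀ x, ‖φ x‖ ≤ ϑ) ∧
      ∀ x ∈ K, ‖v x - fderiv ℝ φ x‖ ≤ η := by
  rcases eq_or_ne (μ Ω) 0 with hμ | hμ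
  · exact ⟨∅, 0, isCompact_empty, empty_subset Ω, contDiff_const, .zero, by simp, by simp [hμ],
      by simpa using hϑ.le, by simp⟩
  obtain ⟨K, φ, hK, hKΩ, hφ, hcompact, htsupport, hμK, happrox⟩ :=
    exists_contDiff_norm_sub_fderiv_le hΩ hfin hv hη hϑ (mul_ne_zero hε hμ)
  exact ⟨K, φ, hK, hKΩ, hφ, hcompact, htsupport, hμK.le, happrox⟩

end Smooth

theorem norm_toDual_sub_fderiv {E : Type*} [NormedAddCommGroup E] [InnerProductSpace ℝ E]
    [CompleteSpace E] (w : E) (f : E → ℝ) (x : E) :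
    ‖InnerProductSpace.toDual ℝ E w - fderiv ℝ f x‖ = ‖w - gradient f x‖ := by
  rw [← (InnerProductSpace.toDual ℝ E).norm_map (w - gradient f x), map_sub, gradient,
    LinearIsometryEquiv.apply_symm_apply]

theorem MemC1Zero.of_tsupport_subset {N : ℕ} {Ω : Set (Euc N)} {φ : Euc N → ℝ}
    (hφ : ContDiff ℝ 1 φ) (hcompact : HasCompactSupport φ) (htsupport : tsupport φ ⊆ Ω) :
    MemC1Zero Ω φ := by
  have hzero : ∀ x ∉ tsupport φ, φ x = 0 ∧ fderiv ℝ φ x = 0 := fun x hx =>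
    ⟨image_eq_zero_of_notMem_tsupport hx, fderiv_of_notMem_tsupport ℝ hx⟩
  refine ⟨hφ, fun x hx => hzero x fun h => hx (htsupport h), tendsto_const_nhds.congr' ?_⟩
  filter_upwards [hcompact.isCompact.compl_mem_cocompact] with x hx
  simp [hzero x hx]

/-- **The key rough-approximation lemma.** For any open `Ω ⊆ ℝ^N` (`N ≥ 2`) with finite
measure, any Borel vector field `v : Ω → ℝ^N`, and any positive `η, ε, ϑ`, there exist a
compact `K ⊆ Ω` and `φ ∈ C¹₀(Ω)` with `ℋ^N(Ω ∖ K) ≤ ε ℋ^N(Ω)`, `sup_Ω |φ| ≤ ϑ`, and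
`|v − ∇φ| ≤ η` on `K`. -/
theorem rough_approximation (N : ℕ) (hN : 2 ≤ N) (Ω : Set (Euc N)) (hΩ : IsOpen Ω)
    (hfin : μH[N] Ω ≠ ⊤) (v : Euc N → Euc N) (hv : Measurable v)
    (η ε ϑ : ℝ) (hη : 0 < η) (hε : 0 < ε) (hϑ : 0 < ϑ) :
    ∃ (K : Set (Euc N)) (φ : Euc N → ℝ), IsCompact K ∧ K ⊆ Ω ∧ MemC1Zero Ω φ ∧
      μH[N] (Ω \ K) ≤ ENNReal.ofReal ε * μH[N] Ω ∧
      (∀ x ∈ Ω, |φ x| ≤ ϑ) ∧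
      ∀ x ∈ K, ‖v x - gradient φ x‖ ≤ η := by
  obtain ⟨K, φ, hK, hKΩ, hφ, hcompact, htsupport, hμK, hbound, happrox⟩ :=
    rough_approximation_general μH[N] hΩ hfin
      ((InnerProductSpace.toDual ℝ (Euc N)).continuous.measurable.comp hv) hη
      (ENNReal.ofReal_pos.2 hε).ne' hϑ
  exact ⟨K, φ, hK, hKΩ, .of_tsupport_subset (hφ.of_le (by simp)) hcompact htsupport, hμK,
    fun x _ => hbound x, fun x hx => norm_toDual_sub_fderiv (v x) φ x ▸ happrox x hx⟩
end
end

section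
/- Let N ≥ 2 and let Ω ⊂ ℝ^N be an open set with finite N-dimensional Lebesgue measure. Let v : Ω → ℝ^N be a C^∞ vector field whose support is a compact subset of Ω. Then for all positive real numbers η, ε, ϑ there exist a compact set K ⊂ Ω and a function φ ∈ C¹₀(Ω) such that ℋ^N(Ω ∖ K) ≤ ε·ℋ^N(Ω), sup_{x ∈ Ω} |φ(x)| ≤ ϑ, and |v(x) − ∇φ(x)| ≤ η for every x ∈ K. -/
open MeasureTheory Filter

noncomputable section

/-!
The field `v` equals `∇ ⟪v c, · - c⟫` at leading order near each point `c`, so one cuts space into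
small cells and uses, on the cell with lower corner `c`, the potential `⟪v y, y - c⟫`. It is small
because the cell is small, and its gradient differs from `v` only by the term in which the
derivative falls on `v`, which again carries the small factor `y - c`. These local potentials do not
match across the walls of the cells, but the walls form a closed null set: a compact subset of `Ω`
of nearly full measure avoids them, and a cutoff equal to `1` near that compact set and to `0` near
the walls makes the potential globally smooth.
-/

open Module Function
open scoped Topology InnerProductSpace ENNReal Gradient Manifold

section LatticeWalls

variable {E ι : Type*} [NormedAddCommGroup E] [NormedSpace ℝ E]

/-- The walls of the cells of the lattice spanned by `b`, i.e. of the translates of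
`ZSpan.fundamentalDomain b`: the points with an integer coordinate in `b`. -/
def latticeWalls (b : Basis ι ℝ E) : Set E :=
  ⋃ i, b.coord i ⁻¹' Set.range ((↑) : ℤ → ℝ)

theorem isClosed_latticeWalls [Finite ι] (b : Basis ι ℝ E) : IsClosed (latticeWalls b) := by
  have := Module.Finite.of_basis b
  exact isClosed_iUnion_of_finite fun i =>
    Int.isClosedEmbedding_coe_real.isClosed_range.preimage
      (b.coord i).continuous_of_finiteDimensional

theorem measure_latticeWalls [Finite ι] [MeasurableSpace E] [BorelSpace E] (μ : Measure E)
    [μ.IsAddHaarMeasure] (b : Basis ι ℝ E) : μ (latticeWalls b) = 0 := by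
  have := Module.Finite.of_basis b
  have := FiniteDimensional.proper_real E
  refine measure_iUnion_null fun i => ?_
  have hcountable : (Set.range ((↑) : ℤ → ℝ)).Countable := Set.countable_range _
  have hsurj : Surjective (b.coord i) := fun t => ⟨t • b i, by simp⟩
  exact measure_eq_zero_iff_ae_notMem.2 <| (ae_comp_linearMap_mem_iff (b.coord i) μ volume hsurj
    hcountable.measurableSet.compl).2 (hcountable.ae_notMem volume)

theorem eventually_zspanFloor_eq [Fintype ι] {b : Basis ι ℝ E} {x : E} (hx : x ∉ latticeWalls b) :
    ∀ᶠ y in 𝓝 x, ZSpan.floor b y = ZSpan.floor b x := by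
  have := Module.Finite.of_basis b
  have hfloor (i : ι) : ∀ᶠ y in 𝓝 x, ⌊b.repr y i⌋ = ⌊b.repr x i⌋ := by
    have hcont : ContinuousAt (b.coord i) x :=
      (b.coord i).continuous_of_finiteDimensional.continuousAt
    have hne : (⌊b.coord i x⌋ : ℝ) ≠ b.coord i x := fun h => hx (Set.mem_iUnion.2 ⟨i, _, h⟩)
    filter_upwards [hcont.eventually (Ioo_mem_nhds ((Int.floor_le _).lt_of_ne hne)
      (Int.lt_floor_add_one _))] with y hy
    exact Int.floor_eq_iff.2 ⟨hy.1.le, hy.2⟩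
  filter_upwards [eventually_all.2 hfloor] with y hy
  simp only [ZSpan.floor, hy]

variable (E) in
theorem exists_basis_sum_norm_lt [FiniteDimensional ℝ E] {δ : ℝ} (hδ : 0 < δ) :
    ∃ b : Basis (Fin (finrank ℝ E)) ℝ E, ∑ i, ‖b i‖ < δ := by
  let b := finBasis ℝ E
  obtain ⟨c, hc, hlt⟩ := exists_pos_mul_lt hδ (∑ i, ‖b i‖)
  refine ⟨b.isUnitSMul fun _ => hc.ne'.isUnit, ?_⟩
  simpa only [Basis.isUnitSMul_apply, norm_smul, Real.norm_of_nonneg hc.le, ← Finset.mul_sum,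
    mul_comm] using hlt

end LatticeWalls

section LatticePotential

variable {E ι : Type*} [NormedAddCommGroup E] [InnerProductSpace ℝ E] [Fintype ι]
  {b : Basis ι ℝ E} {v : E → E} {x : E}

/-- The potential which, on the cell of the lattice spanned by `b` with lower corner `c`, is
`x ↦ ⟪v x, x - c⟫`. -/
def latticePotential (b : Basis ι ℝ E) (v : E → E) (x : E) : ℝ :=
  ⟪v x, ZSpan.fract b x⟫_ℝ

theorem abs_latticePotential_le (b : Basis ι ℝ E) (v : E → E) (x : E) :
    |latticePotential b v x| ≤ ‖v x‖ * ∑ i, ‖b i‖ :=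
  (abs_real_inner_le_norm _ _).trans <| by gcongr; exact ZSpan.norm_fract_le b x

theorem latticePotential_eventuallyEq (hx : x ∉ latticeWalls b) :
    latticePotential b v =ᶠ[𝓝 x] fun y => ⟪v y, y - ZSpan.floor b x⟫_ℝ := by
  filter_upwards [eventually_zspanFloor_eq hx] with y hy
  rw [latticePotential, ZSpan.fract_apply, hy]

theorem contDiffAt_latticePotential {n : WithTop ℕ∞} (hv : ContDiffAt ℝ n v x)
    (hx : x ∉ latticeWalls b) : ContDiffAt ℝ n (latticePotential b v) x :=
  (hv.inner ℝ (contDiffAt_id.sub contDiffAt_const)).congr_of_eventuallyEq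
    (latticePotential_eventuallyEq hx)

theorem hasGradientAt_inner_sub_const [CompleteSpace E] (hv : DifferentiableAt ℝ v x) (c : E) :
    HasGradientAt (fun y => ⟪v y, y - c⟫_ℝ) (v x + (fderiv ℝ v x).adjoint (x - c)) x := by
  rw [hasGradientAt_iff_hasFDerivAt]
  refine (hv.hasFDerivAt.inner ℝ ((hasFDerivAt_id x).sub_const c)).congr_fderiv ?_
  ext h
  simp [ContinuousLinearMap.adjoint_inner_left, inner_sub_left, real_inner_comm]

theorem norm_sub_gradient_latticePotential_le [CompleteSpace E] (hv : DifferentiableAt ℝ v x)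
    (hx : x ∉ latticeWalls b) :
    ‖v x - ∇ (latticePotential b v) x‖ ≤ ‖fderiv ℝ v x‖ * ∑ i, ‖b i‖ := by
  rw [(latticePotential_eventuallyEq hx).gradient_eq,
    (hasGradientAt_inner_sub_const hv _).gradient, sub_add_cancel_left, norm_neg,
    ← ZSpan.fract_apply, ← ContinuousLinearMap.adjoint.norm_map (fderiv ℝ v x)]
  exact ((fderiv ℝ v x).adjoint.le_opNorm _).trans <| by gcongr; exact ZSpan.norm_fract_le b x

end LatticePotential

theorem contDiff_smul_of_contDiffAt_of_eventuallyEq_zero {𝕜 E F : Type*}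
    [NontriviallyNormedField 𝕜] [NormedAddCommGroup E] [NormedSpace 𝕜 E] [NormedAddCommGroup F]
    [NormedSpace 𝕜 F] {n : WithTop ℕ∞} {χ : E → 𝕜} {f : E → F} {W : Set E}
    (hχ : ContDiff 𝕜 n χ) (hzero : ∀ x ∈ W, χ =ᶠ[𝓝 x] 0) (hf : ∀ x ∉ W, ContDiffAt 𝕜 n f x) :
    ContDiff 𝕜 n fun x => χ x • f x := by
  refine contDiff_iff_contDiffAt.2 fun x => ?_
  by_cases hx : x ∈ W
  · refine (contDiffAt_const (c := (0 : F))).congr_of_eventuallyEq ?_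
    filter_upwards [hzero x hx] with y hy
    rw [hy, Pi.zero_apply, zero_smul]
  · exact hχ.contDiffAt.smul (hf x hx)

theorem exists_contDiff_norm_sub_gradient_le_of_disjoint_latticeWalls {E ι : Type*}
    [NormedAddCommGroup E] [InnerProductSpace ℝ E] [CompleteSpace E] [Fintype ι]
    (b : Basis ι ℝ E) {n : ℕ∞} (hn : n ≠ 0) {v : E → E} (hv : ContDiff ℝ n v) {F : Set E}
    (hF : IsClosed F) (hdisj : Disjoint (latticeWalls b) F) :
    ∃ φ : E → ℝ, ContDiff ℝ n φ ∧ support φ ⊆ support v ∧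
      (∀ x, |φ x| ≤ ‖v x‖ * ∑ i, ‖b i‖) ∧
      ∀ x ∈ F, ‖v x - ∇ φ x‖ ≤ ‖fderiv ℝ v x‖ * ∑ i, ‖b i‖ := by
  have := Module.Finite.of_basis b
  obtain ⟨χ, hχ0, hχ1, hχ⟩ := exists_contMDiffMap_zero_one_nhds_of_isClosed (n := n) 𝓘(ℝ, E)
    (isClosed_latticeWalls b) hF hdisj
  have hsmooth : ContDiff ℝ n fun x => χ x • latticePotential b v x :=
    contDiff_smul_of_contDiffAt_of_eventuallyEq_zero χ.contMDiff.contDiff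
      (eventually_nhdsSet_iff_forall.1 hχ0) fun x hx =>
      contDiffAt_latticePotential hv.contDiffAt hx
  refine ⟨_, hsmooth, support_subset_iff'.2 fun x hx => ?_, fun x => ?_, fun x hx => ?_⟩
  · simp [latticePotential, notMem_support.1 hx]
  · calc |χ x * latticePotential b v x| = χ x * |latticePotential b v x| := by
          rw [abs_mul, abs_of_nonneg (hχ x).1]
      _ ≤ |latticePotential b v x| := mul_le_of_le_one_left (abs_nonneg _) (hχ x).2
      _ ≤ ‖v x‖ * ∑ i, ‖b i‖ := abs_latticePotential_le b v x
  · have hloc : (fun y => χ y • latticePotential b v y) =ᶠ[𝓝 x] latticePotential b v := by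
      filter_upwards [eventually_nhdsSet_iff_forall.1 hχ1 x hx] with y hy
      rw [hy, one_smul]
    rw [hloc.gradient_eq]
    exact norm_sub_gradient_latticePotential_le (hv.differentiable (by simpa using hn) x)
      (hdisj.notMem_of_mem_right hx)

theorem exists_isCompact_subset_disjoint_measure_sdiff_le_mul {α : Type*} [TopologicalSpace α]
    [T2Space α] [MeasurableSpace α] [OpensMeasurableSpace α] {μ : Measure α}
    [μ.InnerRegularCompactLTTop] {A W : Set α} (hA : MeasurableSet A) (hW : MeasurableSet W)
    (hnull : μ W = 0) {ε : ℝ≥0∞} (hε : ε ≠ 0) :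
    ∃ K ⊆ A, IsCompact K ∧ Disjoint W K ∧ μ (A \ K) ≤ ε * μ A := by
  rcases eq_or_ne (μ A) 0 with hzero | hzero
  · exact ⟨∅, A.empty_subset, isCompact_empty, Set.disjoint_empty W, by simp [hzero]⟩
  rcases eq_or_ne (μ A) ∞ with htop | htop
  · exact ⟨∅, A.empty_subset, isCompact_empty, Set.disjoint_empty W, by simp [htop, hε]⟩
  obtain ⟨K, hKsub, hK, hlt⟩ := (hA.diff hW).exists_isCompact_sdiff_lt
    (measure_ne_top_of_subset Set.sdiff_subset htop) (mul_ne_zero hε hzero)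
  refine ⟨K, hKsub.trans Set.sdiff_subset, hK, (Set.subset_sdiff.1 hKsub).2.symm, ?_⟩
  rw [Set.sdiff_sdiff_comm, measure_sdiff_null hnull] at hlt
  exact hlt.le

theorem memC1Zero_of_tsupport_subset {N : ℕ} {Ω : Set (Euc N)} {φ : Euc N → ℝ}
    (hφ : ContDiff ℝ 1 φ) (hc : HasCompactSupport φ) (hsub : tsupport φ ⊆ Ω) :
    MemC1Zero Ω φ := by
  have hzero : ∀ x ∉ tsupport φ, φ x = 0 ∧ fderiv ℝ φ x = 0 := fun x hx =>
    ⟨image_eq_zero_of_notMem_tsupport hx,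
      image_eq_zero_of_notMem_tsupport fun h => hx (tsupport_fderiv_subset ℝ h)⟩
  refine ⟨hφ, fun x hx => hzero x fun h => hx (hsub h), tendsto_const_nhds.congr' ?_⟩
  filter_upwards [hc.isCompact.compl_mem_cocompact] with x hx
  simp [hzero x hx]

theorem rough_approximation_of_smooth_compactly_supported_general {N : ℕ} {Ω : Set (Euc N)}
    (hΩ : MeasurableSet Ω) {v : Euc N → Euc N} (hv : ContDiff ℝ 1 v) (hsupp : HasCompactSupport v)
    (hsub : tsupport v ⊆ Ω) {η ε ϑ : ℝ} (hη : 0 < η) (hε : 0 < ε) (hϑ : 0 < ϑ) :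
    ∃ (K : Set (Euc N)) (φ : Euc N → ℝ), IsCompact K ∧ K ⊆ Ω ∧ MemC1Zero Ω φ ∧
      μH[N] (Ω \ K) ≤ ENNReal.ofReal ε * μH[N] Ω ∧
      (∀ x ∈ Ω, |φ x| ≤ ϑ) ∧
      ∀ x ∈ K, ‖v x - ∇ φ x‖ ≤ η := by
  have : (μH[N] : Measure (Euc N)).IsAddHaarMeasure := by
    simpa using isAddHaarMeasure_hausdorffMeasure (E := Euc N)
  obtain ⟨C₀, hC₀⟩ := hsupp.exists_bound_of_continuous hv.continuous
  obtain ⟨C₁, hC₁⟩ := (hsupp.fderiv ℝ).exists_bound_of_continuous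
    (hv.continuous_fderiv one_ne_zero)
  obtain ⟨δ, hδ, hCδ⟩ := exists_pos_mul_lt (lt_min hϑ hη) (max C₀ C₁)
  obtain ⟨b, hb⟩ := exists_basis_sum_norm_lt (Euc N) hδ
  have hsmall {t : ℝ} (ht : t ≤ max C₀ C₁) (ht₀ : 0 ≤ t) : t * ∑ i, ‖b i‖ ≤ min ϑ η :=
    (mul_le_mul ht hb.le (by positivity) (ht₀.trans ht)).trans hCδ.le
  obtain ⟨K, hKΩ, hK, hdisj, hKμ⟩ := exists_isCompact_subset_disjoint_measure_sdiff_le_mul hΩ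
    (isClosed_latticeWalls b).measurableSet (measure_latticeWalls μH[N] b)
    (ENNReal.ofReal_pos.2 hε).ne'
  obtain ⟨φ, hφ, hφv, hφ₀, hφ₁⟩ := exists_contDiff_norm_sub_gradient_le_of_disjoint_latticeWalls b
    one_ne_zero hv hK.isClosed hdisj
  refine ⟨K, φ, hK, hKΩ, memC1Zero_of_tsupport_subset hφ (hsupp.mono hφv)
    ((closure_mono hφv).trans hsub), hKμ, fun x _ => ?_, fun x hx => ?_⟩
  · exact (hφ₀ x).trans <| (hsmall (le_max_of_le_left (hC₀ x)) (norm_nonneg _)).trans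
      (min_le_left _ _)
  · exact (hφ₁ x hx).trans <| (hsmall (le_max_of_le_right (hC₁ x)) (norm_nonneg _)).trans
      (min_le_right _ _)

/-- Step 2 reduction: the rough-approximation lemma for smooth, compactly supported
vector fields. For any open `Ω ⊆ ℝ^N` (`N ≥ 2`) with finite measure, any `C^∞` vector
field `v` whose support is a compact subset of `Ω`, and any positive `η, ε, ϑ`, there
exist a compact `K ⊆ Ω` and `φ ∈ C¹₀(Ω)` with `ℋ^N(Ω ∖ K) ≤ ε ℋ^N(Ω)`,
`sup_Ω |φ| ≤ ϑ`, and `|v − ∇φ| ≤ η` on `K`. -/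
theorem rough_approximation_of_smooth_compactly_supported (N : ℕ) (hN : 2 ≤ N)
    (Ω : Set (Euc N)) (hΩ : IsOpen Ω) (hfin : μH[N] Ω ≠ ⊤)
    (v : Euc N → Euc N) (hv : ContDiff ℝ (⊤ : ℕ∞) v)
    (hsupp : HasCompactSupport v) (hsub : tsupport v ⊆ Ω)
    (η ε ϑ : ℝ) (hη : 0 < η) (hε : 0 < ε) (hϑ : 0 < ϑ) :
    ∃ (K : Set (Euc N)) (φ : Euc N → ℝ), IsCompact K ∧ K ⊆ Ω ∧ MemC1Zero Ω φ ∧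
      μH[N] (Ω \ K) ≤ ENNReal.ofReal ε * μH[N] Ω ∧
      (∀ x ∈ Ω, |φ x| ≤ ϑ) ∧
      ∀ x ∈ K, ‖v x - gradient φ x‖ ≤ η := by
  exact rough_approximation_of_smooth_compactly_supported_general hΩ.measurableSet
    (hv.of_le (mod_cast le_top)) hsupp hsub hη hε hϑ
end
end

section
/- Let N ≥ 2 and let Ω ⊂ ℝ^N be an open set with finite N-dimensional Lebesgue measure. Let v : Ω → ℝ^N be a Borel measurable vector field. Then for all positive real numbers δ and κ there exist an open set A ⊆ Ω and a function φ̃ ∈ C¹₀(Ω) such that ℋ^N(A) ≤ δ·ℋ^N(Ω), sup_{x ∈ Ω} |φ̃(x)| ≤ κ, and v(x) = ∇φ̃(x) for every x ∈ Ω ∖ A. -/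
open MeasureTheory Filter

noncomputable section

/-!
By Lusin's theorem the field `v` may be taken continuous on a compact set. Disjoint small balls from
Besicovitch's covering theorem exhaust almost all of that set, and on each of them the field is
nearly constant, hence nearly the derivative of a linear map. These linear maps are cut off in thin
shells near the spheres; the derivative of their sum is at most `C * sup ‖v‖`, where `C` depends on
the measure of the shells but not on the radii, and the sum itself is as small as the radii. Repeat
with the residual field, prescribing its sup norm `M n` at step `n` once the constant `C n` is
known, so that `∑ C n * M n < ∞`: the potentials add up to a `C¹` function whose derivative is `v`
off the discarded sets.
-/

open Metric Set Topology
open scoped ENNReal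

section Lusin

variable {X Y : Type*} [TopologicalSpace X] [MeasurableSpace X] [BorelSpace X]
  [TopologicalSpace Y] [SecondCountableTopology Y] [MeasurableSpace Y] [OpensMeasurableSpace Y]
  {μ : Measure X} [μ.OuterRegular] {f : X → Y} {s : Set X} {ε : ℝ≥0∞}

theorem exists_measurableSet_continuousOn_of_measurable (hf : Measurable f)
    (hs : MeasurableSet s) (hμs : μ s ≠ ∞) (hε : ε ≠ 0) :
    ∃ A ⊆ s, MeasurableSet A ∧ μ (s \ A) < ε ∧ ContinuousOn f A := by
  have hbasis := TopologicalSpace.isBasis_countableBasis Y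
  let b := TopologicalSpace.countableBasis Y
  obtain ⟨e, he, hsum⟩ := ENNReal.exists_pos_sum_of_countable' hε b
  have hpre (o : b) : MeasurableSet (s ∩ f ⁻¹' o) :=
    hs.inter (hf (hbasis.isOpen o.2).measurableSet)
  choose O hO hOopen _ hOe using fun o : b =>
    (hpre o).exists_isOpen_sdiff_lt (measure_ne_top_of_subset inter_subset_left hμs) (he o).ne'
  refine ⟨s \ ⋃ o, O o \ (s ∩ f ⁻¹' o), sdiff_subset, hs.diff (.iUnion fun o =>
    (hOopen o).measurableSet.diff (hpre o)), ?_, fun x hx => ?_⟩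
  · calc μ (s \ (s \ ⋃ o, O o \ (s ∩ f ⁻¹' o))) ≤ μ (⋃ o, O o \ (s ∩ f ⁻¹' o)) := by
          rw [sdiff_sdiff_right_self]
          exact measure_mono inter_subset_right
      _ ≤ ∑' o, e o := (measure_iUnion_le _).trans (ENNReal.tsum_le_tsum fun o => (hOe o).le)
      _ < ε := hsum
  · refine hbasis.nhds_hasBasis.tendsto_right_iff.2 fun o ⟨ho, hxo⟩ => ?_
    have hxO : O ⟨o, ho⟩ ∈ 𝓝 x := (hOopen _).mem_nhds (hO ⟨o, ho⟩ ⟨hx.1, hxo⟩)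
    filter_upwards [self_mem_nhdsWithin, mem_nhdsWithin_of_mem_nhds hxO] with y hy hyO
    by_contra hyo
    exact hy.2 (mem_iUnion.2 ⟨⟨o, ho⟩, hyO, fun h => hyo h.2⟩)

/-- **Lusin's theorem**. -/
theorem exists_isCompact_continuousOn_of_aemeasurable [T2Space X] [μ.InnerRegularCompactLTTop]
    (hf : AEMeasurable f (μ.restrict s)) (hs : MeasurableSet s) (hμs : μ s ≠ ∞) (hε : ε ≠ 0) :
    ∃ K ⊆ s, IsCompact K ∧ μ (s \ K) ≤ ε ∧ ContinuousOn f K := by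
  have hε2 : ε / 2 ≠ 0 := (ENNReal.half_pos hε).ne'
  let T := toMeasurable (μ.restrict s) {x | f x ≠ hf.mk f x}
  have hTmeas : MeasurableSet T := measurableSet_toMeasurable _ _
  have hμT : μ (T ∩ s) = 0 := by
    rw [← Measure.restrict_apply hTmeas, measure_toMeasurable]
    exact hf.ae_eq_mk
  have hfT (x : X) (hx : x ∉ T) : f x = hf.mk f x :=
    by_contra fun h => hx (subset_toMeasurable _ _ h)
  obtain ⟨A, hAs, hA, hμA, hcont⟩ := exists_measurableSet_continuousOn_of_measurable
    hf.measurable_mk (hs.diff hTmeas) (measure_ne_top_of_subset sdiff_subset hμs) hε2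
  obtain ⟨K, hKA, hK, hμK⟩ := hA.exists_isCompact_sdiff_lt
    (measure_ne_top_of_subset (hAs.trans sdiff_subset) hμs) hε2
  refine ⟨K, (hKA.trans hAs).trans sdiff_subset, hK, ?_,
    (hcont.mono hKA).congr fun x hx => hfT x (hAs (hKA hx)).2⟩
  have hsub : s \ K ⊆ T ∩ s ∪ ((s \ T) \ A ∪ A \ K) := by grind
  calc μ (s \ K) ≤ μ (T ∩ s) + (μ ((s \ T) \ A) + μ (A \ K)) :=
        (measure_mono hsub).trans ((measure_union_le _ _).trans
          (add_le_add_right (measure_union_le _ _) _))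
    _ ≤ 0 + (ε / 2 + ε / 2) := by gcongr; exact hμT.le
    _ = ε := by rw [zero_add, ENNReal.add_halves]

end Lusin

section Covering

theorem measure_sdiff_iInter_le {X : Type*} [MeasurableSpace X] (μ : Measure X) (s : Set X)
    (K : ℕ → Set X) : μ (s \ ⋂ n, K n) ≤ μ (s \ K 0) + ∑' n, μ (K n \ K (n + 1)) := by
  have hsub : s \ ⋂ n, K n ⊆ (s \ K 0) ∪ ⋃ n, K n \ K (n + 1) := by
    rintro x ⟨hxs, hx⟩
    by_contra hcon
    simp only [mem_union, mem_iUnion, Set.mem_sdiff, not_or, not_exists, not_and, not_not] at hcon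
    exact hx (mem_iInter.2 fun n => n.rec (hcon.1 hxs) hcon.2)
  exact (measure_mono hsub).trans ((measure_union_le _ _).trans
    (add_le_add_right (measure_iUnion_le _) _))

theorem exists_finset_measure_sdiff_biUnion_lt {X ι : Type*} [MeasurableSpace X] {μ : Measure X}
    {K : Set X} (hμK : μ K ≠ ∞) {s : Set ι} (hs : s.Countable) {B : ι → Set X}
    (hB : ∀ i ∈ s, MeasurableSet (B i)) {ε : ℝ≥0∞} (h : μ (K \ ⋃ i ∈ s, B i) < ε) :
    ∃ S : Finset ι, ↑S ⊆ s ∧ μ (K \ ⋃ i ∈ S, B i) < ε := by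
  classical
  have := hs.to_subtype
  let rest (F : Finset s) : Set X := (⋃ i ∈ F, B i)ᶜ
  have hrest (F : Finset s) : MeasurableSet (rest F) :=
    (F.measurableSet_biUnion fun i _ => hB i i.2).compl
  have hanti : Antitone rest := fun F G hFG =>
    compl_subset_compl.2 (biUnion_subset_biUnion_left hFG)
  have hinter : ⋂ F, rest F = (⋃ i ∈ s, B i)ᶜ := by
    simp only [rest, ← compl_iUnion]
    rw [← iUnion_eq_iUnion_finset (fun i : s => B i), biUnion_eq_iUnion]
  have hlim := tendsto_measure_iInter_atTop (μ := μ.restrict K)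
    (fun F => (hrest F).nullMeasurableSet) hanti
    ⟨∅, measure_ne_top_of_subset (subset_univ _) (by rwa [Measure.restrict_apply_univ])⟩
  have hcompl (t : Set X) (ht : MeasurableSet t) : μ.restrict K tᶜ = μ (K \ t) := by
    rw [Measure.restrict_apply ht.compl, inter_comm, sdiff_eq]
  rw [hinter, hcompl _ (.biUnion hs hB)] at hlim
  obtain ⟨F, hF⟩ := (hlim.eventually_lt_const h).exists
  refine ⟨F.map (Function.Embedding.subtype _), by simp, ?_⟩
  rw [Function.comp_apply, hcompl _ (F.measurableSet_biUnion fun i _ => hB i i.2)] at hF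
  simpa using hF

theorem exists_finset_pairwiseDisjoint_closedBall_measure_sdiff_lt {X : Type*} [MetricSpace X]
    [SecondCountableTopology X] [MeasurableSpace X] [OpensMeasurableSpace X]
    [HasBesicovitchCovering X] (μ : Measure X) [SFinite μ] {K : Set X} (hμK : μ K ≠ ∞)
    {R : ℝ} (hR : 0 < R) {ε : ℝ≥0∞} (hε : ε ≠ 0) :
    ∃ (S : Finset X) (r : X → ℝ), ↑S ⊆ K ∧ (∀ x ∈ S, 0 < r x ∧ r x ≤ R) ∧
      (S : Set X).PairwiseDisjoint (fun x => closedBall x (r x)) ∧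
      μ (K \ ⋃ x ∈ S, closedBall x (r x)) < ε := by
  obtain ⟨s, r, hs, hsK, hr, hcover, hdisj⟩ :=
    Besicovitch.exists_disjoint_closedBall_covering_ae μ (fun _ => univ) K
      (fun x _ δ hδ => ⟨δ / 2, mem_univ _, half_pos hδ, half_lt_self hδ⟩) (fun _ => R) fun _ _ => hR
  obtain ⟨S, hSs, hS⟩ := exists_finset_measure_sdiff_biUnion_lt hμK hs
    (fun _ _ => measurableSet_closedBall) (hcover.trans_lt (pos_iff_ne_zero.2 hε))
  exact ⟨S, r, hSs.trans hsK, fun x hx => ⟨(hr x (hSs hx)).2.1, (hr x (hSs hx)).2.2.le⟩,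
    hdisj.subset hSs, hS⟩

variable {E : Type*} [NormedAddCommGroup E] [NormedSpace ℝ E] [FiniteDimensional ℝ E]
  [MeasurableSpace E] [BorelSpace E] (μ : Measure E) [μ.IsAddHaarMeasure]

theorem addHaar_closedBall_sdiff_closedBall_mul (x : E) {t r : ℝ} (ht₀ : 0 ≤ t) (ht₁ : t ≤ 1)
    (hr : 0 ≤ r) : μ (closedBall x r \ closedBall x (t * r)) =
      ENNReal.ofReal (1 - t ^ Module.finrank ℝ E) * μ (closedBall x r) := by
  rw [measure_sdiff (closedBall_subset_closedBall (mul_le_of_le_one_left hr ht₁))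
      measurableSet_closedBall.nullMeasurableSet measure_closedBall_lt_top.ne,
    Measure.addHaar_closedBall_mul μ x ht₀ hr, Measure.addHaar_closedBall_center μ x,
    ENNReal.ofReal_sub _ (by positivity), ENNReal.ofReal_one, ENNReal.sub_mul
      fun _ _ => measure_closedBall_lt_top.ne, one_mul]

theorem addHaar_biUnion_closedBall_sdiff_closedBall_mul_le {U : Set E} {S : Finset E} {r : E → ℝ}
    (hdisj : (S : Set E).PairwiseDisjoint fun x => closedBall x (r x))
    (hSU : ∀ x ∈ S, closedBall x (r x) ⊆ U) (hr : ∀ x ∈ S, 0 ≤ r x) {t : ℝ} (ht₀ : 0 ≤ t)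
    (ht₁ : t ≤ 1) : μ (⋃ x ∈ S, closedBall x (r x) \ closedBall x (t * r x)) ≤
      ENNReal.ofReal (1 - t ^ Module.finrank ℝ E) * μ U := by
  calc μ (⋃ x ∈ S, closedBall x (r x) \ closedBall x (t * r x))
      ≤ ∑ x ∈ S, μ (closedBall x (r x) \ closedBall x (t * r x)) :=
        measure_biUnion_finset_le _ _
    _ = ENNReal.ofReal (1 - t ^ Module.finrank ℝ E) * μ (⋃ x ∈ S, closedBall x (r x)) := by
        rw [measure_biUnion_finset hdisj fun x _ => measurableSet_closedBall, Finset.mul_sum]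
        exact Finset.sum_congr rfl fun x hx =>
          addHaar_closedBall_sdiff_closedBall_mul μ x ht₀ ht₁ (hr x hx)
    _ ≤ ENNReal.ofReal (1 - t ^ Module.finrank ℝ E) * μ U := by
        gcongr
        exact iUnion₂_subset hSU

theorem exists_ofReal_one_sub_pow_mul_lt (n : ℕ) {m ε : ℝ≥0∞} (hm : m ≠ ∞) (hε : ε ≠ 0) :
    ∃ t ∈ Ioo (0 : ℝ) 1, ENNReal.ofReal (1 - t ^ n) * m < ε := by
  have hcont : Continuous fun t : ℝ => ENNReal.ofReal (1 - t ^ n) * m :=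
    (ENNReal.continuous_mul_const hm).comp (ENNReal.continuous_ofReal.comp (by fun_prop))
  have hlim : Tendsto (fun t : ℝ => ENNReal.ofReal (1 - t ^ n) * m) (𝓝[<] 1) (𝓝 0) := by
    simpa using (hcont.tendsto 1).mono_left nhdsWithin_le_nhds
  have hIoo : ∀ᶠ t in 𝓝[<] (1 : ℝ), t ∈ Ioo 0 1 := Ioo_mem_nhdsLT one_pos
  exact (hIoo.and (hlim.eventually_lt_const (pos_iff_ne_zero.2 hε))).exists

theorem exists_finset_measure_sdiff_biUnion_closedBall_mul_le {U : Set E} (hμU : μ U ≠ ∞)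
    {ε : ℝ≥0∞} (hε : ε ≠ 0) :
    ∃ t ∈ Ioo (0 : ℝ) 1, ∀ K ⊆ U, ∀ R > 0, (∀ x ∈ K, closedBall x R ⊆ U) →
      ∃ (S : Finset E) (r : E → ℝ), ↑S ⊆ K ∧ (∀ x ∈ S, 0 < r x ∧ r x ≤ R) ∧
        (S : Set E).PairwiseDisjoint (fun x => closedBall x (r x)) ∧
        μ (K \ ⋃ x ∈ S, closedBall x (t * r x)) ≤ ε := by
  have hε2 : ε / 2 ≠ 0 := (ENNReal.half_pos hε).ne'
  obtain ⟨t, ht, htε⟩ := exists_ofReal_one_sub_pow_mul_lt (Module.finrank ℝ E) hμU hε2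
  refine ⟨t, ht, fun K hKU R hR hKR => ?_⟩
  obtain ⟨S, r, hSK, hr, hdisj, hcover⟩ :=
    exists_finset_pairwiseDisjoint_closedBall_measure_sdiff_lt μ
      (measure_ne_top_of_subset hKU hμU) hR hε2
  refine ⟨S, r, hSK, hr, hdisj, ?_⟩
  have hSU (x : E) (hx : x ∈ S) : closedBall x (r x) ⊆ U :=
    (closedBall_subset_closedBall (hr x hx).2).trans (hKR x (hSK hx))
  have hsub : K \ ⋃ x ∈ S, closedBall x (t * r x) ⊆ (K \ ⋃ x ∈ S, closedBall x (r x)) ∪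
      ⋃ x ∈ S, closedBall x (r x) \ closedBall x (t * r x) := by
    rintro y ⟨hyK, hy⟩
    simp only [mem_iUnion, not_exists] at hy
    by_cases hyS : y ∈ ⋃ x ∈ S, closedBall x (r x)
    · obtain ⟨x, hx, hyx⟩ := mem_iUnion₂.1 hyS
      exact .inr (mem_biUnion hx ⟨hyx, hy x hx⟩)
    · exact .inl ⟨hyK, hyS⟩
  calc μ (K \ ⋃ x ∈ S, closedBall x (t * r x))
      ≤ μ (K \ ⋃ x ∈ S, closedBall x (r x)) +
        μ (⋃ x ∈ S, closedBall x (r x) \ closedBall x (t * r x)) :=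
        (measure_mono hsub).trans (measure_union_le _ _)
    _ ≤ ε / 2 + ε / 2 := by
        gcongr
        exact (addHaar_biUnion_closedBall_sdiff_closedBall_mul_le μ hdisj hSU
          (fun x hx => (hr x hx).1.le) ht.1.le ht.2.le).trans htε.le
    _ = ε := ENNReal.add_halves ε

end Covering

section Cutoff

variable {E F : Type*} [NormedAddCommGroup E] [NormedSpace ℝ E] [NormedAddCommGroup F]
  [NormedSpace ℝ F] {C t r M : ℝ} {a : E →L[ℝ] F} {c : E} {ψ : E → F}

/-- `ψ` is a potential of the constant field `a` on the ball of radius `t * r` around `c`, cut off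
outside the ball of radius `r`. The constant `C` is meant to depend on the ratio `t` only. -/
structure IsCutoffPotential (C t : ℝ) (a : E →L[ℝ] F) (c : E) (r : ℝ) (ψ : E → F) : Prop where
  contDiff : ContDiff ℝ 1 ψ
  tsupport_subset : tsupport ψ ⊆ closedBall c r
  norm_le (x : E) : ‖ψ x‖ ≤ ‖a‖ * r
  norm_fderiv_le (x : E) : ‖fderiv ℝ ψ x‖ ≤ C * ‖a‖
  fderiv_eq (x : E) : x ∈ closedBall c (t * r) → fderiv ℝ ψ x = a

theorem fderiv_const_smul_comp_inv_smul_sub (hr : r ≠ 0) (ψ : E → F) (c x : E) :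
    fderiv ℝ (fun y => r • ψ (r⁻¹ • (y - c))) x = fderiv ℝ ψ (r⁻¹ • (x - c)) := by
  change fderiv ℝ (r • fun y => ψ (r⁻¹ • (y - c))) x = _
  rw [fderiv_const_smul_field, Pi.smul_apply, fderiv_comp_sub (f := fun y => ψ (r⁻¹ • y)),
    fderiv_comp_smul, smul_inv_smul₀ hr]

theorem IsCutoffPotential.rescale (h : IsCutoffPotential C t a 0 1 ψ) (c : E) (hr : 0 < r) :
    IsCutoffPotential C t a c r fun x => r • ψ (r⁻¹ • (x - c)) := by
  have hmem (x : E) (ρ : ℝ) : r⁻¹ • (x - c) ∈ closedBall 0 ρ ↔ x ∈ closedBall c (ρ * r) := by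
    rw [mem_closedBall_zero_iff, mem_closedBall_iff_norm, norm_smul, norm_inv,
      Real.norm_of_nonneg hr.le, inv_mul_le_iff₀ hr, mul_comm]
  refine ⟨?_, ?_, fun x => ?_, fun x => ?_, fun x hx => ?_⟩
  · exact (h.contDiff.comp (by fun_prop : ContDiff ℝ 1 fun x => r⁻¹ • (x - c))).const_smul r
  · refine closure_minimal (fun x hx => ?_) isClosed_closedBall
    rw [← one_mul r, ← hmem]
    exact h.tsupport_subset (subset_tsupport _ (right_ne_zero_of_smul hx))
  · calc ‖r • ψ (r⁻¹ • (x - c))‖ = r * ‖ψ (r⁻¹ • (x - c))‖ := by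
          rw [norm_smul, Real.norm_of_nonneg hr.le]
      _ ≤ r * (‖a‖ * 1) := by gcongr; exact h.norm_le _
      _ = ‖a‖ * r := by ring
  · rw [fderiv_const_smul_comp_inv_smul_sub hr.ne']
    exact h.norm_fderiv_le _
  · rw [fderiv_const_smul_comp_inv_smul_sub hr.ne']
    exact h.fderiv_eq _ (by rwa [mul_one, hmem])

theorem isCutoffPotential_smul [HasContDiffBump E] (f : ContDiffBump (0 : E)) (hf : f.rOut = 1)
    (ht : t < f.rIn) (hM : ∀ x, ‖fderiv ℝ f x‖ ≤ M) (a : E →L[ℝ] F) :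
    IsCutoffPotential (1 + M) t a 0 1 fun x => f x • a x := by
  have hfdiff : ContDiff ℝ 1 f := f.contDiff
  have hsupp : tsupport (fun x => f x • a x) ⊆ closedBall 0 1 :=
    (tsupport_smul_subset_left _ _).trans (by rw [f.tsupport_eq, hf])
  have hnorm (x : E) (hx : x ∈ closedBall 0 1) : ‖a x‖ ≤ ‖a‖ :=
    a.unit_le_opNorm x (mem_closedBall_zero_iff.1 hx)
  have hM₀ : 0 ≤ M := (norm_nonneg _).trans (hM 0)
  refine ⟨hfdiff.smul a.contDiff, hsupp, fun x => ?_, fun x => ?_, fun x hx => ?_⟩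
  · by_cases hx : x ∈ closedBall 0 1
    · calc ‖f x • a x‖ = f x * ‖a x‖ := by rw [norm_smul, Real.norm_of_nonneg f.nonneg]
        _ ≤ 1 * ‖a‖ := by gcongr; exacts [f.le_one, hnorm x hx]
        _ = ‖a‖ * 1 := mul_comm _ _
    · rw [image_eq_zero_of_notMem_tsupport fun h => hx (hsupp h), norm_zero]
      positivity
  · by_cases hx : x ∈ closedBall 0 1
    · rw [fderiv_fun_smul (hfdiff.differentiable one_ne_zero x) a.differentiableAt, a.fderiv]
      calc ‖f x • a + (fderiv ℝ f x).smulRight (a x)‖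
          ≤ f x * ‖a‖ + ‖fderiv ℝ f x‖ * ‖a x‖ := by
            refine (norm_add_le _ _).trans_eq ?_
            rw [norm_smul, Real.norm_of_nonneg f.nonneg, ContinuousLinearMap.norm_smulRight_apply]
        _ ≤ 1 * ‖a‖ + M * ‖a‖ := by gcongr; exacts [f.le_one, hM x, hnorm x hx]
        _ = (1 + M) * ‖a‖ := by ring
    · rw [fderiv_of_notMem_tsupport ℝ fun h => hx (hsupp h), norm_zero]
      positivity
  · have hball : x ∈ ball 0 f.rIn := closedBall_subset_ball (by rwa [mul_one]) hx
    have heq : (fun y => f y • a y) =ᶠ[𝓝 x] a := by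
      filter_upwards [f.eventuallyEq_one_of_mem_ball hball] with y hy
      rw [hy, Pi.one_apply, one_smul]
    rw [heq.fderiv_eq, a.fderiv]

theorem exists_forall_isCutoffPotential [FiniteDimensional ℝ E] (ht : t ∈ Ioo (0 : ℝ) 1) :
    ∃ C : ℝ, 1 ≤ C ∧ ∀ (a : E →L[ℝ] F) (c : E) (r : ℝ), 0 < r →
      ∃ ψ, IsCutoffPotential C t a c r ψ := by
  obtain ⟨s, hts, hs₁⟩ := exists_between ht.2
  let f : ContDiffBump (0 : E) := ⟨s, 1, ht.1.trans hts, hs₁⟩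
  obtain ⟨M, hM⟩ := (f.contDiff.continuous_fderiv one_ne_zero).bounded_above_of_compact_support
    (f.hasCompactSupport.fderiv ℝ)
  exact ⟨1 + M, le_add_of_nonneg_right ((norm_nonneg _).trans (hM 0)), fun a c r hr =>
    ⟨_, (isCutoffPotential_smul f rfl hts hM a).rescale c hr⟩⟩

end Cutoff

section Gluing

theorem sum_eventuallyEq_of_notMem_tsupport {ι X M : Type*} [TopologicalSpace X] [AddCommMonoid M]
    {S : Finset ι} {ψ : ι → X → M} {i : ι} (hi : i ∈ S) {x : X}
    (hx : ∀ j ∈ S, j ≠ i → x ∉ tsupport (ψ j)) : (fun y => ∑ j ∈ S, ψ j y) =ᶠ[𝓝 x] ψ i := by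
  have hzero : ∀ᶠ y in 𝓝 x, ∀ j ∈ S, j ≠ i → ψ j y = 0 := by
    simp only [Finset.eventually_all, eventually_imp_distrib_left]
    exact fun j hj hji => notMem_tsupport_iff_eventuallyEq.1 (hx j hj hji)
  filter_upwards [hzero] with y hy
  exact Finset.sum_eq_single_of_mem i hi hy

theorem tsupport_sum_subset {ι X M : Type*} [TopologicalSpace X] [AddCommMonoid M] (S : Finset ι)
    (ψ : ι → X → M) : tsupport (fun y => ∑ i ∈ S, ψ i y) ⊆ ⋃ i ∈ S, tsupport (ψ i) := by
  refine closure_minimal (fun y hy => ?_)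
    (S.finite_toSet.isClosed_biUnion fun i _ => isClosed_tsupport _)
  obtain ⟨i, hi, hiy⟩ := Finset.exists_ne_zero_of_sum_ne_zero hy
  exact mem_biUnion hi (subset_tsupport _ hiy)

variable {E F : Type*} [NormedAddCommGroup E] [NormedSpace ℝ E] [NormedAddCommGroup F]
  [NormedSpace ℝ F] {C t κ G : ℝ} {S : Finset E} {r : E → ℝ} {a : E → E →L[ℝ] F} {ψ : E → E → F}

theorem sum_isCutoffPotential_eventuallyEq
    (hdisj : (S : Set E).PairwiseDisjoint fun x => closedBall x (r x))
    (hψ : ∀ x ∈ S, IsCutoffPotential C t (a x) x (r x) (ψ x)) {x y : E} (hx : x ∈ S)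
    (hy : y ∈ closedBall x (r x)) : (fun z => ∑ x ∈ S, ψ x z) =ᶠ[𝓝 y] ψ x :=
  sum_eventuallyEq_of_notMem_tsupport hx fun x' hx' hne h =>
    disjoint_left.1 (hdisj hx' hx hne) ((hψ x' hx').tsupport_subset h) hy

theorem tsupport_sum_isCutoffPotential_subset
    (hψ : ∀ x ∈ S, IsCutoffPotential C t (a x) x (r x) (ψ x)) :
    tsupport (fun z => ∑ x ∈ S, ψ x z) ⊆ ⋃ x ∈ S, closedBall x (r x) :=
  (tsupport_sum_subset S ψ).trans (iUnion₂_mono fun x hx => (hψ x hx).tsupport_subset)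

theorem norm_sum_isCutoffPotential_le
    (hdisj : (S : Set E).PairwiseDisjoint fun x => closedBall x (r x))
    (hψ : ∀ x ∈ S, IsCutoffPotential C t (a x) x (r x) (ψ x)) (hκ : 0 ≤ κ)
    (haκ : ∀ x ∈ S, ‖a x‖ * r x ≤ κ) (y : E) : ‖∑ x ∈ S, ψ x y‖ ≤ κ := by
  by_cases hy : y ∈ ⋃ x ∈ S, closedBall x (r x)
  · obtain ⟨x, hx, hyx⟩ := mem_iUnion₂.1 hy
    rw [(sum_isCutoffPotential_eventuallyEq hdisj hψ hx hyx).eq_of_nhds]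
    exact ((hψ x hx).norm_le y).trans (haκ x hx)
  · rw [image_eq_zero_of_notMem_tsupport
      fun h => hy (tsupport_sum_isCutoffPotential_subset hψ h), norm_zero]
    exact hκ

theorem norm_fderiv_sum_isCutoffPotential_le
    (hdisj : (S : Set E).PairwiseDisjoint fun x => closedBall x (r x))
    (hψ : ∀ x ∈ S, IsCutoffPotential C t (a x) x (r x) (ψ x)) (hG : 0 ≤ G)
    (haG : ∀ x ∈ S, C * ‖a x‖ ≤ G) (y : E) : ‖fderiv ℝ (fun z => ∑ x ∈ S, ψ x z) y‖ ≤ G := by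
  by_cases hy : y ∈ ⋃ x ∈ S, closedBall x (r x)
  · obtain ⟨x, hx, hyx⟩ := mem_iUnion₂.1 hy
    rw [(sum_isCutoffPotential_eventuallyEq hdisj hψ hx hyx).fderiv_eq]
    exact ((hψ x hx).norm_fderiv_le y).trans (haG x hx)
  · rw [fderiv_of_notMem_tsupport ℝ
      fun h => hy (tsupport_sum_isCutoffPotential_subset hψ h), norm_zero]
    exact hG

end Gluing

section Correction

variable {E F : Type*} [NormedAddCommGroup E] [NormedSpace ℝ E] [NormedAddCommGroup F]
  [NormedSpace ℝ F] [MeasurableSpace E] {μ : Measure E} {U K : Set E} {w : E → E →L[ℝ] F}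

/-- `φ` is a potential supported in `U`, bounded by `κ` and with derivative bounded by `G`, whose
derivative is `η`-close to the field `w` on a compact part `K'` of `K` that misses at most measure
`ε` of `K`. -/
structure IsCorrection (μ : Measure E) (U : Set E) (ε : ℝ≥0∞) (κ G η : ℝ) (K : Set E)
    (w : E → E →L[ℝ] F) (K' : Set E) (φ : E → F) : Prop where
  subset : K' ⊆ K
  isCompact : IsCompact K'
  measure_sdiff_le : μ (K \ K') ≤ ε
  contDiff : ContDiff ℝ 1 φ
  tsupport_subset : tsupport φ ⊆ U
  norm_le (x : E) : ‖φ x‖ ≤ κ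
  norm_fderiv_le (x : E) : ‖fderiv ℝ φ x‖ ≤ G
  norm_sub_fderiv_le (x : E) : x ∈ K' → ‖w x - fderiv ℝ φ x‖ ≤ η

theorem exists_radius_closedBall_subset_dist_le {X Y : Type*} [PseudoMetricSpace X]
    [PseudoMetricSpace Y] {K U : Set X} {f : X → Y} (hK : IsCompact K) (hU : IsOpen U)
    (hKU : K ⊆ U) (hf : ContinuousOn f K) {η R₀ : ℝ} (hη : 0 < η) (hR₀ : 0 < R₀) :
    ∃ R ∈ Ioc 0 R₀, ∀ x ∈ K, closedBall x R ⊆ U ∧ ∀ y ∈ K ∩ closedBall x R,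
      dist (f y) (f x) ≤ η := by
  obtain ⟨R₁, hR₁, hR₁U⟩ := hK.exists_cthickening_subset_open hU hKU
  obtain ⟨R₂, hR₂, hR₂f⟩ := uniformContinuousOn_iff_le.1
    (hK.uniformContinuousOn_of_continuous hf) η hη
  refine ⟨min R₀ (min R₁ R₂), ⟨by positivity, min_le_left _ _⟩, fun x hx => ⟨?_, ?_⟩⟩
  · calc closedBall x (min R₀ (min R₁ R₂)) ⊆ closedBall x R₁ :=
          closedBall_subset_closedBall ((min_le_right _ _).trans (min_le_left _ _))
      _ ⊆ cthickening R₁ K := closedBall_subset_cthickening hx R₁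
      _ ⊆ U := hR₁U
  · exact fun y hy => hR₂f y hy.1 x hx
      (hy.2.trans ((min_le_right _ _).trans (min_le_right _ _)))

theorem isCorrection_sum {S : Finset E} {r : E → ℝ} {ψ : E → E → F} {C t κ G η : ℝ}
    {ε : ℝ≥0∞} (hK : IsCompact K) (ht : t ≤ 1) (hr : ∀ x ∈ S, 0 ≤ r x)
    (hdisj : (S : Set E).PairwiseDisjoint fun x => closedBall x (r x))
    (hψ : ∀ x ∈ S, IsCutoffPotential C t (w x) x (r x) (ψ x))
    (hμ : μ (K \ ⋃ x ∈ S, closedBall x (t * r x)) ≤ ε) (hSU : ∀ x ∈ S, closedBall x (r x) ⊆ U)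
    (hκ : 0 ≤ κ) (hwκ : ∀ x ∈ S, ‖w x‖ * r x ≤ κ) (hG : 0 ≤ G) (hwG : ∀ x ∈ S, C * ‖w x‖ ≤ G)
    (hη : ∀ x ∈ S, ∀ y ∈ K ∩ closedBall x (r x), ‖w y - w x‖ ≤ η) :
    IsCorrection μ U ε κ G η K w (K ∩ ⋃ x ∈ S, closedBall x (t * r x))
      fun y => ∑ x ∈ S, ψ x y where
  subset := inter_subset_left
  isCompact := hK.inter_right (S.finite_toSet.isClosed_biUnion fun _ _ => isClosed_closedBall)
  measure_sdiff_le := by rwa [sdiff_self_inter]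
  contDiff := ContDiff.sum fun x hx => (hψ x hx).contDiff
  tsupport_subset := (tsupport_sum_isCutoffPotential_subset hψ).trans (iUnion₂_subset hSU)
  norm_le := norm_sum_isCutoffPotential_le hdisj hψ hκ hwκ
  norm_fderiv_le := norm_fderiv_sum_isCutoffPotential_le hdisj hψ hG hwG
  norm_sub_fderiv_le := by
    rintro y ⟨hyK, hy⟩
    obtain ⟨x, hx, hyx⟩ := mem_iUnion₂.1 hy
    have hyr : y ∈ closedBall x (r x) :=
      closedBall_subset_closedBall (mul_le_of_le_one_left (hr x hx) ht) hyx
    rw [(sum_isCutoffPotential_eventuallyEq hdisj hψ hx hyr).fderiv_eq, (hψ x hx).fderiv_eq y hyx]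
    exact hη x hx y ⟨hyK, hyr⟩

variable [FiniteDimensional ℝ E] [BorelSpace E] [μ.IsAddHaarMeasure]

theorem exists_forall_exists_isCorrection (hU : IsOpen U) (hμU : μ U ≠ ∞) {ε : ℝ≥0∞}
    (hε : ε ≠ 0) :
    ∃ C : ℝ, 1 ≤ C ∧ ∀ (K : Set E) (w : E → E →L[ℝ] F) (M η κ : ℝ), IsCompact K → K ⊆ U →
      ContinuousOn w K → 0 < M → (∀ x ∈ K, ‖w x‖ ≤ M) → 0 < η → 0 < κ →
      ∃ K' φ, IsCorrection μ U ε κ (C * M) η K w K' φ := by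
  obtain ⟨t, ht, hcover⟩ := exists_finset_measure_sdiff_biUnion_closedBall_mul_le μ hμU hε
  obtain ⟨C, hC₁, hC⟩ := exists_forall_isCutoffPotential (E := E) (F := F) ht
  refine ⟨C, hC₁, fun K w M η κ hK hKU hw hM hwM hη hκ => ?_⟩
  obtain ⟨R, ⟨hR, hRκ⟩, hRK⟩ :=
    exists_radius_closedBall_subset_dist_le hK hU hKU hw hη (div_pos hκ hM)
  obtain ⟨S, r, hSK, hr, hdisj, hμ⟩ := hcover K hKU R hR fun x hx => (hRK x hx).1
  have hball (x : E) (hx : x ∈ S) : closedBall x (r x) ⊆ closedBall x R :=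
    closedBall_subset_closedBall (hr x hx).2
  choose! ψ hψ using fun x (hx : x ∈ S) => hC (w x) x (r x) (hr x hx).1
  refine ⟨_, _, isCorrection_sum hK ht.2.le (fun x hx => (hr x hx).1.le) hdisj hψ hμ
    (fun x hx => (hball x hx).trans (hRK x (hSK hx)).1) hκ.le (fun x hx => ?_) (by positivity)
    (fun x hx => by gcongr; exact hwM x (hSK hx)) fun x hx y hy => ?_⟩
  · calc ‖w x‖ * r x ≤ M * (κ / M) :=
          mul_le_mul (hwM x (hSK hx)) ((hr x hx).2.trans hRκ) (hr x hx).1.le hM.le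
      _ = κ := mul_div_cancel₀ κ hM.ne'
  · rw [← dist_eq_norm]
    exact (hRK x (hSK hx)).2 y ⟨hy.1, hball x hx hy.2⟩

end Correction

section Iteration

variable {E F : Type*} [NormedAddCommGroup E] [NormedSpace ℝ E] [NormedAddCommGroup F]
  [NormedSpace ℝ F] [MeasurableSpace E] {μ : Measure E} {U K₀ : Set E} {v : E → E →L[ℝ] F}

theorem exists_seq_isCorrection_of_forall_exists {ε : ℕ → ℝ≥0∞} {κ G M : ℕ → ℝ}
    (hstep : ∀ n K (w : E → E →L[ℝ] F), IsCompact K → K ⊆ U → ContinuousOn w K →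
      (∀ x ∈ K, ‖w x‖ ≤ M n) → ∃ K' φ, IsCorrection μ U (ε n) (κ n) (G n) (M (n + 1)) K w K' φ)
    (hK₀ : IsCompact K₀) (hK₀U : K₀ ⊆ U) (hv : ContinuousOn v K₀) (hvM : ∀ x ∈ K₀, ‖v x‖ ≤ M 0) :
    ∃ (K : ℕ → Set E) (φ : ℕ → E → F), K 0 = K₀ ∧
      ∀ n, IsCorrection μ U (ε n) (κ n) (G n) (M (n + 1)) (K n)
        (fun x => v x - ∑ i ∈ Finset.range n, fderiv ℝ (φ i) x) (K (n + 1)) (φ n) := by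
  choose! K' φ hcorr using hstep
  let state (n : ℕ) : Set E × (E → E →L[ℝ] F) :=
    n.rec (K₀, v) fun n p => (K' n p.1 p.2, fun x => p.2 x - fderiv ℝ (φ n p.1 p.2) x)
  let K (n : ℕ) : Set E := (state n).1
  let w (n : ℕ) : E → E →L[ℝ] F := (state n).2
  have hw (n : ℕ) : w n = fun x => v x - ∑ i ∈ Finset.range n, fderiv ℝ (φ i (K i) (w i)) x := by
    induction n with
    | zero => simp [w, state]
    | succ n ih =>
      funext x
      rw [Finset.sum_range_succ, ← sub_sub, ← congrFun ih x]
  have hinv (n : ℕ) : IsCompact (K n) ∧ K n ⊆ U ∧ ContinuousOn (w n) (K n) ∧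
      ∀ x ∈ K n, ‖w n x‖ ≤ M n := by
    induction n with
    | zero => exact ⟨hK₀, hK₀U, hv, hvM⟩
    | succ n ih =>
      obtain ⟨hK, hKU, hwc, hwM⟩ := ih
      have h := hcorr n (K n) (w n) hK hKU hwc hwM
      exact ⟨h.isCompact, h.subset.trans hKU, (hwc.mono h.subset).sub
        (h.contDiff.continuous_fderiv one_ne_zero).continuousOn, h.norm_sub_fderiv_le⟩
  refine ⟨K, fun n => φ n (K n) (w n), rfl, fun n => ?_⟩
  rw [← hw n]
  exact hcorr n (K n) (w n) (hinv n).1 (hinv n).2.1 (hinv n).2.2.1 (hinv n).2.2.2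

theorem exists_seq_isCorrection [FiniteDimensional ℝ E] [BorelSpace E] [μ.IsAddHaarMeasure]
    (hU : IsOpen U) (hμU : μ U ≠ ∞) (hK₀ : IsCompact K₀) (hK₀U : K₀ ⊆ U)
    (hv : ContinuousOn v K₀) {ε : ℕ → ℝ≥0∞} (hε : ∀ n, ε n ≠ 0) {κ : ℕ → ℝ} (hκ : ∀ n, 0 < κ n) :
    ∃ (K : ℕ → Set E) (φ : ℕ → E → F) (G η : ℕ → ℝ), K 0 = K₀ ∧ Summable G ∧
      Tendsto η atTop (𝓝 0) ∧ ∀ n, IsCorrection μ U (ε n) (κ n) (G n) (η n) (K n)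
        (fun x => v x - ∑ i ∈ Finset.range n, fderiv ℝ (φ i) x) (K (n + 1)) (φ n) := by
  obtain ⟨B, hB⟩ := hK₀.exists_bound_of_continuousOn hv
  choose C hC₁ hC using fun n =>
    exists_forall_exists_isCorrection (F := F) hU hμU (hε n)
  have hC₀ (n : ℕ) : 0 < C n := one_pos.trans_le (hC₁ n)
  let G (n : ℕ) : ℝ := C 0 * (|B| + 1) / 2 ^ n
  let M (n : ℕ) : ℝ := G n / C n
  have hG (n : ℕ) : 0 < G n := by have := hC₀ 0; positivity
  have hM (n : ℕ) : 0 < M n := div_pos (hG n) (hC₀ n)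
  have hGsum : Summable G := by
    simpa only [G, div_eq_mul_inv, inv_pow] using
      (summable_geometric_of_lt_one (by norm_num) (by norm_num : (2⁻¹ : ℝ) < 1)).mul_left
        (C 0 * (|B| + 1))
  have hMlim : Tendsto M atTop (𝓝 0) :=
    squeeze_zero (fun n => (hM n).le) (fun n => div_le_self (hG n).le (hC₁ n))
      hGsum.tendsto_atTop_zero
  have hvM (x : E) (hx : x ∈ K₀) : ‖v x‖ ≤ M 0 :=
    calc ‖v x‖ ≤ |B| + 1 := by linarith [hB x hx, le_abs_self B]
      _ = M 0 := by simp only [M, G]; field_simp [(hC₀ 0).ne']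
  obtain ⟨K, φ, hK, hφ⟩ := exists_seq_isCorrection_of_forall_exists (M := M) (G := G)
    (fun n K w hKc hKU hw hwM => by
      simpa only [M, mul_div_cancel₀ (G n) (hC₀ n).ne'] using
        hC n K w (M n) (M (n + 1)) (κ n) hKc hKU hw (hM n) hwM (hM (n + 1)) (hκ n))
    hK₀ hK₀U hv hvM
  exact ⟨K, φ, G, fun n => M (n + 1), hK, hGsum, (tendsto_add_atTop_iff_nat 1).2 hMlim, hφ⟩

theorem tendsto_sum_fderiv_of_forall_isCorrection {ε : ℕ → ℝ≥0∞} {κ G η : ℕ → ℝ}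
    {K : ℕ → Set E} {φ : ℕ → E → F} (hη : Tendsto η atTop (𝓝 0))
    (hφ : ∀ n, IsCorrection μ U (ε n) (κ n) (G n) (η n) (K n)
      (fun x => v x - ∑ i ∈ Finset.range n, fderiv ℝ (φ i) x) (K (n + 1)) (φ n))
    {x : E} (hx : x ∈ ⋂ n, K n) :
    Tendsto (fun n => ∑ i ∈ Finset.range n, fderiv ℝ (φ i) x) atTop (𝓝 (v x)) := by
  refine (tendsto_add_atTop_iff_nat 1).1 (tendsto_iff_norm_sub_tendsto_zero.2
    (squeeze_zero (fun n => norm_nonneg _) (fun n => ?_) hη))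
  rw [norm_sub_rev, Finset.sum_range_succ, ← sub_sub]
  exact (hφ n).norm_sub_fderiv_le x (mem_iInter.1 hx (n + 1))

end Iteration

section Series

theorem tsupport_tsum_subset {ι X M : Type*} [TopologicalSpace X] [AddCommMonoid M]
    [TopologicalSpace M] {φ : ι → X → M} {L : Set X} (hL : IsClosed L)
    (hφ : ∀ i, tsupport (φ i) ⊆ L) : tsupport (fun x => ∑' i, φ i x) ⊆ L := by
  refine closure_minimal (fun x hx => ?_) hL
  by_contra hxL
  have hzero (i : ι) : φ i x = 0 := image_eq_zero_of_notMem_tsupport fun h => hxL (hφ i h)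
  exact hx (by simp only [hzero, tsum_zero])

variable {ι E F : Type*} [NormedAddCommGroup E] [NormedSpace ℝ E] [NormedAddCommGroup F]
  [NormedSpace ℝ F] [CompleteSpace F] {φ : ι → E → F} {κ G : ι → ℝ}

theorem hasFDerivAt_tsum_of_norm_le (hκ : Summable κ) (hG : Summable G)
    (hφ : ∀ i, Differentiable ℝ (φ i)) (hφκ : ∀ i x, ‖φ i x‖ ≤ κ i)
    (hφG : ∀ i x, ‖fderiv ℝ (φ i) x‖ ≤ G i) (x : E) :
    HasFDerivAt (fun y => ∑' i, φ i y) (∑' i, fderiv ℝ (φ i) x) x :=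
  hasFDerivAt_tsum hG (fun i y => (hφ i y).hasFDerivAt) hφG (x₀ := 0)
    (.of_norm_bounded hκ fun i => hφκ i 0) x

theorem contDiff_one_tsum_of_norm_le (hκ : Summable κ) (hG : Summable G)
    (hφ : ∀ i, ContDiff ℝ 1 (φ i)) (hφκ : ∀ i x, ‖φ i x‖ ≤ κ i)
    (hφG : ∀ i x, ‖fderiv ℝ (φ i) x‖ ≤ G i) : ContDiff ℝ 1 fun x => ∑' i, φ i x := by
  have hderiv := hasFDerivAt_tsum_of_norm_le hκ hG (fun i => (hφ i).differentiable one_ne_zero)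
    hφκ hφG
  refine contDiff_one_iff_fderiv.2 ⟨fun x => (hderiv x).differentiableAt, ?_⟩
  rw [funext fun x => (hderiv x).fderiv]
  exact continuous_tsum (fun i => (hφ i).continuous_fderiv one_ne_zero) hG hφG

end Series

section Alberti

variable {E F : Type*} [NormedAddCommGroup E] [NormedSpace ℝ E] [FiniteDimensional ℝ E]
  [MeasurableSpace E] [BorelSpace E] [NormedAddCommGroup F] [NormedSpace ℝ F] [CompleteSpace F]
  {μ : Measure E} [μ.IsAddHaarMeasure] {v : E → E →L[ℝ] F} {ε : ℝ≥0∞} {κ : ℝ}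

theorem exists_contDiff_fderiv_eq_of_continuousOn {U K₀ : Set E} (hU : IsOpen U) (hμU : μ U ≠ ∞)
    (hK₀ : IsCompact K₀) (hK₀U : K₀ ⊆ U) (hv : ContinuousOn v K₀) (hε : ε ≠ 0) (hκ : 0 < κ) :
    ∃ K ⊆ K₀, IsCompact K ∧ μ (K₀ \ K) ≤ ε ∧ ∃ φ : E → F, ContDiff ℝ 1 φ ∧
      tsupport φ ⊆ closure U ∧ (∀ x, ‖φ x‖ ≤ κ) ∧ ∀ x ∈ K, fderiv ℝ φ x = v x := by
  obtain ⟨e, he, hesum⟩ := ENNReal.exists_pos_sum_of_countable' hε ℕ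
  obtain ⟨K, φ, G, η, hK, hG, hη, hφ⟩ := exists_seq_isCorrection hU hμU hK₀ hK₀U hv
    (fun n => (he n).ne') (κ := fun n => κ / 2 / 2 ^ n) fun n => by positivity
  have hκsum := hasSum_geometric_two' κ
  have hderiv := hasFDerivAt_tsum_of_norm_le hκsum.summable hG
    (fun n => (hφ n).contDiff.differentiable one_ne_zero) (fun n => (hφ n).norm_le)
    fun n => (hφ n).norm_fderiv_le
  have hKK₀ : ⋂ n, K n ⊆ K₀ := (iInter_subset _ 0).trans hK.subset
  have hKc (n : ℕ) : IsClosed (K n) := by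
    cases n with
    | zero => exact hK ▸ hK₀.isClosed
    | succ n => exact (hφ n).isCompact.isClosed
  refine ⟨⋂ n, K n, hKK₀, hK₀.of_isClosed_subset (isClosed_iInter hKc) hKK₀, ?_,
    fun x => ∑' n, φ n x, contDiff_one_tsum_of_norm_le hκsum.summable hG
      (fun n => (hφ n).contDiff) (fun n => (hφ n).norm_le) fun n => (hφ n).norm_fderiv_le,
    tsupport_tsum_subset isClosed_closure fun n => (hφ n).tsupport_subset.trans subset_closure,
    fun x => tsum_of_norm_bounded hκsum fun n => (hφ n).norm_le x, fun x hx => ?_⟩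
  · calc μ (K₀ \ ⋂ n, K n) ≤ μ (K₀ \ K 0) + ∑' n, μ (K n \ K (n + 1)) :=
          measure_sdiff_iInter_le μ K₀ K
      _ ≤ 0 + ∑' n, e n := by
          rw [hK, Set.sdiff_self, measure_empty]
          gcongr with n
          exact (hφ n).measure_sdiff_le
      _ ≤ ε := by rw [zero_add]; exact hesum.le
  · rw [(hderiv x).fderiv]
    exact tendsto_nhds_unique
      (Summable.of_norm_bounded hG fun n => (hφ n).norm_fderiv_le x).hasSum.tendsto_sum_nat
      (tendsto_sum_fderiv_of_forall_isCorrection hη hφ hx)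

variable [SecondCountableTopology F] {Ω : Set E}

theorem exists_isCompact_contDiff_fderiv_eq (hΩ : IsOpen Ω) (hμΩ : μ Ω ≠ ∞)
    (hv : AEMeasurable v (μ.restrict Ω)) (hε : ε ≠ 0) (hκ : 0 < κ) :
    ∃ K ⊆ Ω, IsCompact K ∧ μ (Ω \ K) ≤ ε ∧ ∃ φ : E → F, ContDiff ℝ 1 φ ∧ HasCompactSupport φ ∧
      tsupport φ ⊆ Ω ∧ (∀ x, ‖φ x‖ ≤ κ) ∧ ∀ x ∈ K, fderiv ℝ φ x = v x := by
  have hε2 : ε / 2 ≠ 0 := (ENNReal.half_pos hε).ne'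
  obtain ⟨K₀, hK₀Ω, hK₀, hμK₀, hvK₀⟩ :=
    exists_isCompact_continuousOn_of_aemeasurable hv hΩ.measurableSet hμΩ hε2
  obtain ⟨L, hL, hK₀L, hLΩ⟩ := exists_compact_between hK₀ hΩ hK₀Ω
  obtain ⟨K, hKK₀, hK, hμK, φ, hφ, hφL, hφκ, hφv⟩ := exists_contDiff_fderiv_eq_of_continuousOn
    isOpen_interior (measure_ne_top_of_subset interior_subset (hL.measure_ne_top (μ := μ))) hK₀
    hK₀L hvK₀ hε2 hκ
  have hφL' : tsupport φ ⊆ L := hφL.trans (closure_minimal interior_subset hL.isClosed)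
  refine ⟨K, hKK₀.trans hK₀Ω, hK, ?_, φ, hφ, hL.of_isClosed_subset (isClosed_tsupport φ) hφL',
    hφL'.trans hLΩ, hφκ, hφv⟩
  have hsub : Ω \ K ⊆ Ω \ K₀ ∪ K₀ \ K := by grind
  calc μ (Ω \ K) ≤ μ (Ω \ K₀) + μ (K₀ \ K) := (measure_mono hsub).trans (measure_union_le _ _)
    _ ≤ ε / 2 + ε / 2 := add_le_add hμK₀ hμK
    _ = ε := ENNReal.add_halves ε

theorem alberti_refined_general (hΩ : IsOpen Ω) (hμΩ : μ Ω ≠ ∞)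
    (hv : AEMeasurable v (μ.restrict Ω)) {δ : ℝ≥0∞} (hδ : δ ≠ 0) (hκ : 0 < κ) :
    ∃ (A : Set E) (φ : E → F), IsOpen A ∧ A ⊆ Ω ∧ ContDiff ℝ 1 φ ∧ HasCompactSupport φ ∧
      tsupport φ ⊆ Ω ∧ μ A ≤ δ * μ Ω ∧ (∀ x, ‖φ x‖ ≤ κ) ∧ ∀ x ∈ Ω \ A, fderiv ℝ φ x = v x := by
  rcases Ω.eq_empty_or_nonempty with rfl | hne
  · exact ⟨∅, 0, isOpen_empty, subset_rfl, contDiff_const, .zero, by simp, by simp,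
      by simp [hκ.le], by simp⟩
  obtain ⟨K, hKΩ, hK, hμK, φ, hφ, hφc, hφΩ, hφκ, hφv⟩ := exists_isCompact_contDiff_fderiv_eq
    hΩ hμΩ hv (mul_ne_zero hδ (hΩ.measure_pos μ hne).ne') hκ
  refine ⟨Ω \ K, φ, hΩ.sdiff hK.isClosed, sdiff_subset, hφ, hφc, hφΩ, hμK, hφκ, ?_⟩
  rwa [sdiff_sdiff_cancel_left hKΩ]

end Alberti

theorem memC1Zero_of_hasCompactSupport {N : ℕ} {Ω : Set (Euc N)} {φ : Euc N → ℝ}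
    (hφ : ContDiff ℝ 1 φ) (hφc : HasCompactSupport φ) (hφΩ : tsupport φ ⊆ Ω) : MemC1Zero Ω φ := by
  have hzero (x : Euc N) (hx : x ∉ tsupport φ) : φ x = 0 ∧ fderiv ℝ φ x = 0 :=
    ⟨image_eq_zero_of_notMem_tsupport hx, fderiv_of_notMem_tsupport ℝ hx⟩
  refine ⟨hφ, fun x hx => hzero x fun h => hx (hφΩ h), tendsto_const_nhds.congr' ?_⟩
  filter_upwards [hφc.isCompact.compl_mem_cocompact] with x hx
  rw [(hzero x hx).1, (hzero x hx).2, abs_zero, norm_zero, add_zero]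

/-- **Alberti's theorem, refined version with a uniformly small potential.** For any
open `Ω ⊆ ℝ^N` (`N ≥ 2`) with finite measure, any Borel vector field `v` and any
positive `δ, κ`, there are an open `A ⊆ Ω` and `φ̃ ∈ C¹₀(Ω)` with
`ℋ^N(A) ≤ δ ℋ^N(Ω)`, `sup_Ω |φ̃| ≤ κ`, and `v = ∇φ̃` on `Ω ∖ A`. -/
theorem alberti_refined (N : ℕ) (hN : 2 ≤ N) (Ω : Set (Euc N)) (hΩ : IsOpen Ω)
    (hfin : μH[N] Ω ≠ ⊤) (v : Euc N → Euc N) (hv : Measurable v)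
    (δ κ : ℝ) (hδ : 0 < δ) (hκ : 0 < κ) :
    ∃ (A : Set (Euc N)) (φt : Euc N → ℝ), IsOpen A ∧ A ⊆ Ω ∧ MemC1Zero Ω φt ∧
      μH[N] A ≤ ENNReal.ofReal δ * μH[N] Ω ∧
      (∀ x ∈ Ω, |φt x| ≤ κ) ∧
      ∀ x ∈ Ω \ A, v x = gradient φt x := by
  have hdual : Measurable fun x => InnerProductSpace.toDual ℝ (Euc N) (v x) :=
    (InnerProductSpace.toDual ℝ (Euc N)).continuous.measurable.comp hv
  obtain ⟨A, φ, hA, hAΩ, hφ, hφc, hφΩ, hμA, hφκ, hφv⟩ := alberti_refined_general hΩ hfin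
    hdual.aemeasurable (ENNReal.ofReal_pos.2 hδ).ne' hκ
  refine ⟨A, φ, hA, hAΩ, memC1Zero_of_hasCompactSupport hφ hφc hφΩ, hμA, fun x _ => hφκ x,
    fun x hx => ?_⟩
  rw [gradient, hφv x hx, LinearIsometryEquiv.symm_apply_apply]
end
end

section
/- Let m ≥ 2 and 1 ≤ k ≤ m, let Ω ⊂ ℝ^m be an open set with finite m-dimensional Lebesgue measure, and let ω be a smooth differential k-form on ℝ^m whose support is a compact subset of Ω. Then for every ε > 0 there exist an open set A ⊆ Ω and a differential (k−1)-form γ on Ω of class C¹ (i.e. a C¹ map from Ω into the space of alternating (k−1)-linear forms on ℝ^m) such that ℋ^m(A) ≤ ε·ℋ^m(Ω) and ω(x) = (dγ)(x) for every x ∈ Ω ∖ A. -/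
/-!
At a small wavelength `h`, the function `h • s (p x / h + a) • f x` is small and its derivative is
nearly `s' (p x / h + a) • p ⊗ f`. The periodic profile `s` is chosen with `s' = 1` except within
`1 / (2 N)` of the integers. The bad sets belonging to the phases `a = 0, 1 / N, …, (N - 1) / N` are
disjoint, so some phase makes the derivative nearly `p ⊗ f` up to a proportion `1 / N` of any given
set. Summing over a basis and smoothing gives, for every continuous compactly supported field of
linear maps, a small `C¹` function whose derivative is uniformly close to it outside a small
proportion of its support and everywhere bounded, up to a small error, by a multiple of it that does
not depend on the precision.

The difference is continuous; truncating it makes it uniformly small and changes it only where the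
approximation failed. Iterating with summable proportions and rapidly decreasing precisions, the
corrections sum to a `C¹` function whose derivative is exactly the field outside an open set of
small measure (as in Alberti's Lusin-type theorem for gradients).

Alternating the curried form `x ↦ ω x / k`, seen as a field of linear maps into `(k - 1)`-forms,
returns `ω`, so a `C¹` form with this derivative at `x` has exterior derivative `ω x`.
-/

open MeasureTheory

noncomputable section

/-- Euclidean space `ℝ^m`. -/
abbrev E (m : ℕ) := EuclideanSpace ℝ (Fin m)

/-- The space of (continuous) `k`-linear forms on `ℝ^m`; a differential `k`-form on an
open subset of `ℝ^m` is a map into the alternating elements of this space. -/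
abbrev FormSpace (m k : ℕ) := ContinuousMultilinearMap ℝ (fun _ : Fin k => E m) ℝ

/-- A `k`-linear form is alternating. -/
def IsAlt {m k : ℕ} (f : FormSpace m k) : Prop :=
  ∀ (v : Fin k → E m) (i j : Fin k), v i = v j → i ≠ j → f v = 0

/-- The exterior derivative of a (`C¹`) differential `k`-form `γ` at `x`:
`dγ(x)(v₀, …, v_k) = ∑ᵢ (−1)ⁱ (∂_{vᵢ}γ)(x)(v₀, …, v̂ᵢ, …, v_k)`, obtained as
`(k!)⁻¹` times the alternatization of the uncurried derivative of `γ`. -/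
def extDerivAt {m k : ℕ} (γ : E m → FormSpace m k) (x : E m) :
    E m [⋀^Fin (k + 1)]→ₗ[ℝ] ℝ :=
  ((k.factorial : ℝ)⁻¹) •
    MultilinearMap.alternatization ((fderiv ℝ γ x).uncurryLeft.toMultilinearMap)

open scoped ENNReal

section Sawtooth

theorem exists_periodic_primitive {F : Type*} [NormedAddCommGroup F] [NormedSpace ℝ F]
    [CompleteSpace F] {q : ℝ → F} {T : ℝ} (hq : Continuous q) (hqT : Function.Periodic q T)
    (hmean : ∫ x in (0 : ℝ)..T, q x = 0) :
    ∃ s : ℝ → F, ContDiff ℝ 1 s ∧ Function.Periodic s T ∧ deriv s = q := by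
  let s : ℝ → F := fun x => ∫ t in (0 : ℝ)..x, q t
  have hs : ∀ x, HasDerivAt s (q x) x := fun x => (hq.integral_hasStrictDerivAt 0 x).hasDerivAt
  have hds : deriv s = q := funext fun x => (hs x).deriv
  refine ⟨s, contDiff_one_iff_deriv.mpr ⟨fun x => (hs x).differentiableAt, hds ▸ hq⟩,
    fun x => ?_, hds⟩
  calc s (x + T) = s x + ∫ t in x..x + T, q t :=
        (intervalIntegral.integral_add_adjacent_intervals
          (hq.intervalIntegrable 0 x) (hq.intervalIntegrable x (x + T))).symm
    _ = s x := by rw [hqT.intervalIntegral_add_eq x 0, zero_add, hmean, add_zero]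

theorem exists_bounded_contDiff_one_deriv_eq_one {w : ℝ} (hw : 0 < w) :
    ∃ (s : ℝ → ℝ) (M : ℝ), ContDiff ℝ 1 s ∧ (∀ x, ‖s x‖ ≤ M) ∧ (∀ x, ‖deriv s x‖ ≤ M) ∧
      ∀ x : ℝ, w ≤ ‖(x : UnitAddCircle)‖ → deriv s x = 1 := by
  let tent : ℝ → ℝ := fun x => max 0 (w - ‖(x : UnitAddCircle)‖)
  have tent_continuous : Continuous tent := by
    have := AddCircle.continuous_mk' (1 : ℝ)
    fun_prop
  have tent_periodic : Function.Periodic tent 1 := fun x => by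
    simp only [tent, AddCircle.coe_add, AddCircle.coe_period, add_zero]
  let I : ℝ := ∫ x in (0 : ℝ)..1, tent x
  have I_pos : 0 < I :=
    intervalIntegral.integral_pos one_pos tent_continuous.continuousOn
      (fun x _ => le_max_left _ _) ⟨0, by simp, by simpa [tent] using hw⟩
  let q : ℝ → ℝ := fun x => 1 - tent x / I
  have q_continuous : Continuous q := by fun_prop
  have q_periodic : Function.Periodic q 1 := fun x => by simp only [q, tent_periodic x]
  have q_mean : ∫ x in (0 : ℝ)..1, q x = 0 := by
    rw [intervalIntegral.integral_sub intervalIntegrable_const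
      ((tent_continuous.div_const I).intervalIntegrable 0 1), intervalIntegral.integral_div]
    simp [I, div_self I_pos.ne']
  obtain ⟨s, hs, s_periodic, hds⟩ := exists_periodic_primitive q_continuous q_periodic q_mean
  obtain ⟨K, hK⟩ :=
    (s_periodic.isBounded_of_continuous one_ne_zero hs.continuous).exists_norm_le
  obtain ⟨L, hL⟩ := (q_periodic.isBounded_of_continuous one_ne_zero q_continuous).exists_norm_le
  refine ⟨s, max K L, hs, fun x => (hK _ ⟨x, rfl⟩).trans (le_max_left _ _),
    fun x => hds ▸ (hL _ ⟨x, rfl⟩).trans (le_max_right _ _), fun x hx => ?_⟩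
  simp [hds, q, tent, hx]

theorem inv_le_norm_coe_div_sub_div {N : ℕ} {k l : Fin N} (hkl : k ≠ l) :
    (N : ℝ)⁻¹ ≤ ‖((k / N - l / N : ℝ) : UnitAddCircle)‖ := by
  wlog hlt : l < k generalizing k l
  · rw [← norm_neg, ← AddCircle.coe_neg, neg_sub]
    exact this hkl.symm (hkl.lt_or_gt.resolve_right hlt)
  have hN : (0 : ℝ) < N := by exact_mod_cast k.pos
  obtain ⟨m, hm⟩ := Nat.exists_eq_add_of_lt (Fin.lt_def.mp hlt)
  have hmN : m + 1 < N := by have := k.isLt; lia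
  have hdiff : (k / N - l / N : ℝ) = ((m + 1 : ℕ) : ℝ) / N * 1 := by
    rw [hm]; push_cast; ring
  rw [hdiff, AddCircle.norm_div_natCast, Nat.mod_eq_of_lt hmN, one_mul, inv_eq_one_div]
  gcongr
  exact_mod_cast (by lia : 1 ≤ min (m + 1) (N - (m + 1)))

theorem exists_measure_inter_le_div {α ι : Type*} [MeasurableSpace α] [Fintype ι] [Nonempty ι]
    (μ : Measure α) (S : Set α) {B : ι → Set α} (hB : ∀ i, MeasurableSet (B i))
    (hd : Pairwise (Function.onFun Disjoint B)) : ∃ i, μ (S ∩ B i) ≤ μ S / Fintype.card ι := by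
  by_contra! h
  refine absurd ?_ (ENNReal.sum_lt_sum_of_nonempty Finset.univ_nonempty fun i _ => h i).not_ge
  calc ∑ i, μ (S ∩ B i) = ∑ i, μ.restrict S (B i) := by
        simp_rw [Measure.restrict_apply (hB _), Set.inter_comm]
    _ ≤ μ.restrict S Set.univ :=
        sum_measure_le_measure_univ (fun i _ => (hB i).nullMeasurableSet)
          fun i _ j _ hij => (hd hij).aedisjoint
    _ = ∑ _i : ι, μ S / Fintype.card ι := by
        rw [Measure.restrict_apply_univ, Finset.sum_const, Finset.card_univ, nsmul_eq_mul,
          ENNReal.mul_div_cancel (by simp) (by simp)]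

theorem exists_measure_norm_coe_add_lt_le {α : Type*} [MeasurableSpace α] (μ : Measure α)
    (S : Set α) {τ : α → ℝ} (hτ : Measurable τ) {N : ℕ} (hN : N ≠ 0) :
    ∃ a : ℝ, μ (S ∩ {x | ‖((τ x + a : ℝ) : UnitAddCircle)‖ < 1 / (2 * N)}) ≤ μ S / N := by
  have : NeZero N := ⟨hN⟩
  let B : Fin N → Set α := fun k => {x | ‖((τ x + k / N : ℝ) : UnitAddCircle)‖ < 1 / (2 * N)}
  have B_measurable : ∀ k, MeasurableSet (B k) := fun k => by
    have hcoe : Measurable fun t : ℝ => ‖(t : UnitAddCircle)‖ :=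
      (continuous_norm.comp (AddCircle.continuous_mk' 1)).measurable
    exact measurableSet_lt (hcoe.comp (hτ.add_const _)) measurable_const
  have B_disjoint : Pairwise (Function.onFun Disjoint B) := fun k l hkl =>
    Set.disjoint_left.mpr fun x hxk hxl => by
      refine (inv_le_norm_coe_div_sub_div hkl).not_gt ?_
      calc ‖((k / N - l / N : ℝ) : UnitAddCircle)‖
          = ‖((τ x + k / N : ℝ) : UnitAddCircle) - ((τ x + l / N : ℝ) : UnitAddCircle)‖ := by
            rw [← AddCircle.coe_sub, add_sub_add_left_eq_sub]
        _ ≤ ‖((τ x + k / N : ℝ) : UnitAddCircle)‖ + ‖((τ x + l / N : ℝ) : UnitAddCircle)‖ :=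
            norm_sub_le _ _
        _ < 1 / (2 * N) + 1 / (2 * N) := add_lt_add hxk hxl
        _ = (N : ℝ)⁻¹ := by field_simp; norm_num
  obtain ⟨k, hk⟩ := exists_measure_inter_le_div μ S B_measurable B_disjoint
  exact ⟨k / N, by simpa only [Fintype.card_fin] using hk⟩

end Sawtooth

section Truncation

variable {F : Type*} [NormedAddCommGroup F] [NormedSpace ℝ F] {δ : ℝ}

/-- The radial retraction of a normed space onto its closed ball of radius `δ`. -/
def truncate (δ : ℝ) (v : F) : F := (δ / max δ ‖v‖) • v

theorem truncate_of_norm_le (hδ : 0 < δ) {v : F} (hv : ‖v‖ ≤ δ) : truncate δ v = v := by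
  rw [truncate, max_eq_left hv, div_self hδ.ne', one_smul]

theorem norm_truncate_le (hδ : 0 < δ) (v : F) : ‖truncate δ v‖ ≤ δ := by
  have hmax : 0 < max δ ‖v‖ := hδ.trans_le (le_max_left _ _)
  rw [truncate, norm_smul, Real.norm_of_nonneg (by positivity), div_mul_eq_mul_div,
    div_le_iff₀ hmax]
  gcongr
  exact le_max_right _ _

theorem continuous_truncate (hδ : 0 < δ) : Continuous (truncate δ : F → F) :=
  (continuous_const.div (continuous_const.max continuous_norm)
    fun _ => (hδ.trans_le (le_max_left _ _)).ne').smul continuous_id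

end Truncation

section Oscillation

variable {V F : Type*} [NormedAddCommGroup V] [NormedSpace ℝ V] [NormedAddCommGroup F]
  [NormedSpace ℝ F]

/-- The function `f` modulated by the profile `s` at wavelength `h` and phase `a` in the direction
`p`. For small `h` it is uniformly small, while its derivative is close to
`s'(p / h + a) • p ⊗ f`. -/
def oscillate (s : ℝ → ℝ) (h a : ℝ) (p : V →L[ℝ] ℝ) (f : V → F) (x : V) : F :=
  (h * s (p x / h + a)) • f x

variable {s : ℝ → ℝ} {h a M C : ℝ} {p : V →L[ℝ] ℝ} {f : V → F}

theorem contDiff_oscillate {n : ℕ∞} (hs : ContDiff ℝ n s) (hf : ContDiff ℝ n f) :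
    ContDiff ℝ n (oscillate s h a p f) := by
  unfold oscillate
  fun_prop

theorem tsupport_oscillate_subset : tsupport (oscillate s h a p f) ⊆ tsupport f :=
  closure_mono (Function.support_smul_subset_right _ _)

theorem fderiv_oscillate (hs : Differentiable ℝ s) (hf : Differentiable ℝ f) (hh : h ≠ 0)
    (x : V) : fderiv ℝ (oscillate s h a p f) x =
      (h * s (p x / h + a)) • fderiv ℝ f x + deriv s (p x / h + a) • p.smulRight (f x) := by
  have hphase : HasFDerivAt (fun y => p y / h + a) (h⁻¹ • p) x := by
    simpa only [div_eq_inv_mul] using (p.hasFDerivAt.const_mul h⁻¹).add_const a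
  have hprofile : HasFDerivAt (fun y => h * s (p y / h + a)) (deriv s (p x / h + a) • p) x :=
    (((hs _).hasDerivAt.comp_hasFDerivAt x hphase).const_mul h).congr_fderiv (by
      rw [smul_smul, smul_smul]
      congr 1
      field_simp)
  refine (hprofile.smul (hf x).hasFDerivAt).fderiv.trans ?_
  ext v
  simp [smul_smul]

theorem norm_mul_profile_smul_le (hh : 0 ≤ h) (hs : ∀ t, ‖s t‖ ≤ M) (t : ℝ) {v : F}
    (hv : ‖v‖ ≤ C) : ‖(h * s t) • v‖ ≤ h * (M * C) := by
  have hM : 0 ≤ M := (norm_nonneg _).trans (hs t)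
  rw [norm_smul, norm_mul, Real.norm_of_nonneg hh, mul_assoc]
  gcongr
  exact hs t

end Oscillation

section ApproxPrimitive

variable {V F : Type*} [NormedAddCommGroup V] [NormedSpace ℝ V] [NormedAddCommGroup F]
  [NormedSpace ℝ F]

/-- The set of points where the derivative of `u` fails to approximate the field `f` within `δ`. -/
def exceptionalSet (δ : ℝ) (f : V → V →L[ℝ] F) (u : V → F) : Set V :=
  {x | δ < ‖f x - fderiv ℝ u x‖}

theorem notMem_exceptionalSet {δ : ℝ} {f : V → V →L[ℝ] F} {u : V → F} {x : V} :
    x ∉ exceptionalSet δ f u ↔ ‖f x - fderiv ℝ u x‖ ≤ δ := by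
  rw [exceptionalSet, Set.notMem_ofPred_iff, not_lt]

theorem exceptionalSet_sum_subset {ι : Type*} [Fintype ι] {δ : ℝ} {f : ι → V → V →L[ℝ] F}
    {u : ι → V → F} (hu : ∀ i, Differentiable ℝ (u i)) :
    exceptionalSet (Fintype.card ι * δ) (fun x => ∑ i, f i x) (fun x => ∑ i, u i x) ⊆
      ⋃ i, exceptionalSet δ (f i) (u i) := fun x hx => by
  contrapose! hx
  simp only [Set.mem_iUnion, not_exists, notMem_exceptionalSet] at hx ⊢
  rw [fderiv_fun_sum fun i _ => hu i x, ← Finset.sum_sub_distrib]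
  exact (norm_sum_le_of_le _ fun i _ => hx i).trans (by simp)

variable [MeasurableSpace V]

/-- `u` is a `C¹` function, supported in `K` and of size at most `δ`, whose derivative is within
`δ` of the field `f` on `K`, up to a proportion `η` of `K`; the constant `M` bounds the derivative
in terms of the field. -/
structure IsApproxPrimitive (μ : Measure V) (K : Set V) (η : ℝ≥0∞) (M δ : ℝ)
    (f : V → V →L[ℝ] F) (u : V → F) : Prop where
  contDiff : ContDiff ℝ 1 u
  tsupport_subset : tsupport u ⊆ K
  norm_le (x : V) : ‖u x‖ ≤ δ
  norm_fderiv_le (x : V) : ‖fderiv ℝ u x‖ ≤ M * ‖f x‖ + δ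
  measure_le : μ (K ∩ exceptionalSet δ f u) ≤ η * μ K

namespace IsApproxPrimitive

variable {μ : Measure V} {K : Set V} {η : ℝ≥0∞} {M δ : ℝ} {f : V → V →L[ℝ] F} {u : V → F}

theorem mono (hu : IsApproxPrimitive μ K η M δ f u) {η' : ℝ≥0∞} {δ' : ℝ} (hη : η ≤ η')
    (hδ : δ ≤ δ') : IsApproxPrimitive μ K η' M δ' f u where
  contDiff := hu.contDiff
  tsupport_subset := hu.tsupport_subset
  norm_le x := (hu.norm_le x).trans hδ
  norm_fderiv_le x := (hu.norm_fderiv_le x).trans (by gcongr)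
  measure_le := calc
    μ (K ∩ exceptionalSet δ' f u) ≤ μ (K ∩ exceptionalSet δ f u) :=
      measure_mono (Set.inter_subset_inter_right K fun _ hx => hδ.trans_lt hx)
    _ ≤ η * μ K := hu.measure_le
    _ ≤ η' * μ K := by gcongr

theorem of_norm_sub_le (hu : IsApproxPrimitive μ K η M δ f u) (hM : 0 ≤ M)
    {g : V → V →L[ℝ] F} (hg : ∀ x, ‖f x - g x‖ ≤ δ) :
    IsApproxPrimitive μ K η M ((M + 2) * δ) g u where
  contDiff := hu.contDiff
  tsupport_subset := hu.tsupport_subset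
  norm_le x := by
    have hδ : 0 ≤ δ := (norm_nonneg _).trans (hg x)
    exact (hu.norm_le x).trans (le_mul_of_one_le_left hδ (by linarith))
  norm_fderiv_le x := by
    have hδ : 0 ≤ δ := (norm_nonneg _).trans (hg x)
    calc ‖fderiv ℝ u x‖ ≤ M * ‖f x‖ + δ := hu.norm_fderiv_le x
      _ ≤ M * (‖g x‖ + δ) + δ := by
        gcongr
        exact (norm_le_norm_add_norm_sub' _ _).trans (by gcongr; exact hg x)
      _ ≤ M * ‖g x‖ + (M + 2) * δ := by linarith
  measure_le := by
    refine (measure_mono (Set.inter_subset_inter_right K fun x hx => ?_)).trans hu.measure_le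
    have hδ : 0 ≤ δ := (norm_nonneg _).trans (hg x)
    have htri : ‖g x - fderiv ℝ u x‖ ≤ ‖f x - g x‖ + ‖f x - fderiv ℝ u x‖ := by
      rw [norm_sub_rev (f x) (g x)]
      exact norm_sub_le_norm_sub_add_norm_sub _ _ _
    have hMδ : 0 ≤ M * δ := by positivity
    have hx' : (M + 2) * δ < ‖g x - fderiv ℝ u x‖ := hx
    exact (by linarith [hg x] : δ < ‖f x - fderiv ℝ u x‖)

theorem sum {ι : Type*} [Fintype ι] {f : ι → V → V →L[ℝ] F} {u : ι → V → F}
    (hu : ∀ i, IsApproxPrimitive μ K η M δ (f i) (u i)) (hM : 0 ≤ M) {c : ℝ}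
    (hc : ∀ x, ∑ i, ‖f i x‖ ≤ c * ‖∑ i, f i x‖) :
    IsApproxPrimitive μ K (Fintype.card ι * η) (M * c) (Fintype.card ι * δ)
      (fun x => ∑ i, f i x) (fun x => ∑ i, u i x) where
  contDiff := ContDiff.sum fun i _ => (hu i).contDiff
  tsupport_subset := by
    have hsupport : Function.support (fun x => ∑ i, u i x) ⊆ ⋃ i, tsupport (u i) := fun x hx => by
      obtain ⟨i, -, hi⟩ := Finset.exists_ne_zero_of_sum_ne_zero hx
      exact Set.mem_iUnion.mpr ⟨i, subset_tsupport _ hi⟩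
    exact (closure_minimal hsupport (isClosed_iUnion_of_finite fun i => isClosed_tsupport _)).trans
      (Set.iUnion_subset fun i => (hu i).tsupport_subset)
  norm_le x := (norm_sum_le_of_le _ fun i _ => (hu i).norm_le x).trans (by simp)
  norm_fderiv_le x := by
    rw [fderiv_fun_sum fun i _ => (hu i).contDiff.differentiable one_ne_zero x]
    calc ‖∑ i, fderiv ℝ (u i) x‖ ≤ ∑ i, (M * ‖f i x‖ + δ) :=
          norm_sum_le_of_le _ fun i _ => (hu i).norm_fderiv_le x
      _ = M * ∑ i, ‖f i x‖ + Fintype.card ι * δ := by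
          simp [Finset.sum_add_distrib, Finset.mul_sum]
      _ ≤ M * (c * ‖∑ i, f i x‖) + Fintype.card ι * δ := by gcongr; exact hc x
      _ = M * c * ‖∑ i, f i x‖ + Fintype.card ι * δ := by ring
  measure_le := by
    have hcover := exceptionalSet_sum_subset (δ := δ) (f := f)
      fun i => (hu i).contDiff.differentiable one_ne_zero
    calc _ ≤ μ (⋃ i, K ∩ exceptionalSet δ (f i) (u i)) := by
          rw [← Set.inter_iUnion]
          gcongr
      _ ≤ ∑ i, μ (K ∩ exceptionalSet δ (f i) (u i)) := measure_iUnion_fintype_le _ _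
      _ ≤ ∑ _i : ι, η * μ K := Finset.sum_le_sum fun i _ => (hu i).measure_le
      _ = Fintype.card ι * η * μ K := by simp [mul_assoc]

end IsApproxPrimitive

theorem isApproxPrimitive_oscillate {μ : Measure V} {η : ℝ≥0∞} {K : Set V} {s : ℝ → ℝ}
    {h a w M C δ : ℝ} {p : V →L[ℝ] ℝ} {f : V → F} (hs : ContDiff ℝ 1 s) (hsM : ∀ t, ‖s t‖ ≤ M)
    (hdsM : ∀ t, ‖deriv s t‖ ≤ M) (hds : ∀ t : ℝ, w ≤ ‖(t : UnitAddCircle)‖ → deriv s t = 1)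
    (hf : ContDiff ℝ 1 f) (hfK : tsupport f ⊆ K) (hC : ∀ x, ‖f x‖ ≤ C)
    (hdC : ∀ x, ‖fderiv ℝ f x‖ ≤ C) (hh : 0 < h) (hhδ : h * (M * C) ≤ δ)
    (hμ : μ (K ∩ {x | ‖((p x / h + a : ℝ) : UnitAddCircle)‖ < w}) ≤ η * μ K) :
    IsApproxPrimitive μ K η M δ (fun x => p.smulRight (f x)) (oscillate s h a p f) := by
  have hfderiv := fderiv_oscillate (a := a) (p := p) (hs.differentiable one_ne_zero)
    (hf.differentiable one_ne_zero) hh.ne'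
  have herror : ∀ x, ‖(h * s (p x / h + a)) • fderiv ℝ f x‖ ≤ δ := fun x =>
    (norm_mul_profile_smul_le hh.le hsM _ (hdC x)).trans hhδ
  refine ⟨contDiff_oscillate hs hf, tsupport_oscillate_subset.trans hfK,
    fun x => (norm_mul_profile_smul_le hh.le hsM _ (hC x)).trans hhδ, fun x => ?_,
    (measure_mono (Set.inter_subset_inter_right K fun x hx => ?_)).trans hμ⟩
  · rw [hfderiv, add_comm]
    refine (norm_add_le _ _).trans (add_le_add ?_ (herror x))
    rw [norm_smul]
    gcongr
    exact hdsM _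
  · contrapose! hx
    rw [notMem_exceptionalSet]
    simpa [hfderiv, hds _ (not_lt.mp hx)] using herror x

theorem exists_isApproxPrimitive_smulRight [OpensMeasurableSpace V] (μ : Measure V) {η : ℝ≥0∞}
    (hη : η ≠ 0) :
    ∃ M : ℝ, 0 ≤ M ∧ ∀ (p : V →L[ℝ] ℝ) {f : V → F} {K : Set V}, ContDiff ℝ 1 f →
      HasCompactSupport f → tsupport f ⊆ K → ∀ δ : ℝ, 0 < δ →
      ∃ u, IsApproxPrimitive μ K η M δ (fun x => p.smulRight (f x)) u := by
  obtain ⟨N, hNη⟩ := ENNReal.exists_inv_nat_lt hη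
  rcases eq_or_ne N 0 with rfl | hN
  · simp at hNη
  obtain ⟨s, M, hs, hsM, hdsM, hds⟩ :=
    exists_bounded_contDiff_one_deriv_eq_one (w := 1 / (2 * N)) (by positivity)
  have hM : 0 ≤ M := (norm_nonneg _).trans (hsM 0)
  refine ⟨M, hM, fun p f K hf hfc hfK δ hδ => ?_⟩
  obtain ⟨C₀, hC₀⟩ := hf.continuous.bounded_above_of_compact_support hfc
  obtain ⟨C₁, hC₁⟩ := (hf.continuous_fderiv one_ne_zero).bounded_above_of_compact_support
    (hfc.fderiv (𝕜 := ℝ))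
  let C := max C₀ C₁
  have hC : 0 ≤ C := (norm_nonneg _).trans ((hC₀ 0).trans (le_max_left _ _))
  let h := δ / (M * C + 1)
  have hh : 0 < h := by positivity
  have hhδ : h * (M * C) ≤ δ := by
    rw [div_mul_eq_mul_div, div_le_iff₀ (by positivity)]
    linarith
  obtain ⟨a, ha⟩ := exists_measure_norm_coe_add_lt_le μ K
    (τ := fun x => p x / h) (p.continuous.div_const h).measurable hN
  refine ⟨_, isApproxPrimitive_oscillate hs hsM hdsM hds hf hfK
    (fun x => (hC₀ x).trans (le_max_left _ _)) (fun x => (hC₁ x).trans (le_max_right _ _))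
    hh hhδ (ha.trans ?_)⟩
  rw [div_eq_mul_inv, mul_comm]
  gcongr

theorem exists_isApproxPrimitive_of_contDiff [FiniteDimensional ℝ V] [OpensMeasurableSpace V]
    (μ : Measure V) {η : ℝ≥0∞} (hη : η ≠ 0) :
    ∃ M : ℝ, 0 ≤ M ∧ ∀ {f : V → V →L[ℝ] F} {K : Set V}, ContDiff ℝ 1 f →
      HasCompactSupport f → tsupport f ⊆ K → ∀ δ : ℝ, 0 < δ →
      ∃ u, IsApproxPrimitive μ K η M δ f u := by
  let b := Module.finBasis ℝ V
  let n := Module.finrank ℝ V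
  let p := fun i => (b.coord i).toContinuousLinearMap
  have hηn : η / (n + 1) ≠ 0 := by simp [hη, ENNReal.div_eq_zero_iff]
  obtain ⟨M, hM, H⟩ := exists_isApproxPrimitive_smulRight (F := F) μ hηn
  refine ⟨M * ∑ i, ‖p i‖ * ‖b i‖, by positivity, fun {f K} hf hfc hfK δ hδ => ?_⟩
  have hf_sum : (fun x => ∑ i, (p i).smulRight (f x (b i))) = f := by
    ext x v
    conv_rhs => rw [← b.sum_repr v, map_sum]
    simp [p]
  have hc : ∀ x, ∑ i, ‖(p i).smulRight (f x (b i))‖ ≤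
      (∑ i, ‖p i‖ * ‖b i‖) * ‖∑ i, (p i).smulRight (f x (b i))‖ := fun x => by
    rw [congrFun hf_sum x, Finset.sum_mul]
    refine Finset.sum_le_sum fun i _ => ?_
    rw [ContinuousLinearMap.norm_smulRight_apply, mul_assoc, mul_comm ‖b i‖]
    gcongr
    exact (f x).le_opNorm _
  have hfb : ∀ i, tsupport (fun x => f x (b i)) ⊆ tsupport f := fun i =>
    tsupport_comp_subset (g := fun L : V →L[ℝ] F => L (b i)) (by simp) f
  choose u hu using fun i => H (p i) (hf.clm_apply contDiff_const)
    (hfc.comp_left (g := fun L : V →L[ℝ] F => L (b i)) (by simp)) ((hfb i).trans hfK)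
    (δ / (n + 1)) (by positivity)
  have hsum := IsApproxPrimitive.sum hu hM hc
  rw [hf_sum, Fintype.card_fin] at hsum
  refine ⟨_, hsum.mono ?_ ?_⟩
  · rw [mul_comm]
    exact ENNReal.mul_le_of_le_div (ENNReal.div_le_div_left le_self_add _)
  · rw [mul_div_left_comm]
    exact mul_le_of_le_one_right hδ.le ((div_le_one (by positivity)).mpr (by linarith))

theorem exists_isApproxPrimitive [FiniteDimensional ℝ V] [OpensMeasurableSpace V]
    (μ : Measure V) {η : ℝ≥0∞} (hη : η ≠ 0) :
    ∃ M : ℝ, 0 ≤ M ∧ ∀ {f : V → V →L[ℝ] F}, Continuous f → HasCompactSupport f →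
      ∀ δ : ℝ, 0 < δ → ∃ u, IsApproxPrimitive μ (tsupport f) η M δ f u := by
  obtain ⟨M, hM, H⟩ := exists_isApproxPrimitive_of_contDiff (F := F) μ hη
  refine ⟨M, hM, fun {f} hf hfc δ hδ => ?_⟩
  have hδ' : 0 < δ / (M + 2) := by positivity
  obtain ⟨g, hg, hgf, hsupport⟩ :=
    hf.exists_contDiff_approx 1 (continuous_const (y := δ / (M + 2))) fun _ => hδ'
  obtain ⟨u, hu⟩ := H hg (hfc.mono hsupport) (closure_mono hsupport) _ hδ'
  have hu' := hu.of_norm_sub_le hM fun x => (dist_eq_norm (g x) (f x)).symm.trans_le (hgf x).le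
  rw [mul_div_cancel₀ _ (by positivity : M + 2 ≠ 0)] at hu'
  exact ⟨u, hu'⟩

end ApproxPrimitive

section Residual

variable {V F : Type*} [NormedAddCommGroup V] [NormedSpace ℝ V] [NormedAddCommGroup F]
  [NormedSpace ℝ F]

/-- What remains of the field `f` after subtracting the derivative of an approximate primitive `u`.
It is truncated at `δ`, so that the next correction is small everywhere. -/
def truncatedResidual (δ : ℝ) (f : V → V →L[ℝ] F) (u : V → F) (x : V) : V →L[ℝ] F :=
  truncate δ (f x - fderiv ℝ u x)

variable {f : V → V →L[ℝ] F} {u : V → F} {δ : ℝ}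

theorem truncatedResidual_of_notMem_exceptionalSet (hδ : 0 < δ) {x : V}
    (hx : x ∉ exceptionalSet δ f u) :
    truncatedResidual δ f u x = f x - fderiv ℝ u x :=
  truncate_of_norm_le hδ (notMem_exceptionalSet.mp hx)

theorem continuous_truncatedResidual (hδ : 0 < δ) (hf : Continuous f) (hu : ContDiff ℝ 1 u) :
    Continuous (truncatedResidual δ f u) :=
  (continuous_truncate hδ).comp (hf.sub (hu.continuous_fderiv one_ne_zero))

theorem isOpen_exceptionalSet (hf : Continuous f) (hu : ContDiff ℝ 1 u) :
    IsOpen (exceptionalSet δ f u) :=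
  isOpen_lt continuous_const (hf.sub (hu.continuous_fderiv one_ne_zero)).norm

theorem sub_fderiv_eq_zero_of_notMem_tsupport (hu : tsupport u ⊆ tsupport f) {x : V}
    (hx : x ∉ tsupport f) : f x - fderiv ℝ u x = 0 := by
  have hdu : x ∉ tsupport (fderiv ℝ u) := fun h => hx (hu (tsupport_fderiv_subset ℝ h))
  rw [image_eq_zero_of_notMem_tsupport hx, image_eq_zero_of_notMem_tsupport hdu, sub_zero]

theorem exceptionalSet_subset_tsupport (hδ : 0 < δ) (hu : tsupport u ⊆ tsupport f) :
    exceptionalSet δ f u ⊆ tsupport f := fun x hx => by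
  contrapose! hx
  rw [notMem_exceptionalSet, sub_fderiv_eq_zero_of_notMem_tsupport hu hx, norm_zero]
  exact hδ.le

theorem tsupport_truncatedResidual_subset (hu : tsupport u ⊆ tsupport f) :
    tsupport (truncatedResidual δ f u) ⊆ tsupport f :=
  closure_minimal (fun x hx => by
    contrapose! hx
    simp [truncatedResidual, truncate, sub_fderiv_eq_zero_of_notMem_tsupport hu hx])
    (isClosed_tsupport f)

end Residual

section Iteration

variable {V F : Type*} [NormedAddCommGroup V] [NormedSpace ℝ V] [MeasurableSpace V]
  [NormedAddCommGroup F] [NormedSpace ℝ F]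

/-- A sequence of continuous fields `φ n`, each the residual of the preceding one with respect to
its approximate primitive `u n`, with proportions `η n`, derivative bounds `M n` and precisions
`δ n`. -/
structure IsResidualSeq (μ : Measure V) (η : ℕ → ℝ≥0∞) (M δ : ℕ → ℝ)
    (φ : ℕ → V → V →L[ℝ] F) (u : ℕ → V → F) : Prop where
  precision_pos (n : ℕ) : 0 < δ n
  continuous (n : ℕ) : Continuous (φ n)
  isApproxPrimitive (n : ℕ) :
    IsApproxPrimitive μ (tsupport (φ n)) (η n) (M n) (δ n) (φ n) (u n)
  succ_eq (n : ℕ) : φ (n + 1) = truncatedResidual (δ n) (φ n) (u n)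

theorem exists_isResidualSeq {μ : Measure V} {η : ℕ → ℝ≥0∞} {M δ : ℕ → ℝ} (hδ : ∀ n, 0 < δ n)
    (H : ∀ n (f : V → V →L[ℝ] F), Continuous f → HasCompactSupport f →
      ∃ u, IsApproxPrimitive μ (tsupport f) (η n) (M n) (δ n) f u)
    {f : V → V →L[ℝ] F} (hf : Continuous f) (hfc : HasCompactSupport f) :
    ∃ φ u, φ 0 = f ∧ IsResidualSeq μ η M δ φ u := by
  choose u hu using fun n (f : {f : V → V →L[ℝ] F // Continuous f ∧ HasCompactSupport f}) =>
    H n f f.2.1 f.2.2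
  let φ : ℕ → {f : V → V →L[ℝ] F // Continuous f ∧ HasCompactSupport f} := fun n =>
    n.rec ⟨f, hf, hfc⟩ fun n g => ⟨truncatedResidual (δ n) g (u n g),
      continuous_truncatedResidual (hδ n) g.2.1 (hu n g).contDiff,
      g.2.2.mono' ((subset_tsupport _).trans
        (tsupport_truncatedResidual_subset (hu n g).tsupport_subset))⟩
  exact ⟨fun n => (φ n).1, fun n => u n (φ n), rfl, hδ, fun n => (φ n).2.1, fun n => hu n (φ n),
    fun n => rfl⟩

namespace IsResidualSeq

variable {μ : Measure V} {η : ℕ → ℝ≥0∞} {M δ : ℕ → ℝ} {φ : ℕ → V → V →L[ℝ] F} {u : ℕ → V → F}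

theorem tsupport_subset (h : IsResidualSeq μ η M δ φ u) (n : ℕ) :
    tsupport (φ n) ⊆ tsupport (φ 0) := by
  induction n with
  | zero => rfl
  | succ n ih =>
    rw [h.succ_eq]
    exact (tsupport_truncatedResidual_subset (h.isApproxPrimitive n).tsupport_subset).trans ih

theorem norm_succ_le (h : IsResidualSeq μ η M δ φ u) (n : ℕ) (x : V) : ‖φ (n + 1) x‖ ≤ δ n := by
  rw [h.succ_eq]
  exact norm_truncate_le (h.precision_pos n) _

theorem iUnion_exceptionalSet_subset (h : IsResidualSeq μ η M δ φ u) :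
    ⋃ n, exceptionalSet (δ n) (φ n) (u n) ⊆ tsupport (φ 0) :=
  Set.iUnion_subset fun n => (exceptionalSet_subset_tsupport (h.precision_pos n)
    (h.isApproxPrimitive n).tsupport_subset).trans (h.tsupport_subset n)

theorem measure_iUnion_exceptionalSet_le (h : IsResidualSeq μ η M δ φ u) :
    μ (⋃ n, exceptionalSet (δ n) (φ n) (u n)) ≤ (∑' n, η n) * μ (tsupport (φ 0)) := by
  rw [← ENNReal.tsum_mul_right]
  refine (measure_iUnion_le _).trans (ENNReal.tsum_le_tsum fun n => ?_)
  have hμ := (h.isApproxPrimitive n).measure_le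
  rw [Set.inter_eq_right.mpr (exceptionalSet_subset_tsupport (h.precision_pos n)
    (h.isApproxPrimitive n).tsupport_subset)] at hμ
  exact hμ.trans (by gcongr; exact h.tsupport_subset n)

theorem exists_summable_norm_fderiv_le (h : IsResidualSeq μ η M δ φ u) (hM : ∀ n, 0 ≤ M n)
    (hδ : Summable δ) (hMδ : Summable fun n => M (n + 1) * δ n) {C : ℝ}
    (hC : ∀ x, ‖φ 0 x‖ ≤ C) :
    ∃ v : ℕ → ℝ, Summable v ∧ ∀ n x, ‖fderiv ℝ (u n) x‖ ≤ v n := by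
  let c : ℕ → ℝ := fun n => n.casesOn C δ
  have hc : ∀ n x, ‖φ n x‖ ≤ c n := fun n x => by
    cases n with
    | zero => exact hC x
    | succ n => exact h.norm_succ_le n x
  refine ⟨fun n => M n * c n + δ n, ((summable_nat_add_iff 1).mp hMδ).add hδ, fun n x => ?_⟩
  calc ‖fderiv ℝ (u n) x‖ ≤ M n * ‖φ n x‖ + δ n := (h.isApproxPrimitive n).norm_fderiv_le x
    _ ≤ M n * c n + δ n := by
      gcongr
      exacts [hM n, hc n x]

theorem hasSum_fderiv (h : IsResidualSeq μ η M δ φ u) (hδ : Summable δ) {v : ℕ → ℝ}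
    (hv : Summable v) (huv : ∀ n x, ‖fderiv ℝ (u n) x‖ ≤ v n) {x : V}
    (hx : x ∉ ⋃ n, exceptionalSet (δ n) (φ n) (u n)) :
    HasSum (fun n => fderiv ℝ (u n) x) (φ 0 x) := by
  have hfderiv : ∀ n, fderiv ℝ (u n) x = φ n x - φ (n + 1) x := fun n => by
    rw [h.succ_eq, truncatedResidual_of_notMem_exceptionalSet (h.precision_pos n)
      fun hn => hx (Set.mem_iUnion_of_mem n hn), sub_sub_cancel]
  have hφ : Filter.Tendsto (fun n => φ n x) Filter.atTop (nhds 0) :=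
    (Filter.tendsto_add_atTop_iff_nat 1).mp <|
      squeeze_zero_norm (fun n => h.norm_succ_le n x) hδ.tendsto_atTop_zero
  rw [hasSum_iff_tendsto_nat_of_summable_norm
    (hv.of_nonneg_of_le (fun _ => norm_nonneg _) fun n => huv n x)]
  simp only [hfderiv, Finset.sum_range_sub']
  simpa only [sub_zero] using hφ.const_sub (φ 0 x)

theorem contDiff_tsum [CompleteSpace F] (h : IsResidualSeq μ η M δ φ u) (hδ : Summable δ)
    {v : ℕ → ℝ} (hv : Summable v) (huv : ∀ n x, ‖fderiv ℝ (u n) x‖ ≤ v n) :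
    ContDiff ℝ 1 fun x => ∑' n, u n x := by
  let w : ℕ → ℕ → ℝ := fun k => k.casesOn δ fun _ => v
  refine _root_.contDiff_tsum (N := 1) (v := w) (fun n => (h.isApproxPrimitive n).contDiff)
    (fun k _ => ?_) fun k n x hk => ?_
  · cases k
    exacts [hδ, hv]
  · obtain rfl | rfl := Nat.le_one_iff_eq_zero_or_eq_one.mp (by exact_mod_cast hk)
    · rw [norm_iteratedFDeriv_zero]
      exact (h.isApproxPrimitive n).norm_le x
    · rw [norm_iteratedFDeriv_one]
      exact huv n x

theorem fderiv_tsum [CompleteSpace F] (h : IsResidualSeq μ η M δ φ u) (hδ : Summable δ)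
    {v : ℕ → ℝ} (hv : Summable v) (huv : ∀ n x, ‖fderiv ℝ (u n) x‖ ≤ v n) {x : V}
    (hx : x ∉ ⋃ n, exceptionalSet (δ n) (φ n) (u n)) :
    fderiv ℝ (fun y => ∑' n, u n y) x = φ 0 x := by
  rw [fderiv_tsum_apply hv
    (fun n => (h.isApproxPrimitive n).contDiff.differentiable one_ne_zero) huv
    (.of_norm_bounded hδ fun n => (h.isApproxPrimitive n).norm_le x)]
  exact (h.hasSum_fderiv hδ hv huv hx).tsum_eq

end IsResidualSeq

theorem exists_summable_precision {M : ℕ → ℝ} (hM : ∀ n, 0 ≤ M n) :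
    ∃ δ : ℕ → ℝ, (∀ n, 0 < δ n) ∧ Summable δ ∧ Summable fun n => M (n + 1) * δ n := by
  have hpos : ∀ n, 0 < 1 + M (n + 1) := fun n => by linarith [hM (n + 1)]
  refine ⟨fun n => (1 / 2) ^ n / (1 + M (n + 1)), fun n => div_pos (by positivity) (hpos n), ?_, ?_⟩
  · refine summable_geometric_two.of_nonneg_of_le
      (fun n => div_nonneg (by positivity) (hpos n).le) fun n => ?_
    exact div_le_self (by positivity) (by linarith [hM (n + 1)])
  · refine summable_geometric_two.of_nonneg_of_le
      (fun n => mul_nonneg (hM _) (div_nonneg (by positivity) (hpos n).le)) fun n => ?_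
    rw [← mul_div_assoc, div_le_iff₀ (hpos n), mul_comm]
    gcongr
    linarith

theorem exists_contDiff_one_fderiv_eq [FiniteDimensional ℝ V] [OpensMeasurableSpace V]
    [CompleteSpace F] (μ : Measure V) {ε : ℝ≥0∞} (hε : ε ≠ 0) {f : V → V →L[ℝ] F}
    (hf : Continuous f) (hfc : HasCompactSupport f) :
    ∃ (A : Set V) (γ : V → F), IsOpen A ∧ A ⊆ tsupport f ∧ ContDiff ℝ 1 γ ∧
      μ A ≤ ε * μ (tsupport f) ∧ ∀ x ∉ A, fderiv ℝ γ x = f x := by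
  obtain ⟨η, hη, hηε⟩ := ENNReal.exists_pos_sum_of_countable' hε ℕ
  choose M hM H using fun n => exists_isApproxPrimitive (F := F) μ (hη n).ne'
  obtain ⟨δ, hδ, hδ_sum, hMδ⟩ := exists_summable_precision hM
  obtain ⟨φ, u, rfl, h⟩ :=
    exists_isResidualSeq hδ (fun n _ hf hfc => H n hf hfc _ (hδ n)) hf hfc
  obtain ⟨C, hC⟩ := hf.bounded_above_of_compact_support hfc
  obtain ⟨v, hv, huv⟩ := h.exists_summable_norm_fderiv_le hM hδ_sum hMδ hC
  refine ⟨⋃ n, exceptionalSet (δ n) (φ n) (u n), fun x => ∑' n, u n x,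
    isOpen_iUnion fun n => isOpen_exceptionalSet (h.continuous n) (h.isApproxPrimitive n).contDiff,
    h.iUnion_exceptionalSet_subset, h.contDiff_tsum hδ_sum hv huv, ?_,
    fun x hx => h.fderiv_tsum hδ_sum hv huv hx⟩
  exact h.measure_iUnion_exceptionalSet_le.trans (by gcongr)

end Iteration

section Alternatization

variable {R M N : Type*} [CommRing R] [AddCommGroup M] [Module R M] [AddCommGroup N] [Module R N]

theorem alternatization_domDomCongr {ι : Type*} [Fintype ι] [DecidableEq ι]
    (f : MultilinearMap R (fun _ : ι => M) N) (σ : Equiv.Perm ι) :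
    MultilinearMap.alternatization (f.domDomCongr σ) =
      Equiv.Perm.sign σ • MultilinearMap.alternatization f := by
  ext v
  rw [MultilinearMap.alternatization_apply, AlternatingMap.smul_apply,
    MultilinearMap.alternatization_apply, Finset.smul_sum]
  refine Fintype.sum_equiv (Equiv.mulRight σ) _ _ fun τ => ?_
  rw [smul_smul, Equiv.coe_mulRight, Equiv.Perm.sign_mul, mul_left_comm, Int.units_mul_self,
    mul_one]
  rfl

theorem coe_alternatizeUncurryFin_eq_sum_domDomCongr {n : ℕ} (f : M →ₗ[R] M [⋀^Fin n]→ₗ[R] N) :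
    (AlternatingMap.alternatizeUncurryFin f : MultilinearMap R (fun _ => M) N) =
      ∑ i : Fin (n + 1), Equiv.Perm.sign i.cycleRange.symm •
        (AlternatingMap.toMultilinearMapLM (S := R) ∘ₗ f).uncurryLeft.domDomCongr
          i.cycleRange.symm := by
  ext v
  have hperm : ∀ i : Fin (n + 1), (fun j => v (i.cycleRange.symm j)) =
      Fin.cons (v i) (i.removeNth v) := fun i =>
    (Fin.cons_removeNth_eq_comp_cycleRange_symm v i).symm
  simp [AlternatingMap.alternatizeUncurryFin_apply, Equiv.Perm.sign_symm, hperm, Units.smul_def]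

theorem alternatization_uncurryLeft [IsAddTorsionFree N] {n : ℕ}
    (f : M →ₗ[R] M [⋀^Fin n]→ₗ[R] N) :
    MultilinearMap.alternatization
        (AlternatingMap.toMultilinearMapLM (S := R) ∘ₗ f).uncurryLeft =
      n.factorial • AlternatingMap.alternatizeUncurryFin f := by
  let g : MultilinearMap R (fun _ : Fin (n + 1) => M) N :=
    (AlternatingMap.toMultilinearMapLM (S := R) ∘ₗ f).uncurryLeft
  have h : (n + 1).factorial • AlternatingMap.alternatizeUncurryFin f =
      (n + 1) • MultilinearMap.alternatization g := calc
    _ = MultilinearMap.alternatization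
          (AlternatingMap.alternatizeUncurryFin f).toMultilinearMap := by
        rw [AlternatingMap.coe_alternatization, Fintype.card_fin]
    _ = ∑ i : Fin (n + 1), Equiv.Perm.sign i.cycleRange.symm •
          MultilinearMap.alternatization (g.domDomCongr i.cycleRange.symm) := by
        simp only [coe_alternatizeUncurryFin_eq_sum_domDomCongr, map_sum, Units.smul_def,
          map_zsmul, g]
    _ = (n + 1) • MultilinearMap.alternatization g := by
        simp only [alternatization_domDomCongr, smul_smul, Int.units_mul_self, one_smul,
          Finset.sum_const, Finset.card_univ, Fintype.card_fin]
  ext v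
  refine nsmul_right_injective n.succ_ne_zero ?_
  rw [Nat.factorial_succ, mul_smul] at h
  exact (congrArg (· v) h).symm

end Alternatization

section Forms

theorem exists_extDeriv_eq {V F : Type*} [NormedAddCommGroup V] [NormedSpace ℝ V]
    [FiniteDimensional ℝ V] [MeasurableSpace V] [OpensMeasurableSpace V] [NormedAddCommGroup F]
    [NormedSpace ℝ F] [CompleteSpace F] {n : ℕ} (μ : Measure V) {ε : ℝ≥0∞} (hε : ε ≠ 0)
    {ω : V → V [⋀^Fin (n + 1)]→L[ℝ] F} (hω : Continuous ω) (hωc : HasCompactSupport ω) :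
    ∃ (A : Set V) (γ : V → V [⋀^Fin n]→L[ℝ] F), IsOpen A ∧ A ⊆ tsupport ω ∧ ContDiff ℝ 1 γ ∧
      μ A ≤ ε * μ (tsupport ω) ∧ ∀ x ∉ A, extDeriv γ x = ω x := by
  let curry : V [⋀^Fin (n + 1)]→L[ℝ] F →L[ℝ] V →L[ℝ] V [⋀^Fin n]→L[ℝ] F :=
    ((n + 1 : ℕ) : ℝ)⁻¹ • ContinuousAlternatingMap.curryLeftLI.toContinuousLinearMap
  have hcurry : ∀ w, ContinuousAlternatingMap.alternatizeUncurryFin (curry w) = w := fun w => by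
    calc ContinuousAlternatingMap.alternatizeUncurryFin (curry w)
        = ((n + 1 : ℕ) : ℝ)⁻¹ • (n + 1) • w := by
          rw [← ContinuousAlternatingMap.alternatizeUncurryFin_curryLeft]
          exact ContinuousAlternatingMap.alternatizeUncurryFin_smul _ _
      _ = w := by
          rw [← Nat.cast_smul_eq_nsmul ℝ, inv_smul_smul₀ (Nat.cast_ne_zero.mpr n.succ_ne_zero)]
  obtain ⟨A, γ, hA, hAω, hγ, hμ, hdγ⟩ := exists_contDiff_one_fderiv_eq μ hε
    (curry.continuous.comp hω) (hωc.comp_left (map_zero curry))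
  have hsupp : tsupport (curry ∘ ω) ⊆ tsupport ω := tsupport_comp_subset (map_zero curry) ω
  refine ⟨A, γ, hA, hAω.trans hsupp, hγ, hμ.trans (by gcongr), fun x hx => ?_⟩
  rw [extDeriv, hdγ x hx, Function.comp_apply, hcurry]

theorem extDerivAt_toContinuousMultilinearMap {m k : ℕ} {γ : E m → E m [⋀^Fin k]→L[ℝ] ℝ} {x : E m}
    (hγ : DifferentiableAt ℝ γ x) :
    extDerivAt (fun y => (γ y).toContinuousMultilinearMap) x =
      (extDeriv γ x).toAlternatingMap := by
  let incl : E m [⋀^Fin k]→L[ℝ] ℝ →L[ℝ] FormSpace m k :=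
    ContinuousAlternatingMap.toContinuousMultilinearMapCLM ℝ
  have hfderiv : fderiv ℝ (fun y => (γ y).toContinuousMultilinearMap) x = incl ∘L fderiv ℝ γ x :=
    (incl.hasFDerivAt.comp x hγ.hasFDerivAt).fderiv
  let f : E m →ₗ[ℝ] E m [⋀^Fin k]→ₗ[ℝ] ℝ :=
    ContinuousAlternatingMap.toAlternatingMapLinear ∘ₗ (fderiv ℝ γ x).toLinearMap
  calc extDerivAt (fun y => (γ y).toContinuousMultilinearMap) x
      = (k.factorial : ℝ)⁻¹ • MultilinearMap.alternatization
          (AlternatingMap.toMultilinearMapLM (S := ℝ) ∘ₗ f).uncurryLeft := by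
        rw [extDerivAt, hfderiv]
        rfl
    _ = AlternatingMap.alternatizeUncurryFin f := by
        rw [alternatization_uncurryLeft, ← Nat.cast_smul_eq_nsmul ℝ,
          inv_smul_smul₀ (Nat.cast_ne_zero.mpr k.factorial_ne_zero)]
    _ = (extDeriv γ x).toAlternatingMap :=
        (ContinuousAlternatingMap.toAlternatingMap_alternatizeUncurryFin _).symm

/-- A form satisfying `IsAlt`, bundled as a continuous alternating map so that Mathlib's `extDeriv`
applies to it. -/
def IsAlt.toContinuousAlternatingMap {m k : ℕ} {f : FormSpace m k} (hf : IsAlt f) :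
    E m [⋀^Fin k]→L[ℝ] ℝ where
  toContinuousMultilinearMap := f
  map_eq_zero_of_eq' := hf

theorem isAlt_toContinuousMultilinearMap {m k : ℕ} (f : E m [⋀^Fin k]→L[ℝ] ℝ) :
    IsAlt f.toContinuousMultilinearMap :=
  f.map_eq_zero_of_eq'

theorem forms_nearly_exact_euclidean_general {m j : ℕ} (μ : Measure (E m))
    {ω : E m → FormSpace m (j + 1)} (hωalt : ∀ x, IsAlt (ω x)) (hω : Continuous ω)
    (hsupp : HasCompactSupport ω) {ε : ℝ≥0∞} (hε : ε ≠ 0) :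
    ∃ (A : Set (E m)) (γ : E m → FormSpace m j), IsOpen A ∧ A ⊆ tsupport ω ∧
      ContDiff ℝ 1 γ ∧ (∀ x, IsAlt (γ x)) ∧ μ A ≤ ε * μ (tsupport ω) ∧
      ∀ x ∉ A, (ω x).toMultilinearMap = (extDerivAt γ x).toMultilinearMap := by
  let ω' : E m → E m [⋀^Fin (j + 1)]→L[ℝ] ℝ := fun x => (hωalt x).toContinuousAlternatingMap
  have hω' : Continuous ω' :=
    ContinuousAlternatingMap.isEmbedding_toContinuousMultilinearMap.continuous_iff.mpr hω
  have hsupport : tsupport ω' = tsupport ω :=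
    (tsupport_comp_eq (ContinuousAlternatingMap.toContinuousMultilinearMap_injective.eq_iff' rfl)
      ω').symm
  have hsupp' : HasCompactSupport ω' := by rwa [HasCompactSupport, hsupport]
  obtain ⟨A, γ, hA, hAω, hγ, hμ, hdγ⟩ := exists_extDeriv_eq μ hε hω' hsupp'
  rw [hsupport] at hAω hμ
  let incl : E m [⋀^Fin j]→L[ℝ] ℝ →L[ℝ] FormSpace m j :=
    ContinuousAlternatingMap.toContinuousMultilinearMapCLM ℝ
  refine ⟨A, fun x => (γ x).toContinuousMultilinearMap, hA, hAω, incl.contDiff.comp hγ,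
    fun x => isAlt_toContinuousMultilinearMap (γ x), hμ, fun x hx => ?_⟩
  rw [extDerivAt_toContinuousMultilinearMap (hγ.differentiable one_ne_zero x), hdγ x hx]
  rfl

end Forms

/-- **Differential forms are nearly exact** (Moonens–Pfeffer; Euclidean case). Let
`m ≥ 2`, `1 ≤ k = j + 1 ≤ m`, let `Ω ⊆ ℝ^m` be open with finite measure, and let `ω` be
a smooth `k`-form on `ℝ^m` compactly supported in `Ω`. For every `ε > 0` there are an
open `A ⊆ Ω` and a `C¹` differential `(k−1)`-form `γ` on `Ω` with
`ℋ^m(A) ≤ ε ℋ^m(Ω)` and `ω = dγ` pointwise on `Ω ∖ A`. -/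
theorem forms_nearly_exact_euclidean (m j : ℕ) (hm : 2 ≤ m) (hk : j + 1 ≤ m)
    (Ω : Set (E m)) (hΩ : IsOpen Ω) (hfin : μH[m] Ω ≠ ⊤)
    (ω : E m → FormSpace m (j + 1)) (hωalt : ∀ x, IsAlt (ω x))
    (hω : ContDiff ℝ (⊤ : ℕ∞) ω) (hsupp : HasCompactSupport ω) (hsub : tsupport ω ⊆ Ω)
    (ε : ℝ) (hε : 0 < ε) :
    ∃ (A : Set (E m)) (γ : E m → FormSpace m j), IsOpen A ∧ A ⊆ Ω ∧
      ContDiffOn ℝ 1 γ Ω ∧ (∀ x ∈ Ω, IsAlt (γ x)) ∧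
      μH[m] A ≤ ENNReal.ofReal ε * μH[m] Ω ∧
      ∀ x ∈ Ω \ A, (ω x).toMultilinearMap = (extDerivAt γ x).toMultilinearMap := by
  obtain ⟨A, γ, hA, hAω, hγ, hγalt, hμ, hdγ⟩ := forms_nearly_exact_euclidean_general μH[m] hωalt
    hω.continuous hsupp (ENNReal.ofReal_pos.mpr hε).ne'
  exact ⟨A, γ, hA, hAω.trans hsub, hγ.contDiffOn, fun x _ => hγalt x, hμ.trans (by gcongr),
    fun x hx => hdγ x hx.2⟩
end
end
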